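/- arXiv:2411.15088 — 3 statements merged into one kernel-verified Lean document; each statement's English description precedes it below -/
import Mathlib

section
/- Let G be a finite simple graph with n vertices, m edges, girth g (so G contains a cycle, and g > 2 is the length of its shortest cycle), and n_g cycles of length g. Writing the chromatic polynomial as P_G(λ) = Σ_{i} c_{n−i} λ^{n−i}, the first g coefficients satisfy: c_{n−i} = (−1)^i · C(m, i) for all 0 ≤ i < g − 1, and c_{n−(g−1)} = (−1)^{g−1} · (C(m, g−1) − n_g), where C(m, i) denotes the binomial coefficient m choose i. -/
open Polynomial

/-- The number of proper colorings of the finite simple graph `G` with `k` colors. -/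
def SimpleGraph.numColorings {V : Type*} [Fintype V] [DecidableEq V]
    (G : SimpleGraph V) [DecidableRel G.Adj] (k : ℕ) : ℕ :=
  Fintype.card {f : V → Fin k // ∀ a b, G.Adj a b → f a ≠ f b}

/-- The number of cycles of length `g` in `G`, i.e. the number of cycle subgraphs of `G`
with `g` vertices (a cycle graph being a connected graph in which every vertex has
exactly two neighbors). -/
noncomputable def SimpleGraph.cycleCount {V : Type*} (G : SimpleGraph V) (g : ℕ) : ℕ :=
  Nat.card {H : G.Subgraph //
    Nat.card H.verts = g ∧ H.coe.Connected ∧ ∀ v, Nat.card (H.coe.neighborSet v) = 2}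


namespace GirthCoeff

open SimpleGraph

variable {V : Type*}

/-- The number of connected components of the spanning graph with edge set `A`. -/
noncomputable def cc (A : Finset (Sym2 V)) : ℕ :=
  Nat.card (fromEdgeSet (A : Set (Sym2 V))).ConnectedComponent

lemma reach_const {β : Type*} {H : SimpleGraph V} (f : V → β)
    (h : ∀ a b, H.Adj a b → f a = f b) {a b : V} (hab : H.Reachable a b) : f a = f b := by
  obtain ⟨p⟩ := hab
  induction p with
  | nil => rfl
  | cons hadj _ ih => exact (h _ _ hadj).trans ih

/-- Functions constant on the edges of `H` are functions on components. -/
def constEquiv (H : SimpleGraph V) (β : Type*) :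
    {f : V → β // ∀ a b, H.Adj a b → f a = f b} ≃ (H.ConnectedComponent → β) where
  toFun f := fun c => c.lift f.1 (fun v w p _ => reach_const f.1 f.2 p.reachable)
  invFun h := ⟨fun v => h (H.connectedComponentMk v), fun a b hab => by
    exact congrArg h (ConnectedComponent.sound hab.reachable)⟩
  left_inv f := by ext v; rfl
  right_inv h := by
    ext c
    induction c using ConnectedComponent.ind with
    | h v => rfl

lemma card_const [Fintype V] [DecidableEq V] (A : Finset (Sym2 V)) (k : ℕ) :
    (Finset.univ.filter (fun f : V → Fin k => ∀ e ∈ A, (e.map f).IsDiag)).card = k ^ cc A := by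
  classical
  have h : Nat.card {f : V → Fin k // ∀ a b, (fromEdgeSet (A : Set (Sym2 V))).Adj a b → f a = f b}
      = k ^ cc A := by
    rw [Nat.card_congr (constEquiv _ _), Nat.card_fun, Nat.card_fin, cc]
  rw [← h, Nat.card_eq_fintype_card, Fintype.card_subtype]
  congr 1
  ext f
  simp only [Finset.mem_filter, Finset.mem_univ, true_and, fromEdgeSet_adj, Finset.mem_coe]
  constructor
  · intro hf a b hab
    simpa using hf _ hab.1
  · intro hf e
    induction e using Sym2.ind with
    | _ a b =>
      intro he
      by_cases hab : a = b
      · simp [hab]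
      · simpa using hf a b ⟨he, hab⟩

lemma whitney [Fintype V] [DecidableEq V] (G : SimpleGraph V) [DecidableRel G.Adj] (k : ℕ) :
    (G.numColorings k : ℤ) = ∑ A ∈ G.edgeFinset.powerset, (-1) ^ A.card * (k : ℤ) ^ cc A := by
  classical
  have h1 : (G.numColorings k : ℤ) = ∑ f : V → Fin k,
      ∏ e ∈ G.edgeFinset, ((if (e.map f).IsDiag then (-1 : ℤ) else 0) + 1) := by
    rw [SimpleGraph.numColorings, Fintype.card_subtype, Finset.card_filter]
    push_cast
    refine Finset.sum_congr rfl fun f _ => ?_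
    split_ifs with hf
    · symm
      refine Finset.prod_eq_one fun e => ?_
      induction e using Sym2.ind with
      | _ a b =>
        intro he
        have := hf a b (by simpa using he)
        simp [this]
    · symm
      push Not at hf
      obtain ⟨a, b, hab, hf⟩ := hf
      refine Finset.prod_eq_zero (i := s(a, b)) (by simpa using hab) (by simp [hf])
  rw [h1]
  simp_rw [Finset.prod_add_one]
  rw [Finset.sum_comm]
  refine Finset.sum_congr rfl fun A _ => ?_
  have : ∀ f : V → Fin k, ∏ e ∈ A, (if (e.map f).IsDiag then (-1 : ℤ) else 0)
      = (-1) ^ A.card * if ∀ e ∈ A, (e.map f).IsDiag then 1 else 0 := by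
    intro f
    split_ifs with hf
    · rw [Finset.prod_congr rfl (fun e he => if_pos (hf e he))]
      simp
    · push Not at hf
      obtain ⟨e, he, hf⟩ := hf
      rw [Finset.prod_eq_zero he (if_neg hf)]
      simp
  simp_rw [this]
  rw [← Finset.mul_sum, Finset.sum_boole, card_const]
  push_cast
  rfl

lemma coeff_eq [Fintype V] [DecidableEq V] (G : SimpleGraph V) [DecidableRel G.Adj]
    (P : Polynomial ℤ) (hP : ∀ k : ℕ, P.eval (k : ℤ) = G.numColorings k) (j : ℕ) :
    P.coeff j = ∑ A ∈ G.edgeFinset.powerset with cc A = j, (-1 : ℤ) ^ A.card := by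
  have : P = ∑ A ∈ G.edgeFinset.powerset, C ((-1 : ℤ) ^ A.card) * X ^ cc A := by
    refine Polynomial.eq_of_infinite_eval_eq _ _ ?_
    refine (Set.infinite_range_of_injective (Nat.cast_injective (R := ℤ))).mono ?_
    rintro _ ⟨k, rfl⟩
    simp only [Set.mem_ofPred_eq]
    rw [hP, whitney, Polynomial.eval_finsetSum]
    simp
  rw [this, Polynomial.finsetSum_coeff, Finset.sum_filter]
  refine Finset.sum_congr rfl fun A _ => ?_
  rw [Polynomial.coeff_C_mul_X_pow]
  simp [eq_comm]

lemma cc_anti [Finite V] {A B : Finset (Sym2 V)} (h : A ⊆ B) : cc B ≤ cc A :=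
  ConnectedComponent.card_le_card_of_le (fromEdgeSet_mono (by simpa using h))

lemma cc_insert [Finite V] [DecidableEq V] {A : Finset (Sym2 V)} {u v : V}
    (h : ¬ (fromEdgeSet (A : Set (Sym2 V))).Reachable u v) :
    cc (insert s(u, v) A) + 1 = cc A := by
  classical
  set H := fromEdgeSet (A : Set (Sym2 V)) with hH
  set H' := fromEdgeSet ((insert s(u, v) A : Finset _) : Set (Sym2 V)) with hH'
  have hle : H ≤ H' := fromEdgeSet_mono (by simp)
  have huv : H'.Adj u v := by
    simp only [hH', fromEdgeSet_adj]
    refine ⟨by simp, ?_⟩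
    rintro rfl
    exact h (Reachable.refl _)
  have hne : H.connectedComponentMk u ≠ H.connectedComponentMk v := by
    rwa [Ne, ConnectedComponent.eq]
  let f : V → H.ConnectedComponent := fun x =>
    if H.connectedComponentMk x = H.connectedComponentMk v then H.connectedComponentMk u
    else H.connectedComponentMk x
  have hf : ∀ a b, H'.Adj a b → f a = f b := by
    intro a b hab
    simp only [hH', fromEdgeSet_adj, Finset.coe_insert, Set.mem_insert_iff, Finset.mem_coe] at hab
    obtain ⟨hab | hab, hn⟩ := hab
    · simp only [Sym2.eq_iff] at hab
      obtain ⟨rfl, rfl⟩ | ⟨rfl, rfl⟩ := hab <;> simp [f]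
    · have : H.connectedComponentMk a = H.connectedComponentMk b :=
        ConnectedComponent.sound (Adj.reachable (by simp [hH, hab, hn]))
      simp only [f, this]
  let φ : {c : H.ConnectedComponent // c ≠ H.connectedComponentMk v} → H'.ConnectedComponent :=
    fun c => c.1.map (.ofLE hle)
  have hφ : Function.Bijective φ := by
    constructor
    · rintro ⟨c, hc⟩ ⟨d, hd⟩ hcd
      induction c using ConnectedComponent.ind with
      | h x =>
      induction d using ConnectedComponent.ind with
      | h y =>
      simp only [φ, ConnectedComponent.map_mk, ConnectedComponent.eq] at hcd
      have := reach_const f hf hcd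
      simp only [f, Hom.coe_ofLE, id_eq] at this
      rw [if_neg hc, if_neg hd] at this
      exact Subtype.ext this
    · intro c
      induction c using ConnectedComponent.ind with
      | h x =>
      by_cases hx : H.connectedComponentMk x = H.connectedComponentMk v
      · refine ⟨⟨H.connectedComponentMk u, hne⟩, ?_⟩
        simp only [φ, ConnectedComponent.map_mk, ConnectedComponent.eq]
        exact huv.reachable.trans ((ConnectedComponent.exact hx).mono hle).symm
      · exact ⟨⟨_, hx⟩, rfl⟩
  have := Nat.card_congr (Equiv.ofBijective φ hφ)
  have : Fintype V := Fintype.ofFinite V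
  have : Fintype H.ConnectedComponent := Fintype.ofFinite _
  rw [cc, cc, ← hH, ← hH', ← Nat.card_congr (Equiv.ofBijective φ hφ)]
  rw [Nat.card_eq_fintype_card, Nat.card_eq_fintype_card, Fintype.card_subtype_compl,
    Fintype.card_subtype_eq]
  have : 0 < Fintype.card H.ConnectedComponent := Fintype.card_pos_iff.2 ⟨H.connectedComponentMk v⟩
  omega

lemma cc_insert_of_reachable [Finite V] [DecidableEq V] {A : Finset (Sym2 V)} {u v : V}
    (h : (fromEdgeSet (A : Set (Sym2 V))).Reachable u v) :
    cc (insert s(u, v) A) = cc A := by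
  refine le_antisymm (cc_anti (Finset.subset_insert _ _)) ?_
  set H := fromEdgeSet (A : Set (Sym2 V)) with hH
  set H' := fromEdgeSet ((insert s(u, v) A : Finset _) : Set (Sym2 V)) with hH'
  have hle : H ≤ H' := fromEdgeSet_mono (by simp)
  refine Nat.card_le_card_of_injective
    (fun c : H.ConnectedComponent => (c.map (.ofLE hle) : H'.ConnectedComponent)) ?_
  intro c d hcd
  induction c using ConnectedComponent.ind with
  | h x =>
  induction d using ConnectedComponent.ind with
  | h y =>
  have hcd' : H'.Reachable x y := ConnectedComponent.exact hcd
  refine reach_const H.connectedComponentMk ?_ hcd'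
  intro a b hab
  simp only [hH', fromEdgeSet_adj, Finset.coe_insert, Set.mem_insert_iff, Finset.mem_coe] at hab
  rw [ConnectedComponent.eq]
  obtain ⟨hab | hab, hn⟩ := hab
  · simp only [Sym2.eq_iff] at hab
    obtain ⟨rfl, rfl⟩ | ⟨rfl, rfl⟩ := hab
    · exact h
    · exact h.symm
  · exact Adj.reachable (by simp [hH, hab, hn])

lemma cc_acyclic [Fintype V] [DecidableEq V] (A : Finset (Sym2 V)) (hd : ∀ e ∈ A, ¬ e.IsDiag)
    (hA : (fromEdgeSet (A : Set (Sym2 V))).IsAcyclic) : cc A + A.card = Fintype.card V := by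
  induction A using Finset.induction_on with
  | empty =>
    rw [cc, Finset.card_empty, add_zero, ← Nat.card_eq_fintype_card]
    symm
    refine Nat.card_congr (Equiv.ofBijective (connectedComponentMk _) ⟨?_, ?_⟩)
    · intro a b hab
      rw [ConnectedComponent.eq] at hab
      exact reach_const id (by simp) hab
    · intro c
      exact c.exists_rep
  | insert e A he ih =>
    induction e using Sym2.ind with
    | _ u v =>
    have hac : (fromEdgeSet (A : Set (Sym2 V))).IsAcyclic :=
      hA.anti (fromEdgeSet_mono (by simp))
    have := ih (fun e he => hd e (by simp [he])) hac
    have huv : u ≠ v := by simpa using hd s(u, v) (by simp)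
    have hnr : ¬ (fromEdgeSet (A : Set (Sym2 V))).Reachable u v := by
      intro hr
      have hb := isAcyclic_iff_forall_isBridge.1 hA (e := s(u, v)) (by simp [huv])
      rw [isBridge_iff] at hb
      refine hb (hr.mono ?_)
      intro a b hab
      simp only [fromEdgeSet_adj, Finset.mem_coe] at hab
      simp only [deleteEdges_adj, fromEdgeSet_adj, Finset.coe_insert, Set.mem_insert_iff,
        Finset.mem_coe, Set.mem_singleton_iff]
      refine ⟨⟨Or.inr hab.1, hab.2⟩, ?_⟩
      intro h
      exact he (h ▸ hab.1)
    rw [Finset.card_insert_of_notMem he, ← this, ← cc_insert hnr]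
    ring

section Cycles

set_option linter.unusedSectionVars false

variable [Fintype V] [DecidableEq V] {G : SimpleGraph V} [DecidableRel G.Adj]

lemma exists_cycle {A : Finset (Sym2 V)} (hA : A ⊆ G.edgeFinset)
    (h : ¬ (fromEdgeSet (A : Set (Sym2 V))).IsAcyclic) :
    ∃ (v : V) (w : G.Walk v v), w.IsCycle ∧ w.edges.toFinset ⊆ A := by
  have hle : fromEdgeSet (A : Set (Sym2 V)) ≤ G := by
    intro a b hab
    simp only [fromEdgeSet_adj, Finset.mem_coe] at hab
    simpa using hA hab.1
  simp only [IsAcyclic, not_forall, not_not] at h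
  obtain ⟨v, w, hw⟩ := h
  refine ⟨v, w.mapLe hle, hw.mapLe hle, ?_⟩
  intro e he
  simp only [List.mem_toFinset, Walk.edges_mapLe_eq_edges] at he
  have := w.edges_subset_edgeSet he
  simp only [edgeSet_fromEdgeSet] at this
  exact this.1

lemma card_edges_cycle {v : V} {w : G.Walk v v} (hw : w.IsCycle) :
    w.edges.toFinset.card = w.length := by
  rw [List.toFinset_card_of_nodup hw.edges_nodup, Walk.length_edges]

lemma girth_le_card {A : Finset (Sym2 V)} (hA : A ⊆ G.edgeFinset)
    (h : ¬ (fromEdgeSet (A : Set (Sym2 V))).IsAcyclic) : G.girth ≤ A.card := by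
  obtain ⟨v, w, hw, hs⟩ := exists_cycle hA h
  have := girth_le_length hw
  rw [← card_edges_cycle hw] at this
  exact this.trans (Finset.card_le_card hs)

lemma exists_cycle_eq {A : Finset (Sym2 V)} (hA : A ⊆ G.edgeFinset)
    (h : ¬ (fromEdgeSet (A : Set (Sym2 V))).IsAcyclic) (hc : A.card = G.girth) :
    ∃ (v : V) (w : G.Walk v v), w.IsCycle ∧ w.edges.toFinset = A := by
  obtain ⟨v, w, hw, hs⟩ := exists_cycle hA h
  refine ⟨v, w, hw, Finset.eq_of_subset_of_card_le hs ?_⟩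
  rw [card_edges_cycle hw, hc]
  exact girth_le_length hw

lemma even_deg {A : Finset (Sym2 V)} (hA : A ⊆ G.edgeFinset)
    (h : ¬ (fromEdgeSet (A : Set (Sym2 V))).IsAcyclic) (hc : A.card = G.girth) (u : V) :
    Even (A.filter (fun e => u ∈ e)).card := by
  obtain ⟨v, w, hw, rfl⟩ := exists_cycle_eq hA h hc
  have := (hw.isTrail.even_countP_edges_iff u).2 (by simp)
  rw [List.countP_eq_length_filter, ← List.toFinset_card_of_nodup (hw.edges_nodup.filter _),
    List.toFinset_filter] at this
  simpa using this

lemma card_verts_cycle {v : V} {w : G.Walk v v} (hw : w.IsCycle) :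
    Nat.card w.toSubgraph.verts = w.length := by
  have h1 : w.toSubgraph.verts = (w.support.tail.toFinset : Set V) := by
    ext x
    simp only [Walk.mem_verts_toSubgraph, List.coe_toFinset, Set.mem_ofPred_eq]
    constructor
    · intro hx
      rw [Walk.mem_support_iff] at hx
      rcases hx with rfl | hx
      · exact Walk.end_mem_tail_support hw.not_nil
      · exact hx
    · exact List.mem_of_mem_tail
  rw [h1, Nat.card_coe_set_eq, Set.ncard_coe_finset, List.toFinset_card_of_nodup hw.support_nodup]
  simp

lemma card_edges_sub {g : ℕ} {H : G.Subgraph} (hv : Nat.card H.verts = g)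
    (hd : ∀ v, Nat.card (H.coe.neighborSet v) = 2) : Nat.card H.coe.edgeSet = g := by
  classical
  have h := H.coe.sum_degrees_eq_twice_card_edges
  have hd' : ∀ (v) (_ : Fintype (H.coe.neighborSet v)), H.coe.degree v = 2 := by
    intro v _
    rw [← card_neighborSet_eq_degree, ← Nat.card_eq_fintype_card, hd]
  simp only [hd', Finset.sum_const, Finset.card_univ, smul_eq_mul] at h
  rw [← Nat.card_eq_fintype_card, hv] at h
  rw [Nat.card_eq_fintype_card, ← edgeFinset_card]
  omega

lemma cycleCount_eq {g : ℕ} (hg : G.girth = g) : G.cycleCount g =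
    Nat.card {A : Finset (Sym2 V) // A ⊆ G.edgeFinset ∧ A.card = g ∧
      ¬ (fromEdgeSet (A : Set (Sym2 V))).IsAcyclic} := by
  classical
  rw [SimpleGraph.cycleCount]
  refine Nat.card_congr (Equiv.ofBijective (fun H => ⟨H.1.edgeSet.toFinset, ?_, ?_, ?_⟩) ⟨?_, ?_⟩)
  · intro e he
    simp only [Set.mem_toFinset] at he
    simpa using H.1.edgeSet_subset he
  · obtain ⟨H, hv, hc, hd⟩ := H
    rw [Set.toFinset_card, ← Nat.card_eq_fintype_card]
    refine Eq.trans ?_ (card_edges_sub hv hd)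
    rw [← H.image_coe_edgeSet_coe]
    exact Nat.card_image_of_injective (Sym2.map.injective Subtype.val_injective) _
  · obtain ⟨H, hv, hc, hd⟩ := H
    intro hac
    have : H.coe.IsAcyclic := by
      refine hac.comap (⟨fun x => x.1, ?_⟩ : H.coe →g _) Subtype.val_injective
      intro a b hab
      have hab' : H.Adj a b := hab
      simp only [Set.coe_toFinset, fromEdgeSet_adj, Subgraph.mem_edgeSet]
      exact ⟨hab', hab'.ne⟩
    have ht := (isTree_iff_connected_and_card.1 ⟨hc, this⟩).2
    rw [card_edges_sub hv hd, hv] at ht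
    omega
  · rintro ⟨H, hv, hc, hd⟩ ⟨H', hv', hc', hd'⟩ h
    have h1 : H.edgeSet = H'.edgeSet := by
      simpa using h
    have hadj : ∀ a b, H.Adj a b ↔ H'.Adj a b := by
      intro a b
      rw [← Subgraph.mem_edgeSet, h1, Subgraph.mem_edgeSet]
    have hx : ∀ (K : G.Subgraph), (∀ v, Nat.card (K.coe.neighborSet v) = 2) →
        ∀ a, a ∈ K.verts ↔ ∃ b, K.Adj a b := by
      intro K hK a
      constructor
      · intro ha
        have : Nonempty (K.coe.neighborSet ⟨a, ha⟩) := by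
          by_contra hn
          rw [not_nonempty_iff] at hn
          have := hK ⟨a, ha⟩
          simp at this
        obtain ⟨b, hb⟩ := this
        exact ⟨b, hb⟩
      · rintro ⟨b, hb⟩
        exact K.edge_vert hb
    have : H = H' := by
      apply Subgraph.ext
      · ext a
        rw [hx H hd, hx H' hd']
        simp [hadj]
      · ext a b
        exact hadj a b
    subst this
    rfl
  · rintro ⟨A, hA, hc, hac⟩
    obtain ⟨v, w, hw, rfl⟩ := exists_cycle_eq hA hac (hc.trans hg.symm)
    refine ⟨⟨w.toSubgraph, ?_, w.toSubgraph_connected.coe, ?_⟩, ?_⟩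
    · rw [card_verts_cycle hw, ← card_edges_cycle hw, hc]
    · intro x
      rw [Nat.card_congr (Subgraph.coeNeighborSetEquiv x), Nat.card_coe_set_eq]
      exact hw.ncard_neighborSet_toSubgraph_eq_two (by simpa using x.2)
    · apply Subtype.ext
      ext e
      simp

lemma cc_lt {g : ℕ} (hg : G.girth = g) {A : Finset (Sym2 V)} (hA : A ⊆ G.edgeFinset)
    (h : A.card < g) : cc A + A.card = Fintype.card V := by
  refine cc_acyclic A ?_ ?_
  · intro e he
    exact G.not_isDiag_of_mem_edgeSet (by simpa using hA he)
  · by_contra hn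
    have := girth_le_card hA hn
    omega

lemma cc_ge {g : ℕ} (hg : G.girth = g) (hg2 : 2 < g) {A : Finset (Sym2 V)}
    (hA : A ⊆ G.edgeFinset) (h : g - 1 ≤ A.card) : cc A + (g - 1) ≤ Fintype.card V := by
  obtain ⟨B, hB, hc⟩ := Finset.exists_subset_card_eq h
  have := cc_lt hg (hB.trans hA) (by omega)
  have := cc_anti hB
  omega

lemma cc_eq {g : ℕ} (hg : G.girth = g) (hg2 : 2 < g) {A : Finset (Sym2 V)}
    (hA : A ⊆ G.edgeFinset) (h : A.card = g) : cc A + (g - 1) = Fintype.card V ↔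
      ¬ (fromEdgeSet (A : Set (Sym2 V))).IsAcyclic := by
  constructor
  · intro h1 h2
    have := cc_acyclic A
      (fun e he => G.not_isDiag_of_mem_edgeSet (by simpa using hA he)) h2
    omega
  · intro hn
    rw [isAcyclic_iff_forall_isBridge] at hn
    push Not at hn
    obtain ⟨e, he, hb⟩ := hn
    simp only [edgeSet_fromEdgeSet] at he
    have heA : e ∈ A := he.1
    have hB : A.erase e ⊆ G.edgeFinset := (Finset.erase_subset _ _).trans hA
    have hcB : (A.erase e).card = g - 1 := by rw [Finset.card_erase_of_mem heA, h]
    have h1 := cc_lt hg hB (by omega)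
    induction e using Sym2.ind with
    | _ u v =>
    rw [isBridge_iff, not_not] at hb
    have hr : (fromEdgeSet (A.erase s(u, v) : Set (Sym2 V))).Reachable u v := by
      refine hb.mono ?_
      intro a b hab
      simp only [deleteEdges_adj, fromEdgeSet_adj, Finset.mem_coe, Set.mem_singleton_iff] at hab
      simp only [fromEdgeSet_adj, Finset.mem_coe, Finset.mem_erase]
      exact ⟨⟨hab.2, hab.1.1⟩, hab.1.2⟩
    have h2 := cc_insert_of_reachable hr
    rw [Finset.insert_erase heA] at h2
    omega

lemma cc_gt {g : ℕ} (hg : G.girth = g) (hg2 : 2 < g) {A : Finset (Sym2 V)}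
    (hA : A ⊆ G.edgeFinset) (h : g + 1 ≤ A.card) : cc A + (g - 1) ≠ Fintype.card V := by
  intro heq
  obtain ⟨B, hB, hc⟩ := Finset.exists_subset_card_eq h
  have hBE := hB.trans hA
  have key : ∀ e ∈ B, ∀ u, Even ((B.erase e).filter (fun x => u ∈ x)).card := by
    intro e he u
    have hs : B.erase e ⊆ A := (Finset.erase_subset _ _).trans hB
    have hce : (B.erase e).card = g := by rw [Finset.card_erase_of_mem he, hc]; rfl
    refine even_deg (hs.trans hA) ?_ (hce.trans hg.symm) u
    refine (cc_eq hg hg2 (hs.trans hA) hce).1 ?_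
    have := cc_anti hs
    have := cc_ge hg hg2 (hs.trans hA) (by omega)
    omega
  obtain ⟨e, he, f, hf, hef⟩ := Finset.one_lt_card.1 (show 1 < B.card by omega)
  have : ∃ u, u ∈ e ∧ u ∉ f := by
    by_contra! hn
    have hd : ¬ e.IsDiag := G.not_isDiag_of_mem_edgeSet (by simpa using hBE he)
    induction e using Sym2.ind with
    | _ a b =>
    have hab : a ≠ b := by simpa using hd
    exact hef ((Sym2.mem_and_mem_iff hab).1 ⟨hn a (by simp), hn b (by simp)⟩).symm
  obtain ⟨u, hue, huf⟩ := this
  have h1 := key e he u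
  have h2 := key f hf u
  rw [Finset.filter_erase, Finset.card_erase_of_mem (by simp [he, hue])] at h1
  rw [Finset.filter_erase, Finset.erase_eq_of_notMem (by simp [huf])] at h2
  have hp : 0 < (B.filter (fun x => u ∈ x)).card :=
    Finset.card_pos.2 ⟨e, by simp [he, hue]⟩
  obtain ⟨a, ha⟩ := h1
  obtain ⟨b, hb⟩ := h2
  omega

end Cycles

end GirthCoeff

/-- If `G` is a graph with `m` edges, girth `g > 2`, and `n_g` cycles of length `g`, then
the first `g` coefficients of the chromatic polynomial are
`c_{n−i} = (−1)^i C(m, i)` for `0 ≤ i < g − 1` and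
`c_{n−(g−1)} = (−1)^{g−1} (C(m, g−1) − n_g)`. -/
theorem chromaticPolynomial_first_girth_coeffs {V : Type*} [Fintype V] [DecidableEq V]
    (G : SimpleGraph V) [DecidableRel G.Adj] (P : Polynomial ℤ)
    (hP : ∀ k : ℕ, P.eval (k : ℤ) = G.numColorings k)
    (hcyc : ¬ G.IsAcyclic) {g : ℕ} (hg : G.girth = g) (hg2 : 2 < g) :
    (∀ i < g - 1,
        P.coeff (Fintype.card V - i) = (-1) ^ i * (G.edgeFinset.card.choose i : ℤ)) ∧
      P.coeff (Fintype.card V - (g - 1)) =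
        (-1) ^ (g - 1) *
          ((G.edgeFinset.card.choose (g - 1) : ℤ) - (G.cycleCount g : ℤ)) := by
  classical
  have hle : g - 1 ≤ Fintype.card V := by
    have hE : g - 1 ≤ G.edgeFinset.card := by
      have h := GirthCoeff.girth_le_card (G := G) (A := G.edgeFinset) (subset_refl _) (by
        rwa [SimpleGraph.coe_edgeFinset, SimpleGraph.fromEdgeSet_edgeSet])
      omega
    have := GirthCoeff.cc_ge hg hg2 (subset_refl _) hE
    omega
  constructor
  · intro i hi
    rw [GirthCoeff.coeff_eq G P hP]
    have : (G.edgeFinset.powerset.filter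
        (fun A => GirthCoeff.cc A = Fintype.card V - i)) = G.edgeFinset.powersetCard i := by
      ext A
      simp only [Finset.mem_filter, Finset.mem_powerset, Finset.mem_powersetCard]
      refine and_congr_right fun hA => ?_
      rcases lt_or_ge A.card (g - 1) with h | h
      · have := GirthCoeff.cc_lt hg hA (by omega)
        omega
      · have := GirthCoeff.cc_ge hg hg2 hA h
        omega
    rw [this, Finset.sum_congr rfl
      (fun A hA => by rw [(Finset.mem_powersetCard.1 hA).2])]
    rw [Finset.sum_const, Finset.card_powersetCard, nsmul_eq_mul, mul_comm]
  · rw [GirthCoeff.coeff_eq G P hP]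
    have : (G.edgeFinset.powerset.filter
        (fun A => GirthCoeff.cc A = Fintype.card V - (g - 1))) =
        G.edgeFinset.powersetCard (g - 1) ∪ (G.edgeFinset.powersetCard g).filter
          (fun A => ¬ (SimpleGraph.fromEdgeSet (A : Set (Sym2 V))).IsAcyclic) := by
      ext A
      simp only [Finset.mem_filter, Finset.mem_powerset, Finset.mem_union,
        Finset.mem_powersetCard, and_assoc, ← and_or_left]
      refine and_congr_right fun hA => ?_
      rcases lt_trichotomy A.card g with h | h | h
      · have := GirthCoeff.cc_lt hg hA h
        omega
      · rw [← GirthCoeff.cc_eq hg hg2 hA h]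
        omega
      · have := GirthCoeff.cc_gt hg hg2 hA h
        omega
    rw [this, Finset.sum_union, Finset.sum_congr rfl
      (fun A hA => by rw [(Finset.mem_powersetCard.1 hA).2]), Finset.sum_congr (s₁ := Finset.filter _ _) rfl
      (fun A hA => by rw [(Finset.mem_powersetCard.1 (Finset.mem_filter.1 hA).1).2])]
    · rw [Finset.sum_const, Finset.sum_const, Finset.card_powersetCard, nsmul_eq_mul,
        nsmul_eq_mul, GirthCoeff.cycleCount_eq hg, Nat.card_eq_fintype_card,
        Fintype.card_of_subtype (p := fun A => A ⊆ G.edgeFinset ∧ A.card = g ∧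
          ¬ (SimpleGraph.fromEdgeSet (A : Set (Sym2 V))).IsAcyclic) ((G.edgeFinset.powersetCard g).filter
          (fun A => ¬ (SimpleGraph.fromEdgeSet (A : Set (Sym2 V))).IsAcyclic))]
      · obtain ⟨k, rfl⟩ : ∃ k, g = k + 1 := ⟨g - 1, by omega⟩
        rw [Nat.add_sub_cancel, pow_succ]
        ring
      · intro A
        simp [and_assoc]
    · rw [Finset.disjoint_left]
      intro A hA hB
      simp only [Finset.mem_filter, Finset.mem_powersetCard] at hA hB
      omega
end

section
/- Let G be a finite connected simple graph with n ≥ 4 vertices and m edges, and write P_G(λ) = Σ_{i=0}^{n} c_{n−i} λ^{n−i}. Let t₁ be the number of triangles in G (3-element vertex subsets that are pairwise adjacent), t₂ the number of induced 4-cycles in G (4-element vertex subsets whose induced subgraph is a 4-cycle), and t₃ the number of complete subgraphs on 4 vertices (4-element vertex subsets that are pairwise adjacent). Then c_n = 1, c_{n−1} = −m, c_{n−2} = C(m, 2) − t₁, and c_{n−3} = −C(m, 3) + (m − 2)t₁ + t₂ − 2t₃, where C(m, i) denotes the binomial coefficient m choose i. -/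
open Polynomial

/-- The number of induced `4`-cycles of `G`: `4`-element vertex subsets whose induced
subgraph is a cycle graph (connected with every vertex having exactly two neighbors). -/
noncomputable def SimpleGraph.inducedFourCycleCount {V : Type*} [Fintype V]
    (G : SimpleGraph V) : ℕ :=
  Nat.card {s : Finset V // s.card = 4 ∧ (G.induce (s : Set V)).Connected ∧
    ∀ v, Nat.card ((G.induce (s : Set V)).neighborSet v) = 2}

namespace CP
open Finset

lemma sum_pc_insert {V : Type*} [DecidableEq V] (f : Finset V → ℤ) (k : ℕ) (a : V)
    (S : Finset V) (ha : a ∉ S) :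
    ∑ s ∈ powersetCard (k+1) (insert a S), f s =
      ∑ s ∈ powersetCard (k+1) S, f s + ∑ s ∈ powersetCard k S, f (insert a s) := by
  rw [powersetCard_succ_insert ha, sum_union, sum_image]
  · intro s hs t ht h
    have h1 : a ∉ s := fun h => ha ((mem_powersetCard.1 hs).1 h)
    have h2 : a ∉ t := fun h => ha ((mem_powersetCard.1 ht).1 h)
    rw [← erase_insert h1, ← erase_insert h2, h]
  · rw [disjoint_left]
    intro s hs ht
    obtain ⟨t, _, rfl⟩ := mem_image.1 ht
    exact ha ((mem_powersetCard.1 hs).1 (mem_insert_self _ _))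

/-- deletion -/
def del {V : Type*} (G : SimpleGraph V) (u v : V) : SimpleGraph V where
  Adj x y := G.Adj x y ∧ ¬ (x = u ∧ y = v) ∧ ¬ (x = v ∧ y = u)
  symm := ⟨fun x y h => ⟨h.1.symm, fun k => h.2.2 ⟨k.2, k.1⟩, fun k => h.2.1 ⟨k.2, k.1⟩⟩⟩
  loopless := ⟨fun x h => G.loopless.irrefl x h.1⟩

/-- contraction of `uv` to `u`, with `v` kept as an isolated vertex -/
def con {V : Type*} (G : SimpleGraph V) (u v : V) : SimpleGraph V where
  Adj x y := x ≠ y ∧ x ≠ v ∧ y ≠ v ∧ (G.Adj x y ∨ (x = u ∧ G.Adj v y) ∨ (y = u ∧ G.Adj v x))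
  symm := ⟨fun x y h => ⟨h.1.symm, h.2.2.1, h.2.1, by
    rcases h.2.2.2 with h | h | h
    · exact Or.inl h.symm
    · exact Or.inr (Or.inr h)
    · exact Or.inr (Or.inl h)⟩⟩
  loopless := ⟨fun x h => h.1 rfl⟩

/-- number of colorings -/
noncomputable def N {V : Type*} (G : SimpleGraph V) (k : ℕ) : ℕ :=
  Nat.card {f : V → Fin k // ∀ a b, G.Adj a b → f a ≠ f b}

lemma N_del {V : Type*} [Fintype V] [DecidableEq V] (G : SimpleGraph V) (u v : V)
    (h : G.Adj u v) (k : ℕ) :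
    N (del G u v) k = N G k +
      Nat.card {f : V → Fin k // (∀ a b, (del G u v).Adj a b → f a ≠ f b) ∧ f u = f v} := by
  classical
  unfold N
  simp only [Nat.card_eq_fintype_card, Fintype.card_subtype]
  rw [← card_filter_add_card_filter_not (s := univ.filter
    (fun f : V → Fin k => ∀ a b, (del G u v).Adj a b → f a ≠ f b)) (fun f => f u ≠ f v)]
  rw [filter_filter, filter_filter]
  congr 2
  · ext f
    simp only [mem_filter, mem_univ, true_and]
    simp only [del]
    constructor
    · rintro ⟨h1, h2⟩ a b hab
      by_cases h3 : a = u ∧ b = v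
      · rw [h3.1, h3.2]; exact h2
      by_cases h4 : a = v ∧ b = u
      · rw [h4.1, h4.2]; exact h2.symm
      exact h1 a b ⟨hab, h3, h4⟩
    · intro h1
      exact ⟨fun a b hab => h1 a b hab.1, h1 u v h⟩
  · ext f
    simp

lemma N_con {V : Type*} [Fintype V] [DecidableEq V] (G : SimpleGraph V) (u v : V)
    (h : G.Adj u v) (k : ℕ) :
    N (con G u v) k = k *
      Nat.card {f : V → Fin k // (∀ a b, (del G u v).Adj a b → f a ≠ f b) ∧ f u = f v} := by
  have huv : u ≠ v := h.ne
  have hk (a : ℕ) : k * a = Nat.card (Fin k) * a := by simp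
  rw [hk, ← Nat.card_prod]
  unfold N
  refine Nat.card_congr ⟨fun f => (f.1 v, ⟨Function.update f.1 v (f.1 u), ?_, ?_⟩),
    fun p => ⟨Function.update p.2.1 v p.1, ?_⟩, ?_, ?_⟩
  · rintro a b ⟨hab, h1, h2⟩
    have hne := hab.ne
    by_cases ha : a = v
    · subst ha
      have hb : b ≠ a := hne.symm
      have hbu : b ≠ u := fun h => h2 ⟨rfl, h⟩
      rw [Function.update_self, Function.update_of_ne hb]
      exact f.2 u b ⟨hbu.symm, huv, hb, Or.inr (Or.inl ⟨rfl, hab⟩)⟩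
    · by_cases hb : b = v
      · subst hb
        have hau : a ≠ u := fun h => h1 ⟨h, rfl⟩
        rw [Function.update_self, Function.update_of_ne ha]
        exact f.2 a u ⟨hau, ha, huv, Or.inr (Or.inr ⟨rfl, hab.symm⟩)⟩
      · rw [Function.update_of_ne ha, Function.update_of_ne hb]
        exact f.2 a b ⟨hne, ha, hb, Or.inl hab⟩
  · simp [Function.update_of_ne huv]
  · rintro a b ⟨hne, ha, hb, hab⟩
    obtain ⟨c, f, hf, hfe⟩ := p
    simp only [Function.update_of_ne ha, Function.update_of_ne hb]
    rcases hab with hab | ⟨rfl, hab⟩ | ⟨rfl, hab⟩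
    · exact hf a b ⟨hab, fun h => hb h.2, fun h => ha h.1⟩
    · rw [hfe]
      exact hf v b ⟨hab, fun h => huv h.1.symm, fun h => hne h.2.symm⟩
    · rw [hfe]
      exact (hf v a ⟨hab, fun h => huv h.1.symm, fun h => hne h.2⟩).symm
  · intro f
    ext x
    simp
  · rintro ⟨c, f, hf, hfe⟩
    simp only [Prod.mk.injEq, Function.update_self, true_and, Subtype.mk.injEq]
    simp [Function.update_of_ne huv, hfe]

open Classical in
/-- clique indicator -/
noncomputable def I {V : Type*} (G : SimpleGraph V) (s : Finset V) : ℤ :=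
  if G.IsClique (s : Set V) then 1 else 0

open Classical in
/-- four cycle indicator -/
noncomputable def J {V : Type*} (G : SimpleGraph V) (s : Finset V) : ℤ :=
  if ∀ x ∈ s, (s.filter (fun y => G.Adj x y)).card = 2 then 1 else 0

/-- clique number -/
noncomputable def K {V : Type*} [Fintype V] (G : SimpleGraph V) (k : ℕ) : ℤ :=
  ∑ s ∈ powersetCard k univ, I G s

/-- four cycle number -/
noncomputable def C {V : Type*} [Fintype V] (G : SimpleGraph V) : ℤ :=
  ∑ s ∈ powersetCard 4 univ, J G s

/-- common neighbours -/
noncomputable def T {V : Type*} [Fintype V] (G : SimpleGraph V) (u v : V) : ℕ :=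
  Nat.card {x // G.Adj u x ∧ G.Adj v x}

lemma I_congr {V : Type*} (G H : SimpleGraph V) (s : Finset V)
    (h : ∀ x ∈ s, ∀ y ∈ s, G.Adj x y ↔ H.Adj x y) : I G s = I H s := by
  unfold I
  congr 1
  apply propext
  constructor
  · intro h1 x hx y hy hne
    exact (h x hx y hy).1 (h1 hx hy hne)
  · intro h1 x hx y hy hne
    exact (h x hx y hy).2 (h1 hx hy hne)

lemma J_congr {V : Type*} (G H : SimpleGraph V) (s : Finset V)
    (h : ∀ x ∈ s, ∀ y ∈ s, G.Adj x y ↔ H.Adj x y) : J G s = J H s := by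
  classical
  unfold J
  congr 1
  apply propext
  refine forall₂_congr fun x hx => ?_
  rw [filter_congr (fun y hy => h x hx y hy)]

lemma univ_eq {V : Type*} [Fintype V] [DecidableEq V] (u v : V) :
    (univ : Finset V) = insert u (insert v (univ \ {u, v})) := by
  ext x; simp; tauto

lemma sum_univ {V : Type*} [Fintype V] [DecidableEq V] (u v : V) (huv : u ≠ v) (k : ℕ)
    (f : Finset V → ℤ) :
    ∑ s ∈ powersetCard (k+2) univ, f s =
     ∑ s ∈ powersetCard (k+2) (univ \ {u, v}), f s
     + ∑ s ∈ powersetCard (k+1) (univ \ {u, v}), f (insert v s)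
     + ∑ s ∈ powersetCard (k+1) (univ \ {u, v}), f (insert u s)
     + ∑ s ∈ powersetCard k (univ \ {u, v}), f (insert u (insert v s)) := by
  conv_lhs => rw [univ_eq u v]
  rw [sum_pc_insert _ _ _ _ (by simp [huv]), sum_pc_insert _ _ _ _ (by simp),
    sum_pc_insert (fun s => f (insert u s)) _ _ _ (by simp)]
  ring

lemma T_eq {V : Type*} [Fintype V] [DecidableEq V] (G : SimpleGraph V) (u v : V) :
    T G u v = (open Classical in
      ((univ \ {u, v} : Finset V).filter (fun x => G.Adj u x ∧ G.Adj v x)).card) := by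
  classical
  unfold T
  rw [Nat.card_eq_fintype_card, Fintype.card_subtype]
  congr 1
  ext x
  simp only [mem_filter, mem_univ, true_and, mem_sdiff, mem_insert, mem_singleton]
  constructor
  · rintro ⟨h1, h2⟩
    exact ⟨by rintro (rfl | rfl) <;> simp_all, h1, h2⟩
  · exact fun h => h.2

lemma two_choose (n : ℕ) : 2 * (n.choose 2 : ℤ) = n * (n - 1) := by
  induction n with
  | zero => simp
  | succ n ih =>
    rw [Nat.choose_succ_succ' n 1]
    push_cast
    simp only [Nat.choose_one_right]
    linarith

lemma six_choose (n : ℕ) : 6 * (n.choose 3 : ℤ) = n * (n - 1) * (n - 2) := by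
  induction n with
  | zero => simp
  | succ n ih =>
    rw [Nat.choose_succ_succ' n 2]
    push_cast
    have := two_choose n
    linear_combination ih + 3 * this

lemma I_del {V : Type*} (G : SimpleGraph V) (u v : V) (s : Finset V)
    (h : u ∉ s ∨ v ∉ s) : I (del G u v) s = I G s := by
  apply I_congr
  intro x hx y hy
  simp only [del]
  grind

lemma J_del {V : Type*} (G : SimpleGraph V) (u v : V) (s : Finset V)
    (h : u ∉ s ∨ v ∉ s) : J (del G u v) s = J G s := by
  apply J_congr
  intro x hx y hy
  simp only [del]
  grind

lemma I_con {V : Type*} (G : SimpleGraph V) (u v : V) (s : Finset V)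
    (h : u ∉ s) (h' : v ∉ s) : I (con G u v) s = I G s := by
  apply I_congr
  intro x hx y hy
  have := G.ne_of_adj (a := x) (b := y)
  simp only [con]
  grind

lemma I_con_v {V : Type*} [DecidableEq V] (G : SimpleGraph V) (u v x : V) (s : Finset V)
    (h : v ∉ s) (hx : x ∈ s) : I (con G u v) (insert v s) = 0 := by
  unfold I
  rw [if_neg]
  intro h1
  have := h1 (x := v) (y := x) (by simp) (by simp [hx]) (by grind)
  exact this.2.1 rfl

lemma notMem {V : Type*} [Fintype V] [DecidableEq V] {u v : V} {k : ℕ} {s : Finset V}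
    (hs : s ∈ powersetCard k (univ \ {u, v})) : u ∉ s ∧ v ∉ s := by
  have hs := (mem_powersetCard.1 hs).1
  exact ⟨fun h => by simpa using hs h, fun h => by simpa using hs h⟩

lemma sum_del {V : Type*} [Fintype V] [DecidableEq V] (u v : V) (huv : u ≠ v) (k : ℕ)
    (f g : Finset V → ℤ) (h : ∀ s, u ∉ s ∨ v ∉ s → f s = g s) :
    ∑ s ∈ powersetCard (k+2) univ, f s = ∑ s ∈ powersetCard (k+2) univ, g s +
      ∑ s ∈ powersetCard k (univ \ {u, v}),
        (f (insert u (insert v s)) - g (insert u (insert v s))) := by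
  rw [sum_univ u v huv, sum_univ u v huv, sum_sub_distrib]
  rw [sum_congr rfl (fun s hs => h s (Or.inl (notMem hs).1)),
    sum_congr rfl (fun s hs => h (insert u s) (Or.inr (by simp [(notMem hs).2, huv.symm]))),
    sum_congr rfl (fun s hs => h (insert v s) (Or.inl (by simp [(notMem hs).1, huv])))]
  ring

lemma K2_del {V : Type*} [Fintype V] [DecidableEq V] (G : SimpleGraph V) (u v : V)
    (h : G.Adj u v) : K (del G u v) 2 = K G 2 - 1 := by
  have huv := h.ne
  unfold K
  rw [sum_del u v huv 0 _ _ (I_del G u v)]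
  have e4 : I G {u, v} = 1 := by simp [I, h]
  have e5 : I (del G u v) {u, v} = 0 := by simp [I, huv, del]
  simp [e4, e5]
  ring

lemma T_sum {V : Type*} [Fintype V] [DecidableEq V] (G : SimpleGraph V) (u v : V) :
    (T G u v : ℤ) = ∑ x ∈ (univ \ {u, v} : Finset V),
      (open Classical in if G.Adj u x ∧ G.Adj v x then 1 else 0) := by
  classical
  rw [T_eq, card_filter]
  push_cast
  rfl

lemma K3_del {V : Type*} [Fintype V] [DecidableEq V] (G : SimpleGraph V) (u v : V)
    (h : G.Adj u v) : K (del G u v) 3 = K G 3 - T G u v := by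
  classical
  have huv := h.ne
  unfold K
  rw [sum_del u v huv 1 _ _ (I_del G u v), T_sum, powersetCard_one, sum_map, sub_eq_add_neg,
    ← sum_neg_distrib]
  congr 1
  apply sum_congr rfl
  intro x hx
  simp only [mem_sdiff, mem_univ, mem_insert, mem_singleton, true_and, not_or] at hx
  have e5 : I (del G u v) {u, v, x} = 0 := by
    unfold I
    rw [if_neg]
    intro h1
    have := h1 (x := u) (y := v) (by simp) (by simp) huv
    simp [del] at this
  simp only [Function.Embedding.coeFn_mk, e5]
  simp [I, SimpleGraph.isClique_insert, huv, h, Ne.symm hx.1, Ne.symm hx.2]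
  congr 1
  simp [and_comm]

lemma K2_con {V : Type*} [Fintype V] [DecidableEq V] (G : SimpleGraph V) (u v : V)
    (h : G.Adj u v) : K (con G u v) 2 = K G 2 - 1 - T G u v := by
  classical
  have huv := h.ne
  unfold K
  rw [sum_univ u v huv 0, sum_univ u v huv 0, T_sum]
  rw [sum_congr rfl (fun s hs => I_con G u v s (notMem hs).1 (notMem hs).2)]
  simp only [zero_add, powersetCard_one, sum_map, powersetCard_zero, sum_singleton,
    Function.Embedding.coeFn_mk, insert_empty]
  have e4 : I G {u, v} = 1 := by simp [I, h]
  have e5 : I (con G u v) {u, v} = 0 := by simp [I, huv, con]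
  rw [e4, e5]
  have key : ∀ x ∈ (univ \ {u, v} : Finset V), I (con G u v) {v, x} + I (con G u v) {u, x} =
      I G {v, x} + I G {u, x} - if G.Adj u x ∧ G.Adj v x then 1 else 0 := by
    intro x hx
    simp only [mem_sdiff, mem_univ, mem_insert, mem_singleton, true_and, not_or] at hx
    simp only [I, coe_insert, coe_singleton, SimpleGraph.isClique_pair, con]
    by_cases h1 : G.Adj u x <;> by_cases h2 : G.Adj v x <;>
      simp [h1, h2, Ne.symm hx.1, Ne.symm hx.2, hx.1, hx.2, huv]
  have := sum_congr rfl key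
  rw [sum_sub_distrib, sum_add_distrib, sum_add_distrib] at this
  linarith

lemma J4 {V : Type*} [DecidableEq V] (G : SimpleGraph V) (a b c d : V)
    (hab : a ≠ b) (hac : a ≠ c) (had : a ≠ d) (hbc : b ≠ c) (hbd : b ≠ d) (hcd : c ≠ d) :
    J G {a, b, c, d} = (open Classical in if
      (G.Adj a b ∧ G.Adj b c ∧ G.Adj c d ∧ G.Adj a d ∧ ¬ G.Adj a c ∧ ¬ G.Adj b d) ∨
      (G.Adj a b ∧ G.Adj b d ∧ G.Adj c d ∧ G.Adj a c ∧ ¬ G.Adj a d ∧ ¬ G.Adj b c) ∨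
      (G.Adj a c ∧ G.Adj b c ∧ G.Adj b d ∧ G.Adj a d ∧ ¬ G.Adj a b ∧ ¬ G.Adj c d)
      then 1 else 0) := by
  classical
  unfold J
  have s1 := G.adj_comm a b
  have s2 := G.adj_comm a c
  have s3 := G.adj_comm a d
  have s4 := G.adj_comm b c
  have s5 := G.adj_comm b d
  have s6 := G.adj_comm c d
  congr 1
  apply propext
  simp only [mem_insert, mem_singleton, forall_eq_or_imp, forall_eq]
  by_cases h1 : G.Adj a b <;> by_cases h2 : G.Adj a c <;> by_cases h3 : G.Adj a d <;>
  by_cases h4 : G.Adj b c <;> by_cases h5 : G.Adj b d <;> by_cases h6 : G.Adj c d <;>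
  simp only [h1, h2, h3, h4, h5, h6, true_iff, false_iff] at s1 s2 s3 s4 s5 s6 <;>
  simp [filter_insert, filter_singleton, *]

lemma I4 {V : Type*} [DecidableEq V] (G : SimpleGraph V) (a b c d : V)
    (hab : a ≠ b) (hac : a ≠ c) (had : a ≠ d) (hbc : b ≠ c) (hbd : b ≠ d) (hcd : c ≠ d) :
    I G {a, b, c, d} = (open Classical in if
      G.Adj a b ∧ G.Adj a c ∧ G.Adj a d ∧ G.Adj b c ∧ G.Adj b d ∧ G.Adj c d
      then 1 else 0) := by
  classical
  unfold I
  congr 1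
  apply propext
  simp [SimpleGraph.isClique_insert, *]
  tauto

lemma I3 {V : Type*} [DecidableEq V] (G : SimpleGraph V) (a b c : V)
    (hab : a ≠ b) (hac : a ≠ c) (hbc : b ≠ c) :
    I G {a, b, c} = (open Classical in if
      G.Adj a b ∧ G.Adj a c ∧ G.Adj b c then 1 else 0) := by
  classical
  unfold I
  congr 1
  apply propext
  simp [SimpleGraph.isClique_insert, *]
  tauto

lemma main_id {V : Type*} [Fintype V] [DecidableEq V] (G : SimpleGraph V) (u v : V)
    (h : G.Adj u v) :
    K (con G u v) 3 - (K G 3 - T G u v) - (T G u v).choose 2 =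
      (C G - C (del G u v)) - 2 * (K G 4 - K (del G u v) 4) := by
  classical
  have huv := h.ne
  have hc : ((T G u v).choose 2 : ℤ) = ∑ p ∈ powersetCard 2 (univ \ {u, v} : Finset V),
      if ∀ x ∈ p, G.Adj u x ∧ G.Adj v x then 1 else 0 := by
    rw [T_eq, ← card_powersetCard, sum_boole]
    congr 2
    ext p
    simp only [mem_powersetCard, mem_filter, subset_iff]
    grind
  have h1 : K (con G u v) 3 = ∑ s ∈ powersetCard 3 (univ \ {u, v}), I G s +
      ∑ s ∈ powersetCard 2 (univ \ {u, v}), I (con G u v) (insert u s) := by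
    unfold K
    rw [sum_univ u v huv 1,
      sum_congr rfl (fun s hs => I_con G u v s (notMem hs).1 (notMem hs).2)]
    have z1 : ∑ s ∈ powersetCard (1+1) (univ \ {u, v}), I (con G u v) (insert v s) = 0 := by
      apply sum_eq_zero
      intro s hs
      have hcard := (mem_powersetCard.1 hs).2
      obtain ⟨x, hx⟩ : s.Nonempty := by rw [← card_pos]; omega
      exact I_con_v G u v x s (notMem hs).2 hx
    have z2 : ∑ s ∈ powersetCard 1 (univ \ {u, v}), I (con G u v) (insert u (insert v s)) = 0 := by
      apply sum_eq_zero
      intro s hs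
      rw [insert_comm]
      exact I_con_v G u v u _ (by simp [huv.symm, (notMem hs).2]) (by simp)
    rw [z1, z2]
    ring
  have h2 : K G 3 - T G u v = ∑ s ∈ powersetCard 3 (univ \ {u, v}), I G s +
      ∑ s ∈ powersetCard 2 (univ \ {u, v}), (I G (insert u s) + I G (insert v s)) := by
    rw [← K3_del G u v h]
    unfold K
    rw [sum_univ u v huv 1, sum_add_distrib]
    rw [sum_congr rfl (fun s hs => I_del G u v s (Or.inl (notMem hs).1)),
    sum_congr rfl (fun s hs => I_del G u v (insert u s) (Or.inr (by simp [(notMem hs).2, huv.symm]))),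
    sum_congr rfl (fun s hs => I_del G u v (insert v s) (Or.inl (by simp [(notMem hs).1, huv])))]
    have z2 : ∑ s ∈ powersetCard 1 (univ \ {u, v}), I (del G u v) (insert u (insert v s)) = 0 := by
      apply sum_eq_zero
      intro s hs
      unfold I
      rw [if_neg]
      intro h1
      have := h1 (x := u) (y := v) (by simp) (by simp) huv
      simp [del] at this
    rw [z2]
    ring
  have h3 := sum_del u v huv 2 _ _ (I_del G u v)
  have h4 := sum_del u v huv 2 _ _ (J_del G u v)
  change K (del G u v) 4 = K G 4 + _ at h3
  change C (del G u v) = C G + _ at h4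
  rw [h1, h2, h3, h4, hc]
  simp only [sub_add_cancel_left, mul_neg, sub_neg_eq_add, add_sub_add_left_eq_sub]
  rw [mul_sum, ← sum_sub_distrib, ← sum_sub_distrib, ← sum_neg_distrib, ← sum_add_distrib]
  apply sum_congr rfl
  intro p hp
  obtain ⟨hu, hv⟩ := notMem hp
  obtain ⟨x, y, hxy, rfl⟩ := card_eq_two.1 (mem_powersetCard.1 hp).2
  simp only [mem_insert, mem_singleton, not_or] at hu hv
  obtain ⟨hux, huy⟩ := hu
  obtain ⟨hvx, hvy⟩ := hv
  rw [I4 _ _ _ _ _ huv hux huy hvx hvy hxy, I4 _ _ _ _ _ huv hux huy hvx hvy hxy,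
    J4 _ _ _ _ _ huv hux huy hvx hvy hxy, J4 _ _ _ _ _ huv hux huy hvx hvy hxy,
    I3 _ _ _ _ hux huy hxy, I3 _ _ _ _ hux huy hxy, I3 _ _ _ _ hvx hvy hxy]
  simp only [mem_insert, mem_singleton, forall_eq_or_imp, forall_eq, del, con]
  have n1 := Ne.symm hux
  have n2 := Ne.symm huy
  have n3 := Ne.symm hvx
  have n4 := Ne.symm hvy
  by_cases h1 : G.Adj u x <;> by_cases h2 : G.Adj u y <;> by_cases h3 : G.Adj v x <;>
  by_cases h4 : G.Adj v y <;> by_cases h5 : G.Adj x y <;> simp [*]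

lemma no_edges {V : Type*} [Fintype V] (G : SimpleGraph V)
    (h : ∀ u v, ¬ G.Adj u v) : (∀ k, K G (k + 2) = 0) ∧ C G = 0 ∧
      ∀ k, N G k = k ^ Fintype.card V := by
  classical
  refine ⟨fun k => sum_eq_zero fun s hs => ?_, sum_eq_zero fun s hs => ?_, fun k => ?_⟩
  · have hcard := (mem_powersetCard.1 hs).2
    obtain ⟨x, hx, y, hy, hxy⟩ := one_lt_card.1 (show 1 < s.card by omega)
    unfold I
    rw [if_neg]
    intro h1
    exact h x y (h1 hx hy hxy)
  · have hcard := (mem_powersetCard.1 hs).2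
    obtain ⟨x, hx⟩ : s.Nonempty := by rw [← card_pos]; omega
    unfold J
    rw [if_neg]
    intro h1
    have := h1 x hx
    simp [h] at this
  · unfold N
    simp [h, Nat.card_eq_fintype_card]

lemma K_nonneg {V : Type*} [Fintype V] (G : SimpleGraph V) (k : ℕ) : 0 ≤ K G k := by
  apply sum_nonneg
  intro s _
  unfold I
  split_ifs <;> simp

lemma main_ind {V : Type*} [Fintype V] [DecidableEq V] (r : ℕ) (hn : Fintype.card V = r + 3)
    (M : ℕ) :
    ∀ G : SimpleGraph V, K G 2 ≤ M → ∃ Q : Polynomial ℤ,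
      (∀ k : ℕ, Q.eval (k : ℤ) = k ^ M * N G k) ∧
      (∀ j, M + r + 3 < j → Q.coeff j = 0) ∧
      Q.coeff (M + r + 3) = 1 ∧
      Q.coeff (M + r + 2) = - K G 2 ∧
      2 * Q.coeff (M + r + 1) = K G 2 * (K G 2 - 1) - 2 * K G 3 ∧
      6 * Q.coeff (M + r) = - (K G 2 * (K G 2 - 1) * (K G 2 - 2)) +
        6 * ((K G 2 - 2) * K G 3 + C G - 2 * K G 4) := by
  have base : ∀ (M : ℕ) (G : SimpleGraph V), (∀ u v, ¬ G.Adj u v) → ∃ Q : Polynomial ℤ,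
      (∀ k : ℕ, Q.eval (k : ℤ) = k ^ M * N G k) ∧
      (∀ j, M + r + 3 < j → Q.coeff j = 0) ∧
      Q.coeff (M + r + 3) = 1 ∧
      Q.coeff (M + r + 2) = - K G 2 ∧
      2 * Q.coeff (M + r + 1) = K G 2 * (K G 2 - 1) - 2 * K G 3 ∧
      6 * Q.coeff (M + r) = - (K G 2 * (K G 2 - 1) * (K G 2 - 2)) +
        6 * ((K G 2 - 2) * K G 3 + C G - 2 * K G 4) := by
    intro M G hG
    obtain ⟨h1, h2, h3⟩ := no_edges G hG
    refine ⟨X ^ (M + r + 3), ?_, ?_, ?_, ?_, ?_, ?_⟩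
    · intro k
      rw [h3, hn]
      simp
      ring
    · intro j hj
      rw [coeff_X_pow, if_neg (by omega)]
    · simp
    · rw [coeff_X_pow, if_neg (by omega), h1 0]; simp
    · rw [coeff_X_pow, if_neg (by omega), h1 0, h1 1]; simp
    · rw [coeff_X_pow, if_neg (by omega), h1 0, h1 1, h1 2, h2]; simp
  induction M with
  | zero =>
    intro G hG
    apply base
    intro u v h
    have h1 := K2_del G u v h
    have h2 := K_nonneg (del G u v) 2
    push_cast at hG
    omega
  | succ M ih =>
    intro G hG
    by_cases he : ∀ u v, ¬ G.Adj u v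
    · exact base _ G he
    push Not at he
    obtain ⟨u, v, h⟩ := he
    have d2 := K2_del G u v h
    have d3 := K3_del G u v h
    have c2 := K2_con G u v h
    have mi := main_id G u v h
    have t2 := two_choose (T G u v)
    push_cast at hG
    obtain ⟨A, a0, a1, a2, a3, a4, a5⟩ := ih (del G u v) (by omega)
    obtain ⟨B, b0, b1, b2, b3, b4, b5⟩ := ih (con G u v) (by omega)
    refine ⟨X * A - B, ?_, ?_, ?_, ?_, ?_, ?_⟩
    · intro k
      have n1 := N_del G u v h k
      have n2 := N_con G u v h k
      rw [eval_sub, eval_mul, eval_X, a0, b0, n1, n2]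
      push_cast
      ring
    · intro j hj
      obtain ⟨j, rfl⟩ : ∃ i, j = i + 1 := ⟨j - 1, by omega⟩
      rw [coeff_sub, coeff_X_mul, a1 _ (by omega), b1 _ (by omega)]
      simp
    · rw [show M + 1 + r + 3 = (M + r + 3) + 1 by ring, coeff_sub, coeff_X_mul, a2,
        b1 _ (by omega)]
      simp
    · rw [show M + 1 + r + 2 = (M + r + 2) + 1 by ring, coeff_sub, coeff_X_mul, a3, b2, d2]
      ring
    · rw [show M + 1 + r + 1 = (M + r + 1) + 1 by ring, coeff_sub, coeff_X_mul, b3, mul_sub, a4,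
        d2, d3, c2]
      ring
    · rw [show M + 1 + r = (M + r) + 1 by ring, coeff_sub, coeff_X_mul, mul_sub, a5]
      rw [d2, d3]
      rw [c2] at b4
      linear_combination -3 * b4 + 6 * mi + 3 * t2

lemma K_eq {V : Type*} [Fintype V] [DecidableEq V] (G : SimpleGraph V) [DecidableRel G.Adj]
    (k : ℕ) : K G k = ((G.cliqueFinset k).card : ℤ) := by
  classical
  have h : K G k = (((powersetCard k univ).filter
      (fun s : Finset V => G.IsClique (s : Set V))).card : ℤ) := by
    rw [natCast_card_filter]
    exact sum_congr rfl (fun s _ => by unfold I; congr)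
  rw [h]
  congr 2
  ext s
  simp [SimpleGraph.mem_cliqueFinset_iff, SimpleGraph.isNClique_iff, mem_powersetCard, and_comm]

lemma K_two {V : Type*} [Fintype V] [DecidableEq V] (G : SimpleGraph V) [DecidableRel G.Adj] :
    K G 2 = (G.edgeFinset.card : ℤ) := by
  classical
  rw [K_eq]
  congr 1
  symm
  apply card_bij (fun e _ => e.toFinset)
  · intro e he
    induction e with
    | h x y =>
      rw [SimpleGraph.mem_edgeFinset, SimpleGraph.mem_edgeSet] at he
      rw [SimpleGraph.mem_cliqueFinset_iff, SimpleGraph.isNClique_iff]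
      simp [he, he.ne, Sym2.toFinset_mk_eq]
  · intro e _ f _ h
    ext x
    rw [← Sym2.mem_toFinset, h, Sym2.mem_toFinset]
  · intro s hs
    rw [SimpleGraph.mem_cliqueFinset_iff, SimpleGraph.isNClique_iff] at hs
    obtain ⟨x, y, hxy, rfl⟩ := card_eq_two.1 hs.2
    refine ⟨s(x, y), ?_, by simp [Sym2.toFinset_mk_eq]⟩
    rw [SimpleGraph.mem_edgeFinset, SimpleGraph.mem_edgeSet]
    exact hs.1 (by simp) (by simp) hxy

lemma C_eq {V : Type*} [Fintype V] [DecidableEq V] (G : SimpleGraph V) :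
    C G = (G.inducedFourCycleCount : ℤ) := by
  classical
  have h : C G = (((powersetCard 4 univ).filter (fun s : Finset V =>
      ∀ x ∈ s, (s.filter (fun y => G.Adj x y)).card = 2)).card : ℤ) := by
    rw [natCast_card_filter]
    exact sum_congr rfl (fun s _ => by unfold J; congr)
  rw [h]
  unfold SimpleGraph.inducedFourCycleCount
  rw [Nat.card_eq_fintype_card, Fintype.card_subtype]
  congr 2
  ext s
  simp only [mem_filter, mem_powersetCard, subset_univ, true_and, mem_univ]
  apply and_congr_right
  intro hs
  have hnb : ∀ v : (s : Set V), Nat.card ((G.induce (s : Set V)).neighborSet v) =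
      (s.filter (fun y => G.Adj v y)).card := by
    intro v
    rw [← Nat.card_eq_finsetCard]
    refine Nat.card_congr ⟨fun w => ⟨w.1.1, ?_⟩, fun w => ⟨⟨w.1, ?_⟩, ?_⟩, ?_, ?_⟩
    · have h1 : G.Adj v w.1 := w.2
      have h2 := w.1.2
      exact mem_filter.2 ⟨h2, h1⟩
    · exact (mem_filter.1 w.2).1
    · have h1 := (mem_filter.1 w.2).2
      simpa using h1
    · intro w; rfl
    · intro w; rfl
  have hnb' : (∀ v, Nat.card ((G.induce (s : Set V)).neighborSet v) = 2) ↔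
      ∀ x ∈ s, (s.filter (fun y => G.Adj x y)).card = 2 := by
    simp only [hnb]
    simp
  rw [hnb']
  constructor
  · intro h
    refine ⟨?_, h⟩
    obtain ⟨x₀, hx₀⟩ : s.Nonempty := by rw [← card_pos]; omega
    have : Nonempty (s : Set V) := ⟨⟨x₀, hx₀⟩⟩
    refine SimpleGraph.Connected.mk ?_
    rintro ⟨x, hx⟩ ⟨y, hy⟩
    by_cases hxy : x = y
    · subst hxy; exact SimpleGraph.Reachable.refl _
    by_cases hadj : G.Adj x y
    · exact SimpleGraph.Adj.reachable (by simpa using hadj)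
    have hx2 := h x hx
    have hy2 := h y hy
    obtain ⟨z, hz⟩ : ((s.filter (fun y => G.Adj x y)) ∩ (s.filter (fun z => G.Adj y z))).Nonempty := by
      rw [← card_pos]
      have h1 := card_union_add_card_inter (s.filter (fun y => G.Adj x y)) (s.filter (fun z => G.Adj y z))
      have h2 : (s.filter (fun y => G.Adj x y)) ∪ (s.filter (fun z => G.Adj y z)) ⊆ (s.erase x).erase y := by
        intro z hz
        have hadj' : ¬ G.Adj y x := fun h => hadj h.symm
        simp only [mem_union, mem_filter, mem_erase] at hz ⊢
        refine ⟨?_, ?_, by tauto⟩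
        · rintro rfl; simp_all
        · rintro rfl; simp_all
      have h3 := card_le_card h2
      rw [card_erase_of_mem (mem_erase.2 ⟨Ne.symm hxy, hy⟩), card_erase_of_mem hx] at h3
      omega
    simp only [mem_inter, mem_filter] at hz
    have r1 : (G.induce (s : Set V)).Adj ⟨x, hx⟩ ⟨z, hz.1.1⟩ := by simpa using hz.1.2
    have r2 : (G.induce (s : Set V)).Adj ⟨y, hy⟩ ⟨z, hz.1.1⟩ := by simpa using hz.2.2
    exact r1.reachable.trans r2.reachable.symm
  · exact fun h => h.2

end CP

/-- The first four coefficients of the chromatic polynomial of a connected graph `G`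
with `n ≥ 4` vertices and `m` edges: `c_n = 1`, `c_{n−1} = −m`,
`c_{n−2} = C(m,2) − t₁`, and `c_{n−3} = −C(m,3) + (m−2)t₁ + t₂ − 2t₃`, where `t₁` is the
number of triangles, `t₂` the number of induced 4-cycles and `t₃` the number of complete
subgraphs on 4 vertices. -/
theorem chromaticPolynomial_first_four_coeffs {V : Type*} [Fintype V] [DecidableEq V]
    (G : SimpleGraph V) [DecidableRel G.Adj] (P : Polynomial ℤ)
    (hP : ∀ k : ℕ, P.eval (k : ℤ) = G.numColorings k)
    (hconn : G.Connected) (hn : 4 ≤ Fintype.card V) :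
    P.coeff (Fintype.card V) = 1 ∧
    P.coeff (Fintype.card V - 1) = -(G.edgeFinset.card : ℤ) ∧
    P.coeff (Fintype.card V - 2) =
      (G.edgeFinset.card.choose 2 : ℤ) - ((G.cliqueFinset 3).card : ℤ) ∧
    P.coeff (Fintype.card V - 3) =
      -(G.edgeFinset.card.choose 3 : ℤ)
        + ((G.edgeFinset.card : ℤ) - 2) * ((G.cliqueFinset 3).card : ℤ)
        + (G.inducedFourCycleCount : ℤ) - 2 * ((G.cliqueFinset 4).card : ℤ) := by
  obtain ⟨r, hr⟩ : ∃ r, Fintype.card V = r + 3 := ⟨Fintype.card V - 3, by omega⟩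
  obtain ⟨Q, q0, -, q2, q3, q4, q5⟩ :=
    CP.main_ind r hr G.edgeFinset.card G (CP.K_two G).le
  have hN : ∀ k, G.numColorings k = CP.N G k := by
    intro k
    unfold SimpleGraph.numColorings CP.N
    rw [Nat.card_eq_fintype_card]
  have hQ : Q = X ^ G.edgeFinset.card * P := by
    apply Polynomial.eq_of_infinite_eval_eq
    refine Set.Infinite.mono ?_ (Set.infinite_range_of_injective (Nat.cast_injective (R := ℤ)))
    rintro _ ⟨k, rfl⟩
    simp [q0, hP, hN]
  have hc : ∀ j, Q.coeff (G.edgeFinset.card + j) = P.coeff j := by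
    intro j
    rw [hQ, add_comm, coeff_X_pow_mul]
  rw [add_assoc, hc] at q2 q3 q4
  rw [hc] at q5
  rw [CP.K_two] at q3 q4 q5
  rw [CP.K_eq] at q4
  rw [CP.K_eq, CP.K_eq, CP.C_eq] at q5
  have t2 := CP.two_choose G.edgeFinset.card
  have t3 := CP.six_choose G.edgeFinset.card
  rw [hr]
  refine ⟨q2, q3, ?_, ?_⟩
  · change P.coeff (r + 1) = _
    linarith
  · change P.coeff r = _
    linarith
end

section
/- The absolute values of the coefficients of the chromatic polynomial of a finite simple graph form a log-concave sequence: if G has n vertices, P_G(λ) = Σ_{i=0}^{n} c_{n−i} λ^{n−i}, and h_i = |c_{n−i}|, then h_{i−1} · h_{i+1} ≤ h_i² for all i with 0 < i < n. -/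
open Polynomial

open scoped Classical in
/-- A finite weighted (balanced) simplicial fan, given combinatorially. -/
structure BFan (S : Type*) [Fintype S] [DecidableEq S] where
  Face : Finset S → Prop
  D : ℕ
  Lin : Submodule ℝ (S → ℝ)
  down : ∀ (τ : Finset S) (F G : S), Face τ → Face (insert F (insert G τ)) → Face (insert G τ)
  interp : ∀ τ, Face τ → ∀ t : S → ℝ, ∃ l ∈ Lin, ∀ F ∈ τ, l F = t F
  balanced : ∀ τ, Face τ → τ.card + 1 = D → ∀ l ∈ Lin, (∀ F ∈ τ, l F = 0) →
    ∑ F ∈ Finset.univ.filter (fun F => F ∉ τ ∧ Face (insert F τ)), l F = 0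

namespace BFan

open scoped Classical

variable {S : Type*} [Fintype S] [DecidableEq S] (B : BFan S)

/-- The vertices of the link of a face. -/
noncomputable def link (τ : Finset S) : Finset S :=
  Finset.univ.filter (fun F => F ∉ τ ∧ B.Face (insert F τ))

lemma mem_link {τ : Finset S} {F : S} : F ∈ B.link τ ↔ F ∉ τ ∧ B.Face (insert F τ) := by
  simp [link]

lemma exists_basis (τ : Finset S) (F : S) :
    ∃ b : S → ℝ, b ∈ B.Lin ∧ (B.Face τ → ∀ G ∈ τ, b G = if G = F then 1 else 0) := by
  by_cases h : B.Face τ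
  · obtain ⟨l, hl, hl'⟩ := B.interp τ h (fun G => if G = F then 1 else 0)
    exact ⟨l, hl, fun _ => hl'⟩
  · exact ⟨0, B.Lin.zero_mem, fun hface => absurd hface h⟩

/-- Interpolating elements of the lineality space. -/
noncomputable def bas (τ : Finset S) (F : S) : S → ℝ := (B.exists_basis τ F).choose

lemma bas_mem (τ : Finset S) (F : S) : B.bas τ F ∈ B.Lin := (B.exists_basis τ F).choose_spec.1

lemma bas_apply {τ : Finset S} (h : B.Face τ) (F : S) {G : S} (hG : G ∈ τ) :
    B.bas τ F G = if G = F then 1 else 0 := (B.exists_basis τ F).choose_spec.2 h G hG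

/-- Reduction of a function modulo the lineality space to one vanishing on `τ`. -/
noncomputable def red (τ : Finset S) (t : S → ℝ) : S → ℝ :=
  fun X => t X - ∑ F ∈ τ, t F * B.bas τ F X

lemma red_vanish {τ : Finset S} (h : B.Face τ) (t : S → ℝ) {G : S} (hG : G ∈ τ) :
    B.red τ t G = 0 := by
  have : ∑ F ∈ τ, t F * B.bas τ F G = ∑ F ∈ τ, if G = F then t F else 0 := by
    refine Finset.sum_congr rfl fun F _ => ?_
    rw [B.bas_apply h F hG]; split_ifs <;> simp
  simp [red, this, hG]

lemma red_sub_mem (τ : Finset S) (t : S → ℝ) : t - B.red τ t ∈ B.Lin := by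
  have : t - B.red τ t = ∑ F ∈ τ, t F • B.bas τ F := by
    ext X; simp [red]
  rw [this]
  exact Submodule.sum_mem _ fun F _ => Submodule.smul_mem _ _ (B.bas_mem τ F)

/-- The mixed degree of a list of functions on the star of `τ`. -/
noncomputable def N : List (S → ℝ) → Finset S → ℝ
  | [], _ => 1
  | t :: ts, τ => ∑ F ∈ B.link τ, B.red τ t F * N ts (insert F τ)

lemma N_cons (t : S → ℝ) (ts : List (S → ℝ)) (τ : Finset S) :
    B.N (t :: ts) τ = ∑ F ∈ B.link τ, B.red τ t F * B.N ts (insert F τ) := rfl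

lemma face_of_mem_link {τ : Finset S} {F : S} (h : F ∈ B.link τ) : B.Face (insert F τ) :=
  (B.mem_link.1 h).2

lemma card_of_mem_link {τ : Finset S} {F : S} (h : F ∈ B.link τ) :
    (insert F τ).card = τ.card + 1 := Finset.card_insert_of_notMem (B.mem_link.1 h).1

lemma link_swap {τ : Finset S} (hτ : B.Face τ) {F G : S} (hF : F ∈ B.link τ)
    (hG : G ∈ B.link (insert F τ)) : G ∈ B.link τ ∧ F ∈ B.link (insert G τ) := by
  simp only [mem_link] at hF hG ⊢
  have h1 : F ≠ G := by rintro rfl; simp at hG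
  have h2 : G ∉ τ := fun h => hG.1 (Finset.mem_insert_of_mem h)
  have h3 : B.Face (insert F (insert G τ)) := by rw [Finset.insert_comm]; exact hG.2
  refine ⟨⟨h2, B.down τ F G hτ h3⟩, ?_, h3⟩
  simp [h1, hF.1]

lemma sum_link_swap {τ : Finset S} (hτ : B.Face τ) (f : S → S → ℝ) :
    ∑ F ∈ B.link τ, ∑ G ∈ B.link (insert F τ), f F G =
      ∑ G ∈ B.link τ, ∑ F ∈ B.link (insert G τ), f F G := by
  refine Finset.sum_comm' ?_
  intro F G
  constructor
  · rintro ⟨h1, h2⟩; exact (B.link_swap hτ h1 h2).symm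
  · rintro ⟨h1, h2⟩; exact B.link_swap hτ h2 h1

/-- Independence of representative at a given list. -/
def WD (ts : List (S → ℝ)) : Prop := ∀ τ, B.Face τ → τ.card + ts.length + 1 = B.D →
  ∀ l ∈ B.Lin, (∀ F ∈ τ, l F = 0) → ∑ F ∈ B.link τ, l F * B.N ts (insert F τ) = 0

lemma N_eq_of_WD {ts : List (S → ℝ)} (h : B.WD ts) {τ : Finset S} (hτ : B.Face τ)
    (hc : τ.card + ts.length + 1 = B.D) {t s : S → ℝ} (hts : t - s ∈ B.Lin)
    (hs : ∀ F ∈ τ, s F = 0) : B.N (t :: ts) τ = ∑ F ∈ B.link τ, s F * B.N ts (insert F τ) := by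
  have h1 : B.red τ t - s ∈ B.Lin := by
    have := B.Lin.sub_mem hts (B.red_sub_mem τ t)
    convert this using 1; abel
  have := h τ hτ hc _ h1 (fun F hF => by simp [B.red_vanish hτ t hF, hs F hF])
  rw [N_cons, ← sub_eq_zero, ← Finset.sum_sub_distrib, ← this]
  refine Finset.sum_congr rfl fun F _ => ?_
  simp only [Pi.sub_apply]; ring

lemma bas_insert_vanish {τ : Finset S} {F : S} (hF : F ∈ B.link τ) {G : S} (hG : G ∈ τ) :
    B.bas (insert F τ) F G = 0 := by
  rw [B.bas_apply (B.face_of_mem_link hF) F (Finset.mem_insert_of_mem hG), if_neg]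
  rintro rfl; exact (B.mem_link.1 hF).1 hG

lemma bas_insert_self {τ : Finset S} {F : S} (hF : F ∈ B.link τ) :
    B.bas (insert F τ) F F = 1 := by
  rw [B.bas_apply (B.face_of_mem_link hF) F (Finset.mem_insert_self _ _), if_pos rfl]

/-- Two-step expansion. -/
lemma two_step {ts : List (S → ℝ)} (h : B.WD ts) {τ : Finset S}
    (hc : τ.card + ts.length + 2 = B.D) {s : S → ℝ}
    (hs : ∀ F ∈ τ, s F = 0) {F : S} (hF : F ∈ B.link τ) :
    B.N (s :: ts) (insert F τ) = ∑ G ∈ B.link (insert F τ),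
      (s G - s F * B.bas (insert F τ) F G) * B.N ts (insert G (insert F τ)) := by
  refine B.N_eq_of_WD h (B.face_of_mem_link hF) (by rw [B.card_of_mem_link hF]; omega)
    (s := fun G => s G - s F * B.bas (insert F τ) F G) ?_ ?_
  · have : s - (fun G => s G - s F * B.bas (insert F τ) F G) = s F • B.bas (insert F τ) F := by
      ext; simp
    rw [this]; exact Submodule.smul_mem _ _ (B.bas_mem _ _)
  · intro G hG
    rcases Finset.mem_insert.1 hG with rfl | hG
    · simp [B.bas_insert_self hF]
    · simp [B.bas_insert_vanish hF hG, hs G hG]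

lemma N_sub_lin_tail {ts : List (S → ℝ)} (h : B.WD ts) {τ : Finset S} (hτ : B.Face τ)
    (hc : τ.card + ts.length + 1 = B.D) {t s : S → ℝ} (hts : t - s ∈ B.Lin) :
    B.N (t :: ts) τ = B.N (s :: ts) τ := by
  rw [B.N_cons s]
  refine B.N_eq_of_WD h hτ hc ?_ (fun F hF => B.red_vanish hτ s hF)
  have := B.Lin.add_mem hts (B.red_sub_mem τ s)
  convert this using 1; abel

lemma sym_aux {ts : List (S → ℝ)} (h : B.WD ts) {τ : Finset S} (hτ : B.Face τ)
    (hc : τ.card + ts.length + 2 = B.D) {u s : S → ℝ}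
    (hu : ∀ F ∈ τ, u F = 0) (hs : ∀ F ∈ τ, s F = 0) :
    ∑ F ∈ B.link τ, u F * B.N (s :: ts) (insert F τ) =
      ∑ F ∈ B.link τ, s F * B.N (u :: ts) (insert F τ) := by
  have key : ∀ u s : S → ℝ, (∀ F ∈ τ, s F = 0) →
      ∑ F ∈ B.link τ, u F * B.N (s :: ts) (insert F τ) =
      ∑ F ∈ B.link τ, ∑ G ∈ B.link (insert F τ), u F * s G * B.N ts (insert G (insert F τ))
      - ∑ F ∈ B.link τ, u F * s F * ∑ G ∈ B.link (insert F τ),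
          B.bas (insert F τ) F G * B.N ts (insert G (insert F τ)) := by
    intro u s hs
    rw [← Finset.sum_sub_distrib]
    refine Finset.sum_congr rfl fun F hF => ?_
    rw [B.two_step h hc hs hF, Finset.mul_sum, Finset.mul_sum, ← Finset.sum_sub_distrib]
    refine Finset.sum_congr rfl fun G _ => ?_
    ring
  rw [key u s hs, key s u hu]
  congr 1
  · rw [B.sum_link_swap hτ]
    refine Finset.sum_congr rfl fun F hF => Finset.sum_congr rfl fun G _ => ?_
    rw [Finset.insert_comm]; ring
  · refine Finset.sum_congr rfl fun F hF => ?_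
    ring

theorem wd (ts : List (S → ℝ)) : B.WD ts := by
  induction ts with
  | nil =>
    intro τ hτ hc l hl hv
    simpa [N, link] using B.balanced τ hτ (by simpa using hc) l hl hv
  | cons s ts ih =>
    intro τ hτ hc l hl hv
    simp only [List.length_cons] at hc
    have h1 : ∀ F ∈ B.link τ, B.N (s :: ts) (insert F τ) = B.N (B.red τ s :: ts) (insert F τ) :=
      fun F hF => B.N_sub_lin_tail ih (B.face_of_mem_link hF)
        (by rw [B.card_of_mem_link hF]; omega) (B.red_sub_mem τ s)
    rw [Finset.sum_congr rfl (fun F hF => by rw [h1 F hF]),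
      B.sym_aux ih hτ (by omega) hv (fun F hF => B.red_vanish hτ s hF)]
    refine Finset.sum_eq_zero fun F hF => ?_
    have : B.N (l :: ts) (insert F τ) = B.N (0 :: ts) (insert F τ) :=
      B.N_sub_lin_tail ih (B.face_of_mem_link hF)
        (by rw [B.card_of_mem_link hF]; omega) (by simpa using hl)
    rw [this, N_cons]
    simp [red]

lemma N_eq {ts : List (S → ℝ)} {τ : Finset S} (hτ : B.Face τ)
    (hc : τ.card + ts.length + 1 = B.D) {t s : S → ℝ} (hts : t - s ∈ B.Lin)
    (hs : ∀ F ∈ τ, s F = 0) : B.N (t :: ts) τ = ∑ F ∈ B.link τ, s F * B.N ts (insert F τ) :=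
  B.N_eq_of_WD (B.wd ts) hτ hc hts hs

lemma N_vanish {ts : List (S → ℝ)} {τ : Finset S} (hτ : B.Face τ)
    (hc : τ.card + ts.length + 1 = B.D) {s : S → ℝ}
    (hs : ∀ F ∈ τ, s F = 0) : B.N (s :: ts) τ = ∑ F ∈ B.link τ, s F * B.N ts (insert F τ) :=
  B.N_eq hτ hc (by simp) hs

lemma N_congr {ts : List (S → ℝ)} {τ : Finset S} (hτ : B.Face τ)
    (hc : τ.card + ts.length + 1 = B.D) {t s : S → ℝ} (hts : t - s ∈ B.Lin) :
    B.N (t :: ts) τ = B.N (s :: ts) τ := B.N_sub_lin_tail (B.wd ts) hτ hc hts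

lemma N_swap {ts : List (S → ℝ)} {τ : Finset S} (hτ : B.Face τ)
    (hc : τ.card + ts.length + 2 = B.D) (s t : S → ℝ) :
    B.N (s :: t :: ts) τ = B.N (t :: s :: ts) τ := by
  rw [N_cons, B.N_cons t]
  have h1 : ∀ s, ∀ F ∈ B.link τ, B.N (s :: ts) (insert F τ) = B.N (B.red τ s :: ts) (insert F τ) :=
    fun s F hF => B.N_congr (B.face_of_mem_link hF)
      (by rw [B.card_of_mem_link hF]; omega) (B.red_sub_mem τ s)
  rw [Finset.sum_congr rfl (fun F hF => by rw [h1 t F hF]),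
    B.sym_aux (B.wd ts) hτ hc (fun F hF => B.red_vanish hτ s hF)
      (fun F hF => B.red_vanish hτ t hF)]
  exact Finset.sum_congr rfl (fun F hF => by rw [h1 s F hF])

lemma N_congr_second {ts : List (S → ℝ)} {τ : Finset S} (hτ : B.Face τ)
    (hc : τ.card + ts.length + 2 = B.D) (u : S → ℝ) {t s : S → ℝ} (hts : t - s ∈ B.Lin) :
    B.N (u :: t :: ts) τ = B.N (u :: s :: ts) τ := by
  rw [B.N_swap hτ hc, B.N_swap hτ hc u]
  exact B.N_congr hτ (by simp; omega) hts

lemma red_comb (τ : Finset S) (a b : ℝ) (s t : S → ℝ) (X : S) :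
    B.red τ (a • s + b • t) X = a * B.red τ s X + b * B.red τ t X := by
  simp only [red, Pi.add_apply, Pi.smul_apply, smul_eq_mul, add_mul, Finset.sum_add_distrib,
    mul_sub, Finset.mul_sum, mul_assoc]
  ring

lemma N_comb (τ : Finset S) (a b : ℝ) (s t : S → ℝ) (ts : List (S → ℝ)) :
    B.N ((a • s + b • t) :: ts) τ = a * B.N (s :: ts) τ + b * B.N (t :: ts) τ := by
  simp only [N_cons, red_comb, Finset.mul_sum, ← Finset.sum_add_distrib]
  refine Finset.sum_congr rfl fun F _ => ?_
  ring

/-- expansion of the quadratic form -/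
lemma N_quad {ts : List (S → ℝ)} {τ : Finset S} (hτ : B.Face τ)
    (hc : τ.card + ts.length + 2 = B.D) (a b : ℝ) (s t : S → ℝ) :
    B.N ((a • s + b • t) :: (a • s + b • t) :: ts) τ =
      a ^ 2 * B.N (s :: s :: ts) τ + 2 * a * b * B.N (s :: t :: ts) τ +
        b ^ 2 * B.N (t :: t :: ts) τ := by
  rw [N_comb, B.N_swap hτ hc s, B.N_swap hτ hc t, N_comb, N_comb, B.N_swap hτ hc t s]
  ring

lemma N_continuous {ι : Type*} [TopologicalSpace ι] (fs : List (ι → S → ℝ))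
    (hf : ∀ f ∈ fs, Continuous f) (τ : Finset S) :
    Continuous (fun x => B.N (fs.map (fun f => f x)) τ) := by
  induction fs generalizing τ with
  | nil => simpa [N] using continuous_const
  | cons f fs ih =>
    simp only [List.map_cons, N_cons, red]
    have h0 : ∀ X, Continuous (fun x => f x X) := fun X =>
      (continuous_apply X).comp (hf f (by simp))
    have h1 := fun τ => ih (fun g hg => hf g (by simp [hg])) τ
    fun_prop

end BFan

/-- Perron-Frobenius / Bochner type lemma. -/
lemma bochner_lemma {ι : Type*} [Fintype ι] [DecidableEq ι] (A : ι → ι → ℝ)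
    (hsym : ∀ i j, A i j = A j i) (hoff : ∀ i j, i ≠ j → 0 ≤ A i j)
    (c p : ι → ℝ) (hc : ∀ i, 0 < c i) (hp : ∀ i, 0 < p i)
    (hAc : ∀ i, ∑ j, A i j * c j = p i)
    (hconn : ∀ g : ι → ℝ, (∀ i j, i ≠ j → 0 < A i j → g i = g j) → ∀ i j, g i = g j)
    (hB : ∀ t : ι → ℝ, ∑ i, t i * ∑ j, A i j * t j ≤
      ∑ i, c i / p i * (∑ j, A i j * t j) ^ 2)
    (t : ι → ℝ) (ht : ∑ i, t i * p i = 0) : ∑ i, t i * ∑ j, A i j * t j ≤ 0 := by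
  -- weights
  set w : ι → ℝ := fun i => Real.sqrt (c i / p i) with hw
  have hw0 : ∀ i, 0 < w i := fun i => Real.sqrt_pos.2 (div_pos (hc i) (hp i))
  have hw2 : ∀ i, w i * w i = c i / p i := fun i =>
    Real.mul_self_sqrt (div_pos (hc i) (hp i)).le
  set M : Matrix ι ι ℝ := Matrix.of (fun i j => w i * A i j * w j) with hM
  have hH : M.IsHermitian := by
    ext i j; simp [hM, Matrix.conjTranspose_apply, hsym i j]; ring
  set v := hH.eigenvectorBasis
  set lam := hH.eigenvalues
  -- eigenvector equation
  have heig : ∀ k i, w i * ∑ j, A i j * (w j * v k j) = lam k * v k i := by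
    intro k i
    have := congrFun (hH.mulVec_eigenvectorBasis k) i
    simp only [Matrix.mulVec, dotProduct, hM, Matrix.of_apply] at this
    rw [Finset.mul_sum]
    refine Eq.trans (Finset.sum_congr rfl fun j _ => ?_) this
    show _ = _ * v k j
    ring
  have hnorm : ∀ k, ∑ i, v k i * v k i = 1 := by
    intro k
    have h := v.orthonormal.1 k
    have h2 : ‖v k‖ ^ 2 = 1 := by rw [h]; norm_num
    rw [EuclideanSpace.norm_sq_eq] at h2
    rw [← h2]
    refine Finset.sum_congr rfl fun i _ => ?_
    rw [Real.norm_eq_abs, sq_abs]; ring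
  have hquad : ∀ k, ∑ i, (w i * v k i) * ∑ j, A i j * (w j * v k j) = lam k := by
    intro k
    rw [← mul_one (lam k), ← hnorm k, Finset.mul_sum]
    refine Finset.sum_congr rfl fun i _ => ?_
    linear_combination v k i * heig k i
  have hquad2 : ∀ k, ∑ i, c i / p i * (∑ j, A i j * (w j * v k j)) ^ 2 = lam k ^ 2 := by
    intro k
    rw [← mul_one (lam k ^ 2), ← hnorm k, Finset.mul_sum]
    refine Finset.sum_congr rfl fun i _ => ?_
    have := heig k i
    rw [← hw2 i]
    linear_combination (w i * ∑ j, A i j * (w j * v k j) + lam k * v k i) * this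
  have hdich : ∀ k, lam k ≤ lam k ^ 2 := by
    intro k
    have := hB (fun i => w i * v k i)
    rwa [hquad, hquad2] at this
  -- Laplacian identity
  have hlap : ∀ x : ι → ℝ, ∑ i, p i / c i * x i ^ 2 - ∑ i, x i * ∑ j, A i j * x j =
      (1 / 2) * ∑ i, ∑ j, A i j * c i * c j * (x i / c i - x j / c j) ^ 2 := by
    intro x
    have e1 : ∑ i, ∑ j, A i j * c i * c j * (x i / c i - x j / c j) ^ 2 =
        ∑ i, ∑ j, A i j * c j * (x i ^ 2 / c i) + ∑ i, ∑ j, A i j * c i * (x j ^ 2 / c j)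
         - 2 * ∑ i, x i * ∑ j, A i j * x j := by
      rw [Finset.mul_sum, ← Finset.sum_add_distrib, ← Finset.sum_sub_distrib]
      refine Finset.sum_congr rfl fun i _ => ?_
      rw [Finset.mul_sum, Finset.mul_sum, ← Finset.sum_add_distrib, ← Finset.sum_sub_distrib]
      refine Finset.sum_congr rfl fun j _ => ?_
      have := (hc i).ne'
      have := (hc j).ne'
      field_simp
      ring
    have e2 : ∑ i, ∑ j, A i j * c j * (x i ^ 2 / c i) = ∑ i, p i / c i * x i ^ 2 := by
      refine Finset.sum_congr rfl fun i _ => ?_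
      rw [← Finset.sum_mul, hAc]; ring
    have e3 : ∑ i, ∑ j, A i j * c i * (x j ^ 2 / c j) = ∑ i, p i / c i * x i ^ 2 := by
      rw [Finset.sum_comm, ← e2]
      refine Finset.sum_congr rfl fun i _ => Finset.sum_congr rfl fun j _ => ?_
      rw [hsym]
    rw [e1, e2, e3]; ring
  have hterm : ∀ (x : ι → ℝ) i j, 0 ≤ A i j * c i * c j * (x i / c i - x j / c j) ^ 2 := by
    intro x i j
    by_cases h : i = j
    · subst h; simp
    · have := hoff i j h
      have := hc i
      have := hc j
      positivity
  have hpv : ∀ k, ∑ i, p i / c i * (w i * v k i) ^ 2 = 1 := by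
    intro k
    rw [← hnorm k]
    refine Finset.sum_congr rfl fun i _ => ?_
    have h1 := (hc i).ne'
    have h2 := (hp i).ne'
    have : (w i * v k i) ^ 2 = (c i / p i) * v k i ^ 2 := by rw [← hw2]; ring
    rw [this]; field_simp
  have hle : ∀ k, lam k ≤ 1 := by
    intro k
    have h1 := hlap (fun i => w i * v k i)
    simp only [hpv] at h1
    rw [hquad] at h1
    have : 0 ≤ ∑ i, ∑ j, A i j * c i * c j * (w i * v k i / c i - w j * v k j / c j) ^ 2 :=
      Finset.sum_nonneg fun i _ => Finset.sum_nonneg fun j _ => hterm (fun i => w i * v k i) i j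
    linarith
  have hone : ∀ k, lam k = 1 → ∀ i j, w i * v k i / c i = w j * v k j / c j := by
    intro k hk
    have h1 := hlap (fun i => w i * v k i)
    simp only [hpv] at h1
    rw [hquad, hk] at h1
    have h2 : ∑ i, ∑ j, A i j * c i * c j * (w i * v k i / c i - w j * v k j / c j) ^ 2 = 0 := by
      linarith
    have h3 : ∀ i j, A i j * c i * c j * (w i * v k i / c i - w j * v k j / c j) ^ 2 = 0 := by
      intro i j
      have h4 := (Finset.sum_eq_zero_iff_of_nonneg (fun i _ => Finset.sum_nonneg
        fun j _ => hterm (fun i => w i * v k i) i j)).1 h2 i (Finset.mem_univ _)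
      exact (Finset.sum_eq_zero_iff_of_nonneg
        (fun j _ => hterm (fun i => w i * v k i) i j)).1 h4 j (Finset.mem_univ _)
    apply hconn (fun i => w i * v k i / c i)
    intro i j _ hA
    have h5 := h3 i j
    have h6 : A i j * c i * c j ≠ 0 := by
      have := hc i
      have := hc j
      positivity
    have h7 := (mul_eq_zero.1 h5).resolve_left h6
    have := pow_eq_zero_iff (two_ne_zero) |>.1 h7
    linarith
  -- expand `t / w` in eigenbasis
  set y : EuclideanSpace ℝ ι := WithLp.toLp 2 (fun i => t i / w i) with hy
  set a : ι → ℝ := fun k => inner ℝ (v k) y with ha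
  have hexp : ∀ i, t i / w i = ∑ k, a k * v k i := by
    intro i
    have := congrArg (fun z : EuclideanSpace ℝ ι => z i) (v.sum_repr' y)
    simp only [hy] at this
    rw [← this]
    simp [ha, hy]
  have ha' : ∀ k, a k = ∑ i, v k i * (t i / w i) := by
    intro k
    simp [ha, hy, PiLp.inner_apply, mul_comm]
  have hmain : ∑ i, t i * ∑ j, A i j * t j = ∑ k, lam k * a k ^ 2 := by
    have ht' : ∀ i, t i = w i * ∑ k, a k * v k i := by
      intro i; rw [← hexp]; field_simp [(hw0 i).ne']
    have h1 : ∀ i, ∑ j, A i j * t j = ∑ k, a k * ∑ j, A i j * (w j * v k j) := by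
      intro i
      simp only [Finset.mul_sum]
      rw [Finset.sum_comm]
      refine Finset.sum_congr rfl fun j _ => ?_
      rw [ht' j, Finset.mul_sum, Finset.mul_sum]
      refine Finset.sum_congr rfl fun k _ => ?_
      ring
    have h2 : ∀ i, t i * ∑ j, A i j * t j = ∑ k, a k * (t i / w i) * (lam k * v k i) := by
      intro i
      rw [h1, Finset.mul_sum]
      refine Finset.sum_congr rfl fun k _ => ?_
      rw [← heig]
      field_simp [(hw0 i).ne']
    rw [Finset.sum_congr rfl (fun i _ => h2 i), Finset.sum_comm]
    refine Finset.sum_congr rfl fun k _ => ?_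
    have h3 : lam k * a k ^ 2 = lam k * a k * ∑ i, v k i * (t i / w i) := by
      rw [← ha' k]; ring
    rw [h3, Finset.mul_sum]
    refine Finset.sum_congr rfl fun i _ => ?_
    ring
  rw [hmain]
  refine Finset.sum_nonpos fun k _ => ?_
  by_cases hk : lam k = 1
  · have hak : a k = 0 := by
      rw [ha']
      rcases isEmpty_or_nonempty ι with hι | ⟨⟨i0⟩⟩
      · simp
      have h1 := hone k hk
      have h2 : ∀ i, v k i * (t i / w i) = (w i0 * v k i0 / c i0) * (t i * p i) := by
        intro i
        rw [← h1 i i0]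
        have h3 := (hw0 i).ne'
        have h4 := (hc i).ne'
        have h5 := (hp i).ne'
        have h6 : w i ^ 2 = c i / p i := by rw [← hw2]; ring
        field_simp
        rw [h6]; field_simp
      rw [Finset.sum_congr rfl (fun i _ => h2 i), ← Finset.mul_sum, ht, mul_zero]
    simp [hak]
  · have h1 := hdich k
    have h2 := lt_of_le_of_ne (hle k) hk
    have : lam k ≤ 0 := by
      by_contra h
      push Not at h
      nlinarith
    exact mul_nonpos_of_nonpos_of_nonneg this (sq_nonneg _)

lemma reverse_cs {a b c x y : ℝ} (h : y ^ 2 * a - 2 * y * x * b + x ^ 2 * c ≤ 0)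
    (hc : 0 < c) (hy : y ≠ 0) : a * c ≤ b ^ 2 := by
  have hy2 : 0 < y ^ 2 := by positivity
  have h1 : y ^ 2 * (a * c - b ^ 2) ≤ 0 := by
    nlinarith [sq_nonneg (x * c - y * b), mul_le_mul_of_nonneg_right h hc.le]
  nlinarith

namespace BFan

open scoped Classical

variable {S : Type*} [Fintype S] [DecidableEq S] (B : BFan S)

lemma red_sub_mem' (τ : Finset S) (t : S → ℝ) : B.red τ t - t ∈ B.Lin := by
  have := B.Lin.neg_mem (B.red_sub_mem τ t)
  simpa using this

lemma N_pos (K : Set (S → ℝ))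
    (hK : ∀ t ∈ K, ∀ τ, B.Face τ → ∃ c : S → ℝ, t - c ∈ B.Lin ∧ (∀ F ∈ τ, c F = 0) ∧
      ∀ F ∈ B.link τ, 0 < c F)
    (hne : ∀ τ, B.Face τ → τ.card < B.D → (B.link τ).Nonempty)
    (ts : List (S → ℝ)) (hts : ∀ t ∈ ts, t ∈ K) (τ : Finset S) (hτ : B.Face τ)
    (hc : τ.card + ts.length = B.D) : 0 < B.N ts τ := by
  induction ts generalizing τ with
  | nil => simp [N]
  | cons t ts ih =>
    simp only [List.length_cons] at hc
    obtain ⟨c, h1, h2, h3⟩ := hK t (hts t (by simp)) τ hτ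
    rw [B.N_eq hτ (by omega) h1 h2]
    refine Finset.sum_pos (fun F hF => mul_pos (h3 F hF) ?_) (hne τ hτ (by omega))
    exact ih (fun t ht => hts t (by simp [ht])) _ (B.face_of_mem_link hF)
      (by rw [B.card_of_mem_link hF]; omega)

theorem hodge_riemann (K : Set (S → ℝ))
    (hK : ∀ t ∈ K, ∀ τ, B.Face τ → ∃ c : S → ℝ, t - c ∈ B.Lin ∧ (∀ F ∈ τ, c F = 0) ∧
      ∀ F ∈ B.link τ, 0 < c F)
    (hne : ∀ τ, B.Face τ → τ.card < B.D → (B.link τ).Nonempty)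
    (hconn : ∀ τ, B.Face τ → τ.card + 3 ≤ B.D → ∀ g : S → ℝ,
      (∀ F ∈ B.link τ, ∀ G ∈ B.link (insert F τ), g F = g G) →
      ∀ F ∈ B.link τ, ∀ G ∈ B.link τ, g F = g G)
    (hbase : ∀ τ, B.Face τ → τ.card + 2 = B.D → ∀ s, ∀ f ∈ K,
      B.N [s, s] τ * B.N [f, f] τ ≤ B.N [s, f] τ ^ 2)
    (ts : List (S → ℝ)) (hts : ∀ t ∈ ts, t ∈ K) (τ : Finset S) (hτ : B.Face τ)
    (hc : τ.card + ts.length + 2 = B.D) (s f : S → ℝ) (hf : f ∈ K) :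
    B.N (s :: s :: ts) τ * B.N (f :: f :: ts) τ ≤ B.N (s :: f :: ts) τ ^ 2 := by
  induction ts generalizing τ s f with
  | nil => exact hbase τ hτ (by simpa using hc) s f hf
  | cons φ ts ih =>
    simp only [List.length_cons] at hc
    have hφ : φ ∈ K := hts φ (by simp)
    have hts' : ∀ t ∈ ts, t ∈ K := fun t ht => hts t (by simp [ht])
    obtain ⟨c, hc1, hc2, hc3⟩ := hK φ hφ τ hτ
    have hfl : ∀ F ∈ B.link τ, B.Face (insert F τ) := fun F hF => B.face_of_mem_link hF
    have hcard : ∀ F ∈ B.link τ, (insert F τ).card = τ.card + 1 :=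
      fun F hF => B.card_of_mem_link hF
    let δ : S → S → ℝ := fun F => Pi.single F 1
    have hδ : ∀ F ∉ τ, ∀ G ∈ τ, δ F G = 0 := by
      intro F hF G hG
      simp only [δ]; rw [Pi.single_eq_of_ne]; rintro rfl; exact hF hG
    let A : S → S → ℝ := fun F G => B.N (δ F :: φ :: ts) (insert G τ)
    -- the action of A
    have hsum : ∀ (F : S) (x : S → ℝ), ∑ X ∈ B.link τ, δ F X * x X =
        if F ∈ B.link τ then x F else 0 := by
      intro F x
      have : ∀ X, δ F X * x X = if F = X then x X else 0 := by
        intro X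
        by_cases h : F = X
        · subst h; simp only [δ, Pi.single_eq_same, one_mul, if_true]
        · simp only [δ]; rw [Pi.single_eq_of_ne (Ne.symm h), if_neg h, zero_mul]
      simp only [this, Finset.sum_ite_eq]
    have hA1 : ∀ F ∈ B.link τ, ∀ x : List (S → ℝ), τ.card + x.length + 1 = B.D →
        B.N (δ F :: x) τ = B.N x (insert F τ) := by
      intro F hF x hx
      rw [B.N_vanish hτ hx (hδ F (B.mem_link.1 hF).1), hsum, if_pos hF]
    have hAt : ∀ F ∈ B.link τ, ∀ t : S → ℝ, (∀ X ∈ τ, t X = 0) →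
        ∑ G ∈ B.link τ, A F G * t G = B.N (t :: φ :: ts) (insert F τ) := by
      intro F hF t ht
      rw [← hA1 F hF _ (by simp; omega), B.N_swap hτ (by simp; omega),
        B.N_vanish hτ (by simp; omega) ht]
      exact Finset.sum_congr rfl fun G _ => mul_comm _ _
    have hAsym : ∀ F ∈ B.link τ, ∀ G ∈ B.link τ, A F G = A G F := by
      intro F hF G hG
      simp only [A]
      rw [← hA1 F hF _ (by simp; omega), ← hA1 G hG _ (by simp; omega),
        B.N_swap hτ (by simp; omega)]
    have hAoff : ∀ F ∈ B.link τ, ∀ G ∈ B.link τ, F ≠ G → A F G =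
        if F ∈ B.link (insert G τ) then B.N (φ :: ts) (insert F (insert G τ)) else 0 := by
      intro F hF G hG hFG
      simp only [A]
      rw [B.N_vanish (hfl G hG) (by simp [hcard G hG]; omega)
        (hδ F |> fun h => by
          intro X hX
          rcases Finset.mem_insert.1 hX with rfl | hX
          · simp only [δ]; rw [Pi.single_eq_of_ne hFG.symm]
          · exact h (B.mem_link.1 hF).1 X hX)]
      have : ∀ X, δ F X * B.N (φ :: ts) (insert X (insert G τ)) =
          if F = X then B.N (φ :: ts) (insert X (insert G τ)) else 0 := by
        intro X
        by_cases h : F = X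
        · subst h; simp only [δ, Pi.single_eq_same, one_mul, if_true]
        · simp only [δ]; rw [Pi.single_eq_of_ne (Ne.symm h), if_neg h, zero_mul]
      simp only [this, Finset.sum_ite_eq]
    have hpos2 : ∀ F G, G ∈ B.link τ → F ∈ B.link (insert G τ) →
        0 < B.N (φ :: ts) (insert F (insert G τ)) := by
      intro F G hG hF
      refine B.N_pos K hK hne _ hts _ (B.face_of_mem_link hF) ?_
      rw [B.card_of_mem_link hF, hcard G hG]; simp; omega
    let p : S → ℝ := fun F => B.N (φ :: φ :: ts) (insert F τ)
    have hp : ∀ F ∈ B.link τ, 0 < p F := fun F hF =>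
      B.N_pos K hK hne _ (by simpa using ⟨hφ, hts'⟩) _ (hfl F hF)
        (by simp [hcard F hF]; omega)
    have hAc : ∀ F ∈ B.link τ, ∑ G ∈ B.link τ, A F G * c G = p F := by
      intro F hF
      rw [hAt F hF c hc2]
      exact (B.N_congr (hfl F hF) (by simp [hcard F hF]; omega) hc1).symm
    have hkey : ∀ t : S → ℝ, (∀ X ∈ τ, t X = 0) →
        ∑ F ∈ B.link τ, t F * ∑ G ∈ B.link τ, A F G * t G ≤
          ∑ F ∈ B.link τ, c F / p F * (∑ G ∈ B.link τ, A F G * t G) ^ 2 := by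
      intro t ht
      have e1 : ∑ F ∈ B.link τ, t F * ∑ G ∈ B.link τ, A F G * t G =
          ∑ F ∈ B.link τ, c F * B.N (t :: t :: ts) (insert F τ) := by
        rw [← B.N_eq hτ (by simp; omega) hc1 hc2]
        rw [B.N_swap hτ (by simp; omega), B.N_vanish hτ (by simp; omega) ht]
        refine Finset.sum_congr rfl fun F hF => ?_
        rw [hAt F hF t ht, B.N_swap (hfl F hF) (by simp [hcard F hF]; omega)]
      rw [e1]
      refine Finset.sum_le_sum fun F hF => ?_
      have h1 := ih hts' _ (hfl F hF) (by rw [hcard F hF]; omega) t φ hφ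
      rw [hAt F hF t ht]
      have h2 := hp F hF
      have h3 := hc3 F hF
      rw [div_mul_eq_mul_div, le_div_iff₀ h2, mul_assoc]
      exact mul_le_mul_of_nonneg_left h1 h3.le
    have hneg : ∀ t : S → ℝ, (∀ X ∈ τ, t X = 0) →
        B.N (t :: φ :: φ :: ts) τ = 0 → B.N (t :: t :: φ :: ts) τ ≤ 0 := by
      intro t ht h0
      rw [B.N_vanish hτ (by simp; omega) ht] at h0 ⊢
      have h1 : ∑ F ∈ B.link τ, t F * B.N (t :: φ :: ts) (insert F τ) =
          ∑ F ∈ B.link τ, t F * ∑ G ∈ B.link τ, A F G * t G :=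
        Finset.sum_congr rfl fun F hF => by rw [hAt F hF t ht]
      rw [h1]
      have conv : ∀ x : S → ℝ, ∑ F ∈ B.link τ, x F = ∑ F : {F // F ∈ B.link τ}, x F :=
        fun x => (Finset.sum_coe_sort (B.link τ) x).symm
      have := bochner_lemma (ι := {F // F ∈ B.link τ}) (fun F G => A F G)
        (fun F G => hAsym F F.2 G G.2)
        (fun F G hFG => by
          rw [hAoff F F.2 G G.2 (fun h => hFG (Subtype.ext h))]
          split_ifs with h
          · exact (hpos2 F G G.2 h).le
          · exact le_rfl)
        (fun F => c F) (fun F => p F) (fun F => hc3 F F.2) (fun F => hp F F.2)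
        (fun F => by rw [← hAc F F.2, conv])
        (by
          intro g hg F G
          let g' : S → ℝ := fun X => if h : X ∈ B.link τ then g ⟨X, h⟩ else 0
          have hg' : ∀ X : {F // F ∈ B.link τ}, g' X = g X := fun X => by simp [g', X.2]
          rw [← hg' F, ← hg' G]
          refine hconn τ hτ (by omega) g' ?_ F F.2 G G.2
          intro X hX Y hY
          have hs := B.link_swap hτ hX hY
          have hXY : X ≠ Y := by
            rintro rfl; exact (B.mem_link.1 hY).1 (Finset.mem_insert_self _ _)
          have := hg ⟨X, hX⟩ ⟨Y, hs.1⟩ (fun h => hXY (congrArg Subtype.val h)) (by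
            show 0 < A X Y
            rw [hAoff X hX Y hs.1 hXY, if_pos hs.2]
            exact hpos2 _ _ hs.1 hs.2)
          rw [← hg', ← hg'] at this
          exact this)
        (by
          intro t'
          let t : S → ℝ := fun X => if h : X ∈ B.link τ then t' ⟨X, h⟩ else 0
          have ht' : ∀ X : {F // F ∈ B.link τ}, t X = t' X := fun X => by simp [t, X.2]
          have := hkey t (fun X hX => by
            simp only [t]; rw [dif_neg]; intro h; exact (B.mem_link.1 h).1 hX)
          simpa only [conv, ht'] using this)
        (fun F => t F) (by rw [← h0, conv])
      simpa only [conv] using this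
    -- conclusion
    have hneg' : ∀ t : S → ℝ,
        B.N (t :: φ :: φ :: ts) τ = 0 → B.N (t :: t :: φ :: ts) τ ≤ 0 := by
      intro t h0
      have hm := B.red_sub_mem τ t
      rw [B.N_congr hτ (by simp; omega) hm] at h0 ⊢
      rw [B.N_congr_second hτ (by simp; omega) _ hm]
      exact hneg _ (fun X hX => B.red_vanish hτ t hX) h0
    have hcc : τ.card + (φ :: ts).length + 2 = B.D := by simp; omega
    have hTf : 0 < B.N (f :: φ :: φ :: ts) τ :=
      B.N_pos K hK hne _ (by simpa using ⟨hf, hφ, hts'⟩) _ hτ (by simp; omega)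
    have hQf : 0 < B.N (f :: f :: φ :: ts) τ :=
      B.N_pos K hK hne _ (by simpa using ⟨hf, hφ, hts'⟩) _ hτ (by simp; omega)
    refine reverse_cs (x := B.N (s :: φ :: φ :: ts) τ) (y := B.N (f :: φ :: φ :: ts) τ) ?_
      hQf hTf.ne'
    have := hneg' (B.N (f :: φ :: φ :: ts) τ • s + (-B.N (s :: φ :: φ :: ts) τ) • f)
      (by rw [N_comb]; ring)
    rw [B.N_quad hτ hcc] at this
    linarith

end BFan

set_option linter.unusedSectionVars false

/-- The flats of a loopless matroid with their rank function. -/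
structure FlatSys (E : Type*) [Fintype E] [DecidableEq E] where
  flat : Finset E → Prop
  rk : Finset E → ℕ
  flat_empty : flat ∅
  flat_univ : flat Finset.univ
  rk_empty : rk ∅ = 0
  rk_lt : ∀ F H, flat F → flat H → F ⊂ H → rk F < rk H
  cover : ∀ F i, flat F → i ∉ F → ∃ F', flat F' ∧ F ⊆ F' ∧ i ∈ F' ∧ rk F' = rk F + 1 ∧
    ∀ H, flat H → F ⊆ H → i ∈ H → F' ⊆ H

namespace FlatSys

open scoped Classical

variable {E : Type*} [Fintype E] [DecidableEq E] (M : FlatSys E)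

/-- Total rank. -/
def r : ℕ := M.rk Finset.univ

/-- Chains of flats containing the empty set and the ground set. -/
def Face (τ : Finset (Finset E)) : Prop :=
  (∀ X ∈ τ, M.flat X) ∧ (∀ X ∈ τ, ∀ Y ∈ τ, X ⊆ Y ∨ Y ⊆ X) ∧ ∅ ∈ τ ∧ Finset.univ ∈ τ

lemma rk_le {F H : Finset E} (hF : M.flat F) (hH : M.flat H) (h : F ⊆ H) : M.rk F ≤ M.rk H := by
  rcases h.eq_or_ssubset with rfl | h
  · exact le_rfl
  · exact (M.rk_lt F H hF hH h).le

lemma eq_of_rk {F H : Finset E} (hF : M.flat F) (hH : M.flat H) (h : F ⊆ H)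
    (hr : M.rk H ≤ M.rk F) : F = H := by
  rcases h.eq_or_ssubset with rfl | h
  · rfl
  · have := M.rk_lt F H hF hH h; omega

lemma rk_le_r {F : Finset E} (hF : M.flat F) : M.rk F ≤ M.r :=
  M.rk_le hF M.flat_univ (Finset.subset_univ _)

/-- Two flats of rank `rk G + 1` over `G` sharing an extra element agree. -/
lemma cover_unique {G F F' : Finset E} (hG : M.flat G) (hF : M.flat F) (hF' : M.flat F')
    (h : G ⊆ F) (h' : G ⊆ F') (hr : M.rk F = M.rk G + 1) (hr' : M.rk F' = M.rk G + 1)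
    {i : E} (hi : i ∉ G) (hiF : i ∈ F) (hiF' : i ∈ F') : F = F' := by
  obtain ⟨C, c1, c2, c3, c4, c5⟩ := M.cover G i hG hi
  have e1 := M.eq_of_rk c1 hF (c5 F hF h hiF) (by omega)
  have e2 := M.eq_of_rk c1 hF' (c5 F' hF' h' hiF') (by omega)
  exact e1.symm.trans e2

lemma exists_between {G H : Finset E} (hG : M.flat G) (hH : M.flat H) (h : G ⊆ H) (a : ℕ)
    (ha : M.rk G ≤ a) (ha' : a ≤ M.rk H) : ∃ F, M.flat F ∧ G ⊆ F ∧ F ⊆ H ∧ M.rk F = a := by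
  induction a, ha using Nat.le_induction with
  | base => exact ⟨G, hG, subset_rfl, h, rfl⟩
  | succ a ha ih =>
    obtain ⟨F, f1, f2, f3, f4⟩ := ih (by omega)
    have hne : F ≠ H := by rintro rfl; omega
    obtain ⟨i, hi, hi'⟩ := Finset.exists_of_ssubset (Finset.ssubset_iff_subset_ne.2 ⟨f3, hne⟩)
    obtain ⟨C, c1, c2, c3, c4, c5⟩ := M.cover F i f1 hi'
    exact ⟨C, c1, f2.trans c2, c5 H hH f3 hi, by omega⟩

section face

variable {M}
variable {τ : Finset (Finset E)}

lemma Face.rk_inj (hτ : M.Face τ) {X Y : Finset E} (hX : X ∈ τ) (hY : Y ∈ τ)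
    (h : M.rk X = M.rk Y) : X = Y := by
  rcases hτ.2.1 X hX Y hY with h1 | h1
  · exact M.eq_of_rk (hτ.1 X hX) (hτ.1 Y hY) h1 h.ge
  · exact (M.eq_of_rk (hτ.1 Y hY) (hτ.1 X hX) h1 h.le).symm

lemma Face.card_image (hτ : M.Face τ) : (τ.image M.rk).card = τ.card :=
  Finset.card_image_of_injOn fun _ hX _ hY h => hτ.rk_inj hX hY h

lemma Face.image_subset (hτ : M.Face τ) : τ.image M.rk ⊆ Finset.range (M.r + 1) := by
  intro a ha
  obtain ⟨X, hX, rfl⟩ := Finset.mem_image.1 ha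
  have := M.rk_le_r (hτ.1 X hX)
  simp; omega

lemma Face.gap (hτ : M.Face τ) {a : ℕ} (ha : a ≤ M.r) (hn : ∀ X ∈ τ, M.rk X ≠ a) :
    ∃ G ∈ τ, ∃ H ∈ τ, G ⊆ H ∧ M.rk G < a ∧ a < M.rk H ∧ ∀ X ∈ τ, X ⊆ G ∨ H ⊆ X := by
  have h0 : (∅ : Finset E) ∈ τ.filter (fun X => M.rk X < a) := by
    have := hn ∅ hτ.2.2.1
    rw [M.rk_empty] at this
    simp [hτ.2.2.1, M.rk_empty]; omega
  have h1 : (Finset.univ : Finset E) ∈ τ.filter (fun X => a < M.rk X) := by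
    have := hn _ hτ.2.2.2
    simp only [Finset.mem_filter, hτ.2.2.2, true_and]
    change M.r ≠ a at this
    change a < M.r
    omega
  obtain ⟨G, hG, hGm⟩ := Finset.exists_max_image _ M.rk ⟨_, h0⟩
  obtain ⟨H, hH, hHm⟩ := Finset.exists_min_image _ M.rk ⟨_, h1⟩
  rw [Finset.mem_filter] at hG hH
  refine ⟨G, hG.1, H, hH.1, ?_, hG.2, hH.2, ?_⟩
  · rcases hτ.2.1 G hG.1 H hH.1 with h | h
    · exact h
    · have := M.rk_le (hτ.1 H hH.1) (hτ.1 G hG.1) h; omega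
  · intro X hX
    rcases lt_or_gt_of_ne (hn X hX) with h | h
    · left
      have h2 := hGm X (by simp [hX, h])
      rcases hτ.2.1 X hX G hG.1 with h3 | h3
      · exact h3
      · rw [M.eq_of_rk (hτ.1 G hG.1) (hτ.1 X hX) h3 h2]
    · right
      have h2 := hHm X (by simp [hX, h])
      rcases hτ.2.1 H hH.1 X hX with h3 | h3
      · exact h3
      · rw [M.eq_of_rk (hτ.1 X hX) (hτ.1 H hH.1) h3 h2]

lemma face_insert (hτ : M.Face τ) {F : Finset E} (hF : M.flat F)
    (hc : ∀ X ∈ τ, X ⊆ F ∨ F ⊆ X) : M.Face (insert F τ) := by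
  refine ⟨?_, ?_, Finset.mem_insert_of_mem hτ.2.2.1, Finset.mem_insert_of_mem hτ.2.2.2⟩
  · intro X hX
    rcases Finset.mem_insert.1 hX with rfl | hX
    · exact hF
    · exact hτ.1 X hX
  · intro X hX Y hY
    rcases Finset.mem_insert.1 hX with hX' | hX' <;> rcases Finset.mem_insert.1 hY with hY' | hY'
    · rw [hX', hY']; exact Or.inl subset_rfl
    · rw [hX']; exact (hc Y hY').symm
    · rw [hY']; exact hc X hX'
    · exact hτ.2.1 X hX' Y hY'

lemma face_insert_iff (hτ : M.Face τ) {F : Finset E} :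
    M.Face (insert F τ) ↔ M.flat F ∧ ∀ X ∈ τ, X ⊆ F ∨ F ⊆ X := by
  constructor
  · intro h
    exact ⟨h.1 F (Finset.mem_insert_self _ _), fun X hX =>
      h.2.1 X (Finset.mem_insert_of_mem hX) F (Finset.mem_insert_self _ _)⟩
  · rintro ⟨h1, h2⟩; exact face_insert hτ h1 h2

end face

/-- Induction over chains containing the empty set. -/
lemma chain_induction {P : Finset (Finset E) → Prop} (h0 : P {∅})
    (h1 : ∀ (τ : Finset (Finset E)) (L T : Finset E), L ∈ τ → (∀ X ∈ τ, X ⊆ L) → L ⊂ T →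
      P τ → P (insert T τ))
    (τ : Finset (Finset E)) (hτ : ∀ X ∈ τ, ∀ Y ∈ τ, X ⊆ Y ∨ Y ⊆ X) (he : ∅ ∈ τ) : P τ := by
  induction hn : τ.card using Nat.strong_induction_on generalizing τ with
  | _ n ih =>
    obtain ⟨T, hT, hTm⟩ := Finset.exists_max_image τ Finset.card ⟨_, he⟩
    have hTop : ∀ X ∈ τ, X ⊆ T := by
      intro X hX
      rcases hτ X hX T hT with h | h
      · exact h
      · rw [Finset.eq_of_subset_of_card_le h (hTm X hX)]
    by_cases hTe : T = ∅
    · have : τ = {∅} := by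
        ext X
        simp only [Finset.mem_singleton]
        constructor
        · intro hX
          have := hTop X hX
          rw [hTe] at this
          exact Finset.subset_empty.1 this
        · rintro rfl; exact he
      rw [this]; exact h0
    · set σ := τ.erase T with hσ
      have heσ : ∅ ∈ σ := by simp [hσ, he, Ne.symm hTe]
      have hsub : ∀ X ∈ σ, X ∈ τ := fun X hX => Finset.mem_of_mem_erase hX
      obtain ⟨L, hL, hLm⟩ := Finset.exists_max_image σ Finset.card ⟨_, heσ⟩
      have hLtop : ∀ X ∈ σ, X ⊆ L := by
        intro X hX
        rcases hτ X (hsub X hX) L (hsub L hL) with h | h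
        · exact h
        · rw [Finset.eq_of_subset_of_card_le h (hLm X hX)]
      have hLT : L ⊂ T := Finset.ssubset_iff_subset_ne.2
        ⟨hTop L (hsub L hL), Finset.ne_of_mem_erase hL⟩
      have := h1 σ L T hL hLtop hLT (ih σ.card (by
        rw [← hn]; exact Finset.card_erase_lt_of_mem hT) σ
        (fun X hX Y hY => hτ X (hsub X hX) Y (hsub Y hY)) heσ rfl)
      rwa [hσ, Finset.insert_erase hT] at this

/-- Affine functions. -/
def aff (a : ℝ) (c : E → ℝ) : Finset E → ℝ := fun F => a + ∑ i ∈ F, c i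

variable (E) in
/-- The lineality space of affine functions. -/
def affLin : Submodule ℝ (Finset E → ℝ) where
  carrier := {t | ∃ a c, t = aff a c}
  zero_mem' := ⟨0, 0, by ext; simp [aff]⟩
  add_mem' := by
    rintro _ _ ⟨a, c, rfl⟩ ⟨b, d, rfl⟩
    exact ⟨a + b, c + d, by ext; simp [aff, Finset.sum_add_distrib]; ring⟩
  smul_mem' := by
    rintro x _ ⟨a, c, rfl⟩
    exact ⟨x * a, x • c, by ext; simp [aff, Finset.mul_sum, mul_add]⟩

lemma aff_mem (a : ℝ) (c : E → ℝ) : aff a c ∈ affLin E := ⟨a, c, rfl⟩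

lemma aff_congr {a : ℝ} {c d : E → ℝ} {F : Finset E} (h : ∀ i ∈ F, c i = d i) :
    aff a c F = aff a d F := by
  simp only [aff]; rw [Finset.sum_congr rfl h]

lemma aff_sub {a : ℝ} {c : E → ℝ} {F G : Finset E} (h : F ⊆ G) :
    aff a c G = aff a c F + ∑ i ∈ G \ F, c i := by
  simp only [aff]; rw [← Finset.sum_sdiff h]; ring

/-- extend an affine function from `L` to a larger set with a constant slope -/
lemma interp_chain (t : Finset E → ℝ) (τ : Finset (Finset E))
    (hτ : ∀ X ∈ τ, ∀ Y ∈ τ, X ⊆ Y ∨ Y ⊆ X) (he : ∅ ∈ τ) :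
    ∃ l ∈ affLin E, ∀ F ∈ τ, l F = t F := by
  revert τ
  refine chain_induction (P := fun τ => ∃ l ∈ affLin E, ∀ F ∈ τ, l F = t F) ?_ ?_
  · exact ⟨aff (t ∅) 0, aff_mem _ _, by simp [aff]⟩
  · rintro τ L T hL hLm hLT ⟨_, ⟨a, c, rfl⟩, h⟩
    set x : ℝ := (t T - t L) / (T \ L).card with hx
    have hcard : ((T \ L).card : ℝ) ≠ 0 := by
      have : (T \ L).Nonempty := Finset.sdiff_nonempty.2 hLT.2
      exact_mod_cast this.card_pos.ne'
    set d : E → ℝ := fun i => if i ∈ L then c i else x with hd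
    have hin : ∀ F ⊆ L, aff a d F = aff a c F := fun F hF =>
      aff_congr fun i hi => by simp [hd, hF hi]
    refine ⟨aff a d, aff_mem _ _, ?_⟩
    intro F hF
    rcases Finset.mem_insert.1 hF with rfl | hF
    · rw [aff_sub hLT.1, hin L subset_rfl, h L hL, Finset.sum_congr rfl (g := fun _ => x)
        (fun i hi => by simp [hd, (Finset.mem_sdiff.1 hi).2])]
      simp only [Finset.sum_const, nsmul_eq_mul, hx]
      field_simp
      ring
    · rw [hin F (hLm F hF), h F hF]

/-- strictly concave functions of the cardinality -/
def Kset (E : Type*) [Fintype E] : Set (Finset E → ℝ) :=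
  {t | ∃ φ : ℕ → ℝ, (∀ F, t F = φ F.card) ∧ ∀ a b c : ℕ, a < b → b < c → c ≤ Fintype.card E →
    ((c : ℝ) - b) * φ a + ((b : ℝ) - a) * φ c < ((c : ℝ) - a) * φ b}

lemma interp_pos {t : Finset E → ℝ} (ht : t ∈ Kset E) (τ : Finset (Finset E))
    (hτ : ∀ X ∈ τ, ∀ Y ∈ τ, X ⊆ Y ∨ Y ⊆ X) (he : ∅ ∈ τ) :
    ∃ l ∈ affLin E, (∀ F ∈ τ, l F = t F) ∧
      ∀ F, F ∉ τ → (∀ X ∈ τ, X ⊆ F ∨ F ⊆ X) → (∃ X ∈ τ, F ⊆ X) → l F < t F := by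
  obtain ⟨φ, hφ, hconc⟩ := ht
  revert τ
  refine chain_induction (P := fun τ => ∃ l ∈ affLin E, (∀ F ∈ τ, l F = t F) ∧
      ∀ F, F ∉ τ → (∀ X ∈ τ, X ⊆ F ∨ F ⊆ X) → (∃ X ∈ τ, F ⊆ X) → l F < t F) ?_ ?_
  · refine ⟨aff (t ∅) 0, aff_mem _ _, by simp [aff], ?_⟩
    intro F hF _ h
    simp only [Finset.mem_singleton, exists_eq_left, Finset.subset_empty] at hF h
    exact absurd h hF
  · rintro τ L T hL hLm hLT ⟨_, ⟨a, c, rfl⟩, h, hlt⟩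
    set x : ℝ := (t T - t L) / (T \ L).card with hx
    have hcard : 0 < ((T \ L).card : ℝ) := by
      have : (T \ L).Nonempty := Finset.sdiff_nonempty.2 hLT.2
      exact_mod_cast this.card_pos
    set d : E → ℝ := fun i => if i ∈ L then c i else x with hd
    have hin : ∀ F ⊆ L, aff a d F = aff a c F := fun F hF =>
      aff_congr fun i hi => by simp [hd, hF hi]
    have hout : ∀ F, L ⊆ F → aff a d F = t L + (F \ L).card * x := by
      intro F hF
      rw [aff_sub hF, hin L subset_rfl, h L hL, Finset.sum_congr rfl (g := fun _ => x)
        (fun i hi => by simp [hd, (Finset.mem_sdiff.1 hi).2])]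
      simp only [Finset.sum_const, nsmul_eq_mul]
    refine ⟨aff a d, aff_mem _ _, ?_, ?_⟩
    · intro F hF
      rcases Finset.mem_insert.1 hF with rfl | hF
      · rw [hout _ hLT.1, hx]
        field_simp
        ring
      · rw [hin F (hLm F hF), h F hF]
    · intro F hF hcomp hX
      have hF1 : F ≠ T := fun h => hF (by simp [h])
      have hF2 : F ∉ τ := fun h => hF (by simp [h])
      rcases hcomp L (by simp [hL]) with hLF | hFL
      · have hFT : F ⊆ T := by
          obtain ⟨X, hX, hFX⟩ := hX
          rcases Finset.mem_insert.1 hX with rfl | hX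
          · exact hFX
          · exact hFX.trans ((hLm X hX).trans hLT.1)
        have hLF' : L ⊂ F := Finset.ssubset_iff_subset_ne.2 ⟨hLF, by rintro rfl; exact hF2 hL⟩
        have hFT' : F ⊂ T := Finset.ssubset_iff_subset_ne.2 ⟨hFT, hF1⟩
        rw [hout F hLF]
        have c1 := Finset.card_lt_card hLF'
        have c2 := Finset.card_lt_card hFT'
        have c3 := hconc _ _ _ c1 c2 (Finset.card_le_univ T)
        have e1 : ((T \ L).card : ℝ) = T.card - L.card := by
          rw [Finset.card_sdiff_of_subset hLT.1, Nat.cast_sub (by omega)]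
        have e2 : ((F \ L).card : ℝ) = F.card - L.card := by
          rw [Finset.card_sdiff_of_subset hLF, Nat.cast_sub (by omega)]
        rw [← hφ, ← hφ, ← hφ] at c3
        have : t L + (F \ L).card * x - t F = (((T.card : ℝ) - F.card) * t L +
            ((F.card : ℝ) - L.card) * t T - ((T.card : ℝ) - L.card) * t F) / (T \ L).card := by
          rw [hx]; field_simp
          rw [e1, e2]; ring
        have h2 := div_neg_of_neg_of_pos (sub_neg.2 c3) hcard
        linarith
      · rw [hin F hFL]
        exact hlt F hF2 (fun X hX => hcomp X (by simp [hX])) ⟨L, hL, hFL⟩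

end FlatSys

namespace FlatSys

open scoped Classical

variable {E : Type*} [Fintype E] [DecidableEq E] (M : FlatSys E)

/-- The set of ranks missing from a chain. -/
def missing (τ : Finset (Finset E)) : Finset ℕ := Finset.range (M.r + 1) \ τ.image M.rk

variable {M} {τ : Finset (Finset E)}

lemma mem_missing {a : ℕ} : a ∈ M.missing τ ↔ a ≤ M.r ∧ ∀ X ∈ τ, M.rk X ≠ a := by
  simp [missing, Nat.lt_succ_iff]

lemma card_missing (hτ : M.Face τ) : τ.card + (M.missing τ).card = M.r + 1 := by
  have h1 := Finset.card_sdiff_add_card_eq_card hτ.image_subset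
  rw [hτ.card_image, Finset.card_range] at h1
  unfold missing; omega

/-- rank of a new element is missing -/
lemma rk_mem_missing (hτ : M.Face τ) {F : Finset E} (hF : F ∉ τ) (hf : M.flat F)
    (hc : ∀ X ∈ τ, X ⊆ F ∨ F ⊆ X) : M.rk F ∈ M.missing τ := by
  rw [mem_missing]
  refine ⟨M.rk_le_r hf, fun X hX h => hF ?_⟩
  rcases hc X hX with h1 | h1
  · rwa [← M.eq_of_rk (hτ.1 X hX) hf h1 h.ge]
  · rwa [M.eq_of_rk hf (hτ.1 X hX) h1 h.le]

lemma gap_of_link (hτ : M.Face τ) {F : Finset E} (hF : F ∉ τ) (hf : M.flat F)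
    (hc : ∀ X ∈ τ, X ⊆ F ∨ F ⊆ X) : ∃ G ∈ τ, ∃ H ∈ τ, G ⊂ F ∧ F ⊂ H ∧
      ∀ X ∈ τ, X ⊆ G ∨ H ⊆ X := by
  have h := mem_missing.1 (rk_mem_missing hτ hF hf hc)
  obtain ⟨G, hG, H, hH, h1, h2, h3, h4⟩ := hτ.gap h.1 h.2
  refine ⟨G, hG, H, hH, Finset.ssubset_iff_subset_ne.2 ⟨?_, ?_⟩,
    Finset.ssubset_iff_subset_ne.2 ⟨?_, ?_⟩, h4⟩
  · rcases hc G hG with h5 | h5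
    · exact h5
    · have := M.rk_le hf (hτ.1 G hG) h5; omega
  · rintro rfl; exact hF hG
  · rcases hc H hH with h5 | h5
    · have := M.rk_le (hτ.1 H hH) hf h5; omega
    · exact h5
  · rintro rfl; exact hF hH

/-- consecutive elements of the chain around the first missing rank -/
lemma gap_low (hτ : M.Face τ) {a : ℕ} (ha : a ∈ M.missing τ) (hlow : ∀ b < a, b ∉ M.missing τ) :
    ∃ G ∈ τ, ∃ H ∈ τ, G ⊆ H ∧ M.rk G + 1 = a ∧ a < M.rk H ∧ ∀ X ∈ τ, X ⊆ G ∨ H ⊆ X := by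
  have h := mem_missing.1 ha
  obtain ⟨G, hG, H, hH, h1, h2, h3, h4⟩ := hτ.gap h.1 h.2
  refine ⟨G, hG, H, hH, h1, ?_, h3, h4⟩
  have h5 := hlow (a - 1) (by omega)
  rw [mem_missing] at h5
  push Not at h5
  obtain ⟨X, hX, hX'⟩ := h5 (by omega)
  rcases h4 X hX with h6 | h6
  · have := M.rk_le (hτ.1 X hX) (hτ.1 G hG) h6; omega
  · have := M.rk_le (hτ.1 H hH) (hτ.1 X hX) h6; omega

lemma sum_indicator_one {P : Finset (Finset E)} {i : E} (hex : ∃ F ∈ P, i ∈ F)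
    (huniq : ∀ F ∈ P, ∀ F' ∈ P, i ∈ F → i ∈ F' → F = F') :
    ∑ F ∈ P, (if i ∈ F then (1 : ℝ) else 0) = 1 := by
  obtain ⟨F, hF, hi⟩ := hex
  rw [Finset.sum_eq_single F]
  · simp [hi]
  · intro F' hF' hne
    rw [if_neg]
    intro hi'
    exact hne (huniq F' hF' F hF hi' hi)
  · intro h; exact absurd hF h

variable (M) in
/-- The Bergman fan of the matroid. -/
noncomputable def fan : BFan (Finset E) where
  Face := M.Face
  D := M.r + 1
  Lin := affLin E
  down := by
    intro τ F G hτ h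
    rw [face_insert_iff hτ]
    exact ⟨h.1 G (by simp), fun X hX => h.2.1 X (by simp [hX]) G (by simp)⟩
  interp := fun τ hτ t => interp_chain t τ hτ.2.1 hτ.2.2.1
  balanced := by
    intro τ hτ hc l hl hv
    obtain ⟨a0, c, rfl⟩ := hl
    have hm : (M.missing τ).card = 1 := by have := card_missing hτ; omega
    obtain ⟨a, ha⟩ := Finset.card_eq_one.1 hm
    obtain ⟨G, hG, H, hH, h1, h2, h3, h4⟩ := gap_low hτ (a := a) (by simp [ha])
      (by intro b hb; simp [ha]; omega)
    set P := Finset.univ.filter (fun F => F ∉ τ ∧ M.Face (insert F τ)) with hP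
    have hmem : ∀ F, F ∈ P ↔ M.flat F ∧ M.rk F = a ∧ G ⊆ F ∧ F ⊆ H := by
      intro F
      simp only [hP, Finset.mem_filter, Finset.mem_univ, true_and]
      constructor
      · rintro ⟨h5, h6⟩
        obtain ⟨h7, h8⟩ := (face_insert_iff hτ).1 h6
        have h9 := rk_mem_missing hτ h5 h7 h8
        rw [ha, Finset.mem_singleton] at h9
        refine ⟨h7, h9, ?_, ?_⟩
        · rcases h8 G hG with h | h
          · exact h
          · have := M.rk_le h7 (hτ.1 G hG) h; omega
        · rcases h8 H hH with h | h
          · have := M.rk_le (hτ.1 H hH) h7 h; omega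
          · exact h
      · rintro ⟨h5, h6, h7, h8⟩
        refine ⟨fun h => ?_, face_insert hτ h5 fun X hX => ?_⟩
        · have : a ∈ M.missing τ := by simp [ha]
          exact (mem_missing.1 this).2 F h h6
        · rcases h4 X hX with h | h
          · exact Or.inl (h.trans h7)
          · exact Or.inr (h8.trans h)
    have hGf := hτ.1 G hG
    have hHf := hτ.1 H hH
    have h0 : ∀ F ∈ P, aff a0 c F = ∑ i ∈ H \ G, c i * if i ∈ F then (1 : ℝ) else 0 := by
      intro F hF
      obtain ⟨f1, f2, f3, f4⟩ := (hmem F).1 hF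
      rw [aff_sub f3, hv G hG, zero_add]
      simp only [mul_ite, mul_one, mul_zero]
      rw [← Finset.sum_filter]
      refine Finset.sum_congr ?_ fun _ _ => rfl
      ext i
      simp only [Finset.mem_sdiff, Finset.mem_filter]
      constructor
      · rintro ⟨x, y⟩; exact ⟨⟨f4 x, y⟩, x⟩
      · rintro ⟨⟨x, y⟩, z⟩; exact ⟨z, y⟩
    have hgoal : ∑ F ∈ P, aff a0 c F = 0 := by
      rw [Finset.sum_congr rfl h0, Finset.sum_comm]
      have h5 : ∀ i ∈ H \ G, ∑ F ∈ P, (c i * if i ∈ F then (1 : ℝ) else 0) = c i := by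
        intro i hi
        rw [Finset.mem_sdiff] at hi
        rw [← Finset.mul_sum, sum_indicator_one, mul_one]
        · obtain ⟨C, c1, c2, c3, c4, c5⟩ := M.cover G i hGf hi.2
          exact ⟨C, (hmem C).2 ⟨c1, by omega, c2, c5 H hHf h1 hi.1⟩, c3⟩
        · intro F hF F' hF' hi1 hi2
          obtain ⟨f1, f2, f3, f4⟩ := (hmem F).1 hF
          obtain ⟨g1, g2, g3, g4⟩ := (hmem F').1 hF'
          exact M.cover_unique hGf f1 g1 f3 g3 (by omega) (by omega) hi.2 hi1 hi2
      rw [Finset.sum_congr rfl h5]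
      have h6 := aff_sub (a := a0) (c := c) h1
      rw [hv G hG, hv H hH] at h6
      linarith
    convert hgoal using 1

lemma mem_link (hτ : M.Face τ) {F : Finset E} :
    F ∈ M.fan.link τ ↔ F ∉ τ ∧ M.flat F ∧ ∀ X ∈ τ, X ⊆ F ∨ F ⊆ X := by
  rw [BFan.mem_link]
  show _ ∧ M.Face _ ↔ _
  rw [face_insert_iff hτ]

lemma link_of_missing (hτ : M.Face τ) {a : ℕ} (ha : a ∈ M.missing τ) :
    ∃ F ∈ M.fan.link τ, M.rk F = a := by
  have h := mem_missing.1 ha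
  obtain ⟨G, hG, H, hH, h1, h2, h3, h4⟩ := hτ.gap h.1 h.2
  obtain ⟨F, f1, f2, f3, f4⟩ := M.exists_between (hτ.1 G hG) (hτ.1 H hH) h1 a h2.le h3.le
  refine ⟨F, (mem_link hτ).2 ⟨fun hF => h.2 F hF f4, f1, fun X hX => ?_⟩, f4⟩
  rcases h4 X hX with h | h
  · exact Or.inl (h.trans f2)
  · exact Or.inr (f3.trans h)

lemma link_nonempty (τ : Finset (Finset E)) (hτ : M.fan.Face τ) (hc : τ.card < M.fan.D) :
    (M.fan.link τ).Nonempty := by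
  have h1 := card_missing (M := M) hτ
  have h2 : τ.card < M.r + 1 := hc
  obtain ⟨a, ha⟩ := Finset.card_pos.1 (show 0 < (M.missing τ).card by omega)
  obtain ⟨F, hF, _⟩ := link_of_missing hτ ha
  exact ⟨F, hF⟩

lemma K_pos (t : Finset E → ℝ) (ht : t ∈ Kset E) (τ : Finset (Finset E)) (hτ : M.fan.Face τ) :
    ∃ c : Finset E → ℝ, t - c ∈ M.fan.Lin ∧ (∀ F ∈ τ, c F = 0) ∧
      ∀ F ∈ M.fan.link τ, 0 < c F := by
  have hτ' : M.Face τ := hτ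
  obtain ⟨l, h1, h2, h3⟩ := interp_pos ht τ hτ'.2.1 hτ'.2.2.1
  refine ⟨t - l, by rw [sub_sub_cancel]; exact h1, fun F hF => by simp [h2 F hF], fun F hF => ?_⟩
  obtain ⟨f1, f2, f3⟩ := (mem_link hτ').1 hF
  have := h3 F f1 f3 ⟨_, hτ'.2.2.2, Finset.subset_univ _⟩
  simpa using this

/-- elements of the link of `insert F τ` -/
lemma mem_link_insert (hτ : M.Face τ) {F G : Finset E} (hF : F ∈ M.fan.link τ) :
    G ∈ M.fan.link (insert F τ) ↔ G ∈ M.fan.link τ ∧ G ≠ F ∧ (F ⊆ G ∨ G ⊆ F) := by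
  have h1 : M.Face (insert F τ) := M.fan.face_of_mem_link hF
  rw [mem_link h1, mem_link hτ]
  simp only [Finset.mem_insert, not_or, forall_eq_or_imp]
  tauto

lemma connected (τ : Finset (Finset E)) (hτ : M.fan.Face τ) (hc : τ.card + 3 ≤ M.fan.D)
    (g : Finset E → ℝ)
    (hg : ∀ F ∈ M.fan.link τ, ∀ G ∈ M.fan.link (insert F τ), g F = g G) :
    ∀ F ∈ M.fan.link τ, ∀ G ∈ M.fan.link τ, g F = g G := by
  have hτ' : M.Face τ := hτ
  have hg' : ∀ F ∈ M.fan.link τ, ∀ G ∈ M.fan.link τ, (F ⊆ G ∨ G ⊆ F) → g F = g G := by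
    intro F hF G hG h
    by_cases hFG : G = F
    · rw [hFG]
    · exact hg F hF G ((mem_link_insert hτ' hF).2 ⟨hG, hFG, h⟩)
  have hmiss : 3 ≤ (M.missing τ).card := by
    have h1 := card_missing hτ'
    have h2 : τ.card + 3 ≤ M.r + 1 := hc
    omega
  intro F hF F' hF'
  by_cases hcomp : F ⊆ F' ∨ F' ⊆ F
  · exact hg' F hF F' hF' hcomp
  push Not at hcomp
  obtain ⟨f1, f2, f3⟩ := (mem_link hτ').1 hF
  obtain ⟨f1', f2', f3'⟩ := (mem_link hτ').1 hF'
  obtain ⟨G, hG, H, hH, hGF, hFH, hgap⟩ := gap_of_link hτ' f1 f2 f3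
  have hGf := hτ'.1 G hG
  have hHf := hτ'.1 H hH
  have hGF' : G ⊆ F' := by
    rcases f3' G hG with h | h
    · exact h
    · exact absurd (h.trans hGF.1) hcomp.2
  have hFH' : F' ⊆ H := by
    rcases f3' H hH with h | h
    · exact absurd (hFH.1.trans h) hcomp.1
    · exact h
  have hGne : G ≠ F' := by rintro rfl; exact f1' hG
  have hlink : ∀ X, M.flat X → G ⊂ X → X ⊂ H → X ∈ M.fan.link τ := by
    intro X hX h1 h2
    refine (mem_link hτ').2 ⟨fun h => ?_, hX, fun Y hY => ?_⟩
    · rcases hgap X h with h3 | h3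
      · exact h1.2 h3
      · exact h2.2 h3
    · rcases hgap Y hY with h3 | h3
      · exact Or.inl (h3.trans h1.1)
      · exact Or.inr (h2.1.trans h3)
  obtain ⟨i, hiF, hiG⟩ := Finset.exists_of_ssubset hGF
  obtain ⟨j, hjF, hjG⟩ := Finset.exists_of_ssubset (Finset.ssubset_iff_subset_ne.2 ⟨hGF', hGne⟩)
  obtain ⟨p, p1, p2, p3, p4, p5⟩ := M.cover G i hGf hiG
  obtain ⟨q, q1, q2, q3, q4, q5⟩ := M.cover G j hGf hjG
  have hpF := p5 F f2 hGF.1 hiF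
  have hqF := q5 F' f2' hGF' hjF
  have hFH'' : F' ⊂ H := Finset.ssubset_iff_subset_ne.2 ⟨hFH', by rintro rfl; exact f1' hH⟩
  have hpl := hlink p p1 ⟨p2, fun h => hiG (h p3)⟩ (lt_of_le_of_lt hpF hFH)
  have hql := hlink q q1 ⟨q2, fun h => hjG (h q3)⟩ (lt_of_le_of_lt hqF hFH'')
  have e1 := hg' F hF p hpl (Or.inr hpF)
  have e2 := hg' F' hF' q hql (Or.inr hqF)
  by_cases hjp : j ∈ p
  · have := M.cover_unique hGf p1 q1 p2 q2 p4 q4 hjG hjp q3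
    rw [e1, e2, this]
  obtain ⟨l, l1, l2, l3, l4, l5⟩ := M.cover p j p1 hjp
  have hlH := l5 H hHf (hpF.trans hFH.1) (hFH' hjF)
  have hql' := q5 l l1 (p2.trans l2) l3
  by_cases hlH' : l = H
  · -- rank two gap: use another gap
    have : ∃ a ∈ M.missing τ, a ≠ M.rk G + 1 := by
      by_contra hcon
      push Not at hcon
      have : M.missing τ ⊆ {M.rk G + 1} := fun a ha => by simp [hcon a ha]
      have := Finset.card_le_card this
      simp at this; omega
    obtain ⟨a, ha, hane⟩ := this
    obtain ⟨X, hX, hXa⟩ := link_of_missing hτ' ha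
    obtain ⟨x1, x2, x3⟩ := (mem_link hτ').1 hX
    have hr : M.rk H = M.rk G + 2 := by rw [← hlH']; omega
    have hX' : X ⊆ G ∨ H ⊆ X := by
      rcases x3 G hG with h | h
      · rcases x3 H hH with h' | h'
        · exact Or.inr h'
        · have h6 := M.rk_lt G X hGf x2 (Finset.ssubset_iff_subset_ne.2
            ⟨h, by rintro rfl; exact x1 hG⟩)
          have h7 := M.rk_lt X H x2 hHf (Finset.ssubset_iff_subset_ne.2
            ⟨h', by rintro rfl; exact x1 hH⟩)
          omega
      · exact Or.inl h
    have e3 := hg' F hF X hX (by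
      rcases hX' with h | h
      · exact Or.inr (h.trans hGF.1)
      · exact Or.inl (hFH.1.trans h))
    have e4 := hg' F' hF' X hX (by
      rcases hX' with h | h
      · exact Or.inr (h.trans hGF')
      · exact Or.inl (hFH'.trans h))
    rw [e3, e4]
  · have hll := hlink l l1 ⟨p2.trans l2, fun h => hiG (h (l2 p3))⟩
      (Finset.ssubset_iff_subset_ne.2 ⟨hlH, hlH'⟩)
    rw [e1, e2, hg' p hpl l hll (Or.inl l2), hg' q hql l hll (Or.inl hql')]

end FlatSys

namespace FlatSys

open scoped Classical

variable {E : Type*} [Fintype E] [DecidableEq E] {M : FlatSys E} {τ : Finset (Finset E)}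

lemma aff_single (i : E) (F : Finset E) :
    aff 0 (fun x => if x = i then (1 : ℝ) else 0) F = if i ∈ F then 1 else 0 := by
  simp [aff]

lemma base_neg (hτ : M.Face τ) (hc : τ.card + 2 = M.r + 1) :
    ∃ P : Finset (Finset E), ∀ t : Finset E → ℝ, (∀ X ∈ τ, t X = 0) → ∑ p ∈ P, t p = 0 →
      M.fan.N [t, t] τ ≤ 0 := by
  have hτ' : M.fan.Face τ := hτ
  have hD : M.fan.D = M.r + 1 := rfl
  have hm : (M.missing τ).card = 2 := by have := card_missing hτ; omega
  obtain ⟨a, b, hab, hmiss⟩ : ∃ a b, a < b ∧ M.missing τ = {a, b} := by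
    obtain ⟨a, b, hne, h⟩ := Finset.card_eq_two.1 hm
    rcases lt_or_gt_of_ne hne with h1 | h1
    · exact ⟨a, b, h1, h⟩
    · exact ⟨b, a, h1, by rw [h, Finset.pair_comm]⟩
  obtain ⟨G, hG, H, hH, h1, h2, h3, h4⟩ := gap_low hτ (a := a) (by simp [hmiss])
      (by intro x hx; simp [hmiss]; omega)
  have hGf := hτ.1 G hG
  have hHf := hτ.1 H hH
  have hrk : ∀ F ∈ M.fan.link τ, M.rk F = a ∨ M.rk F = b := by
    intro F hF
    obtain ⟨f1, f2, f3⟩ := (mem_link hτ).1 hF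
    have := rk_mem_missing hτ f1 f2 f3
    rw [hmiss] at this
    simpa using this
  set P := (M.fan.link τ).filter (fun F => M.rk F = a) with hP
  have hPm : ∀ p ∈ P, M.flat p ∧ M.rk p = a ∧ G ⊆ p ∧ p ⊆ H ∧ ∃ i ∈ p, i ∉ G := by
    intro p hp
    rw [hP, Finset.mem_filter] at hp
    obtain ⟨f1, f2, f3⟩ := (mem_link hτ).1 hp.1
    have hGp : G ⊆ p := by
      rcases f3 G hG with h | h
      · exact h
      · have := M.rk_le f2 hGf h; omega
    refine ⟨f2, hp.2, hGp, ?_, ?_⟩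
    · rcases f3 H hH with h | h
      · have := M.rk_le hHf f2 h; omega
      · exact h
    · exact Finset.exists_of_ssubset (Finset.ssubset_iff_subset_ne.2
        ⟨hGp, by rintro rfl; omega⟩)
  refine ⟨P, fun t ht hsum => ?_⟩
  -- choose representatives
  have hex : ∀ p : Finset E, ∃ i : E → ℝ, p ∈ P → ∃ x ∈ p, x ∉ G ∧
      i = fun y => if y = x then (1 : ℝ) else 0 := by
    intro p
    by_cases hp : p ∈ P
    · obtain ⟨_, _, _, _, i, hi, hi'⟩ := hPm p hp
      exact ⟨_, fun _ => ⟨i, hi, hi', rfl⟩⟩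
    · exact ⟨0, fun h => absurd h hp⟩
  choose e he using hex
  set l : Finset E → ℝ := ∑ p ∈ P, t p • aff 0 (e p) with hl
  have hlin : l ∈ M.fan.Lin :=
    Submodule.sum_mem _ fun p _ => Submodule.smul_mem _ _ (aff_mem _ _)
  have hlF : ∀ F, l F = ∑ p ∈ P, t p * aff 0 (e p) F := by
    intro F; simp [hl, Finset.sum_apply]
  have hlτ : ∀ X ∈ τ, l X = 0 := by
    intro X hX
    rw [hlF]
    rcases h4 X hX with h | h
    · refine Finset.sum_eq_zero fun p hp => ?_
      obtain ⟨x, hx, hxG, hxe⟩ := he p hp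
      rw [hxe, aff_single, if_neg (fun hh => hxG (h hh)), mul_zero]
    · refine Eq.trans ?_ hsum
      refine Finset.sum_congr rfl fun p hp => ?_
      obtain ⟨x, hx, hxG, hxe⟩ := he p hp
      rw [hxe, aff_single, if_pos (h ((hPm p hp).2.2.2.1 hx)), mul_one]
  have hlP : ∀ q ∈ P, l q = t q := by
    intro q hq
    rw [hlF, Finset.sum_eq_single q]
    · obtain ⟨x, hx, hxG, hxe⟩ := he q hq
      rw [hxe, aff_single, if_pos hx, mul_one]
    · intro p hp hne
      obtain ⟨x, hx, hxG, hxe⟩ := he p hp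
      obtain ⟨p1, p2, p3, _⟩ := hPm p hp
      obtain ⟨q1, q2, q3, _⟩ := hPm q hq
      rw [hxe, aff_single, if_neg, mul_zero]
      intro hxq
      exact hne (M.cover_unique hGf p1 q1 p3 q3 (by omega) (by omega) hxG hx hxq)
    · intro h; exact absurd hq h
  set s : Finset E → ℝ := t - l with hs
  have hts : t - s ∈ M.fan.Lin := by rw [hs, sub_sub_cancel]; exact hlin
  have hsτ : ∀ X ∈ τ, s X = 0 := fun X hX => by simp [hs, ht X hX, hlτ X hX]
  have hsP : ∀ X ∈ P, s X = 0 := fun X hX => by simp [hs, hlP X hX]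
  rw [M.fan.N_congr hτ' (by simp; omega) hts, M.fan.N_congr_second hτ' (by simp; omega) s hts,
    M.fan.N_vanish hτ' (by simp; omega) hsτ]
  refine Finset.sum_nonpos fun F hF => ?_
  by_cases hFP : F ∈ P
  · rw [hsP F hFP, zero_mul]
  obtain ⟨f1, f2, f3⟩ := (mem_link hτ).1 hF
  have hFb : M.rk F = b := by
    rcases hrk F hF with h | h
    · exact absurd (Finset.mem_filter.2 ⟨hF, h⟩) hFP
    · exact h
  obtain ⟨G', hG', H', hH', g1, g2, g3⟩ := gap_of_link hτ f1 f2 f3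
  obtain ⟨i, hi, hi'⟩ := Finset.exists_of_ssubset g1
  obtain ⟨j, hj, hj'⟩ := Finset.exists_of_ssubset g2
  set lam : Finset E → ℝ := aff 0 (fun x => if x = i then (1 : ℝ) else 0) -
    aff 0 (fun x => if x = j then (1 : ℝ) else 0) with hlam
  have hlamL : lam ∈ M.fan.Lin := Submodule.sub_mem _ (aff_mem _ _) (aff_mem _ _)
  have hlamF : ∀ X, lam X = (if i ∈ X then 1 else 0) - (if j ∈ X then 1 else 0) := by
    intro X; rw [hlam, Pi.sub_apply, aff_single, aff_single]
  have hlamτ : ∀ X ∈ τ, lam X = 0 := by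
    intro X hX
    rw [hlamF]
    rcases g3 X hX with h | h
    · rw [if_neg (fun hh => hi' (h hh)), if_neg (fun hh => hj' (g1.1 (h hh))), sub_zero]
    · rw [if_pos (h (g2.1 hi)), if_pos (h hj), sub_self]
  have hlamself : lam F = 1 := by rw [hlamF, if_pos hi, if_neg hj', sub_zero]
  have hfc := M.fan.face_of_mem_link hF
  rw [M.fan.N_eq (s := s - s F • lam) hfc (by rw [M.fan.card_of_mem_link hF]; simp; omega)
    (by rw [sub_sub_cancel]; exact Submodule.smul_mem _ _ hlamL)
    (by
      intro X hX
      rcases Finset.mem_insert.1 hX with rfl | hX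
      · simp [hlamself]
      · simp [hsτ X hX, hlamτ X hX])]
  have : ∀ Y ∈ M.fan.link (insert F τ), (s - s F • lam) Y * M.fan.N [] (insert Y (insert F τ)) =
      - s F * lam Y ∧ 0 ≤ lam Y := by
    intro Y hY
    obtain ⟨y1, y2, y3⟩ := (mem_link_insert hτ hF).1 hY
    obtain ⟨z1, z2, z3⟩ := (mem_link hτ).1 y1
    have hYa : M.rk Y = a := by
      rcases hrk Y y1 with h | h
      · exact h
      · rcases y3 with h5 | h5
        · exact absurd (M.eq_of_rk f2 z2 h5 (by omega)).symm y2
        · exact absurd (M.eq_of_rk z2 f2 h5 (by omega)) y2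
    have hYF : Y ⊆ F := by
      rcases y3 with h5 | h5
      · have := M.rk_le f2 z2 h5; omega
      · exact h5
    have hYP : Y ∈ P := Finset.mem_filter.2 ⟨y1, hYa⟩
    constructor
    · simp [BFan.N, hsP Y hYP]
    · rw [hlamF, if_neg (fun hh => hj' (hYF hh)), sub_zero]
      split_ifs <;> norm_num
  rw [Finset.sum_congr rfl (fun Y hY => (this Y hY).1), ← Finset.mul_sum]
  have h5 := Finset.sum_nonneg (fun Y hY => (this Y hY).2)
  have h6 := mul_nonneg (mul_self_nonneg (s F)) h5
  linarith

lemma base (τ : Finset (Finset E)) (hτ : M.fan.Face τ) (hc : τ.card + 2 = M.fan.D)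
    (s f : Finset E → ℝ) (hf : f ∈ Kset E) :
    M.fan.N [s, s] τ * M.fan.N [f, f] τ ≤ M.fan.N [s, f] τ ^ 2 := by
  obtain ⟨P, hP⟩ := base_neg (M := M) hτ hc
  have hc' : τ.card + ([] : List (Finset E → ℝ)).length + 2 = M.fan.D := by simpa using hc
  have hc1 : ∀ t : Finset E → ℝ, τ.card + [t].length + 1 = M.fan.D := by intro; simp; omega
  have key : ∀ s t : Finset E → ℝ, M.fan.N [s, t] τ =
      M.fan.N [M.fan.red τ s, M.fan.red τ t] τ := by
    intro s t
    rw [M.fan.N_congr hτ (hc1 _) (M.fan.red_sub_mem τ s),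
      M.fan.N_congr_second hτ hc' _ (M.fan.red_sub_mem τ t)]
  have hpos : 0 < M.fan.N [f, f] τ := M.fan.N_pos (Kset E) (fun t ht τ hτ => K_pos t ht τ hτ)
    link_nonempty _ (by simpa using hf) τ hτ (by simpa using hc)
  set s0 := M.fan.red τ s
  set f0 := M.fan.red τ f
  have hs0 : ∀ X ∈ τ, s0 X = 0 := fun X hX => M.fan.red_vanish hτ s hX
  have hf0 : ∀ X ∈ τ, f0 X = 0 := fun X hX => M.fan.red_vanish hτ f hX
  have hT : ∑ p ∈ P, f0 p ≠ 0 := by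
    intro h
    have := hP f0 hf0 h
    rw [key] at hpos
    exact absurd hpos (not_lt.2 this)
  refine reverse_cs (x := ∑ p ∈ P, s0 p) (y := ∑ p ∈ P, f0 p) ?_ hpos hT
  have h1 := hP ((∑ p ∈ P, f0 p) • s0 + (-∑ p ∈ P, s0 p) • f0)
    (fun X hX => by simp [hs0 X hX, hf0 X hX])
    (by simp only [Pi.add_apply, Pi.smul_apply, smul_eq_mul, Finset.sum_add_distrib,
          ← Finset.mul_sum]
        ring)
  rw [M.fan.N_quad hτ hc'] at h1
  rw [key s s, key s f, key f f]
  linarith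

/-- Hodge–Riemann relation in degree one for the Bergman fan. -/
theorem hr (ts : List (Finset E → ℝ)) (hts : ∀ t ∈ ts, t ∈ Kset E) (τ : Finset (Finset E))
    (hτ : M.Face τ) (hc : τ.card + ts.length = M.r - 1) (hr : 1 ≤ M.r) (s f : Finset E → ℝ)
    (hf : f ∈ Kset E) :
    M.fan.N (s :: s :: ts) τ * M.fan.N (f :: f :: ts) τ ≤ M.fan.N (s :: f :: ts) τ ^ 2 :=
  M.fan.hodge_riemann (Kset E) (fun t ht τ hτ => K_pos t ht τ hτ) link_nonempty connected
    (fun τ hτ hc s f hf => base τ hτ hc s f hf) ts hts τ hτ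
    (by show _ = M.r + 1; omega) s f hf

end FlatSys

namespace FlatSys

open scoped Classical

variable {E : Type*} [Fintype E] [DecidableEq E] (M : FlatSys E)

/-- The Möbius function of the lattice of flats, from the bottom. -/
noncomputable def mu (F : Finset E) : ℤ :=
  if F = ∅ then 1 else -∑ G ∈ (F.ssubsets.filter M.flat).attach, mu G.1
termination_by F.card
decreasing_by
  exact Finset.card_lt_card (Finset.mem_ssubsets.1 (Finset.mem_filter.1 G.2).1)

lemma mu_sum {F : Finset E} (hF : M.flat F) :
    ∑ G ∈ F.powerset.filter M.flat, M.mu G = if F = ∅ then 1 else 0 := by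
  have h1 : F.powerset.filter M.flat = insert F (F.ssubsets.filter M.flat) := by
    ext G
    simp only [Finset.mem_filter, Finset.mem_powerset, Finset.mem_insert, Finset.mem_ssubsets]
    constructor
    · rintro ⟨h1, h2⟩
      rcases h1.eq_or_ssubset with h | h
      · exact Or.inl h
      · exact Or.inr ⟨h, h2⟩
    · rintro (rfl | ⟨h1, h2⟩)
      · exact ⟨subset_rfl, hF⟩
      · exact ⟨h1.1, h2⟩
  rw [h1, Finset.sum_insert (by simp)]
  rw [mu]
  split_ifs with h
  · subst h
    rw [Finset.sum_eq_zero, add_zero]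
    intro G hG
    simp only [Finset.mem_filter, Finset.mem_ssubsets] at hG
    exact absurd hG.1 (Finset.not_ssubset_empty _)
  · rw [Finset.sum_attach _ (fun G => M.mu G)]
    ring

/-- The join of a flat with an element. -/
noncomputable def jn (i : E) (G : Finset E) : Finset E :=
  if h : M.flat G ∧ i ∉ G then (M.cover G i h.1 h.2).choose else G

variable {M}

lemma jn_spec {i : E} {G : Finset E} (hG : M.flat G) : M.flat (M.jn i G) ∧ G ⊆ M.jn i G ∧
    i ∈ M.jn i G ∧ (i ∈ G → M.jn i G = G) ∧ (i ∉ G → M.rk (M.jn i G) = M.rk G + 1) ∧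
    ∀ H, M.flat H → G ⊆ H → i ∈ H → M.jn i G ⊆ H := by
  by_cases hi : i ∈ G
  · have : M.jn i G = G := by simp [jn, hi]
    rw [this]
    exact ⟨hG, subset_rfl, hi, fun _ => rfl, fun h => absurd hi h, fun H _ h _ => h⟩
  · have : M.jn i G = (M.cover G i hG hi).choose := by simp [jn, hi, hG]
    obtain ⟨c1, c2, c3, c4, c5⟩ := (M.cover G i hG hi).choose_spec
    rw [this]
    exact ⟨c1, c2, c3, fun h => absurd h hi, fun _ => c4, c5⟩

lemma weisner (i : E) (F : Finset E) (hF : M.flat F) (hi : i ∈ F) :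
    ∑ G ∈ Finset.univ.filter (fun G => M.flat G ∧ M.jn i G = F), M.mu G = 0 := by
  induction hn : F.card using Nat.strong_induction_on generalizing F with
  | _ n ih =>
    have h0 := M.mu_sum hF
    rw [if_neg (by rintro rfl; simp at hi)] at h0
    rw [← Finset.sum_fiberwise_of_maps_to (t := (F.powerset.filter M.flat).filter (fun X => i ∈ X))
      (g := M.jn i)] at h0
    · rw [Finset.sum_eq_single F] at h0
      · rw [← h0]
        refine Finset.sum_congr ?_ fun _ _ => rfl
        ext G
        simp only [Finset.mem_filter, Finset.mem_univ, true_and, Finset.mem_powerset]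
        constructor
        · rintro ⟨h1, h2⟩
          exact ⟨⟨h2 ▸ (jn_spec h1).2.1, h1⟩, h2⟩
        · rintro ⟨⟨h1, h2⟩, h3⟩; exact ⟨h2, h3⟩
      · intro F' hF' hne
        simp only [Finset.mem_filter, Finset.mem_powerset] at hF'
        obtain ⟨⟨h1, h2⟩, h3⟩ := hF'
        have := ih F'.card (by
          rw [← hn]
          exact Finset.card_lt_card (Finset.ssubset_iff_subset_ne.2 ⟨h1, hne⟩)) F' h2 h3 rfl
        rw [← this]
        refine Finset.sum_congr ?_ fun _ _ => rfl
        ext G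
        simp only [Finset.mem_filter, Finset.mem_univ, true_and, Finset.mem_powerset]
        constructor
        · rintro ⟨⟨h1, h2⟩, h3⟩; exact ⟨h2, h3⟩
        · rintro ⟨h5, h6⟩
          exact ⟨⟨(h6 ▸ (jn_spec h5).2.1 : G ⊆ F').trans h1, h5⟩, h6⟩
      · intro h
        simp [hF, hi] at h
    · intro G hG
      simp only [Finset.mem_filter, Finset.mem_powerset] at hG ⊢
      obtain ⟨j1, j2, j3, j4, j5, j6⟩ := jn_spec (i := i) hG.2
      exact ⟨⟨j6 F hF hG.1 hi, j1⟩, j3⟩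

variable (M) in
/-- Unsigned Möbius function. -/
noncomputable def m (F : Finset E) : ℝ := (-1) ^ M.rk F * (M.mu F : ℝ)

lemma m_empty : M.m ∅ = 1 := by simp [m, M.rk_empty, mu]

/-- Flats covered by `F` and avoiding `i`. -/
noncomputable def low (M : FlatSys E) (F : Finset E) (i : E) : Finset (Finset E) :=
  Finset.univ.filter (fun G => M.flat G ∧ G ⊆ F ∧ i ∉ G ∧ M.rk G + 1 = M.rk F)

lemma mem_low {F G : Finset E} {i : E} : G ∈ M.low F i ↔
    M.flat G ∧ G ⊆ F ∧ i ∉ G ∧ M.rk G + 1 = M.rk F := by simp [low]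

lemma m_rec {F : Finset E} (hF : M.flat F) {i : E} (hi : i ∈ F) :
    M.m F = ∑ G ∈ M.low F i, M.m G := by
  have h := weisner i F hF hi
  have h1 : Finset.univ.filter (fun G => M.flat G ∧ M.jn i G = F) = insert F (M.low F i) := by
    ext G
    simp only [Finset.mem_filter, Finset.mem_univ, true_and, Finset.mem_insert, mem_low]
    constructor
    · rintro ⟨h1, h2⟩
      obtain ⟨j1, j2, j3, j4, j5, j6⟩ := jn_spec (i := i) h1
      by_cases hiG : i ∈ G
      · left; rw [← j4 hiG, h2]
      · right; rw [h2] at j2 j5; exact ⟨h1, j2, hiG, (j5 hiG).symm⟩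
    · rintro (rfl | ⟨h1, h2, h3, h4⟩)
      · exact ⟨hF, (jn_spec hF).2.2.2.1 hi⟩
      · obtain ⟨j1, j2, j3, j4, j5, j6⟩ := jn_spec (i := i) h1
        refine ⟨h1, M.eq_of_rk j1 hF (j6 F hF h2 hi) (by rw [j5 h3]; omega)⟩
  rw [h1, Finset.sum_insert (by simp [mem_low])] at h
  have h2 : (M.mu F : ℝ) = -∑ G ∈ M.low F i, (M.mu G : ℝ) := by
    have : M.mu F = -∑ G ∈ M.low F i, M.mu G := by linarith
    rw [this]; push_cast; rfl
  rw [m, h2, ← Finset.sum_neg_distrib, Finset.mul_sum]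
  refine Finset.sum_congr rfl fun G hG => ?_
  rw [m, ← (mem_low.1 hG).2.2.2, pow_succ]
  ring

lemma low_nonempty {F : Finset E} (hF : M.flat F) {i : E} (hi : i ∈ F) :
    (M.low F i).Nonempty := by
  have h0 : (∅ : Finset E) ∈ Finset.univ.filter (fun G => M.flat G ∧ G ⊆ F ∧ i ∉ G) := by
    simp [M.flat_empty]
  obtain ⟨G, hG, hmax⟩ := Finset.exists_max_image _ M.rk ⟨_, h0⟩
  simp only [Finset.mem_filter, Finset.mem_univ, true_and] at hG hmax
  obtain ⟨g1, g2, g3⟩ := hG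
  obtain ⟨C, c1, c2, c3, c4, c5⟩ := M.cover G i g1 g3
  have hCF := c5 F hF g2 hi
  refine ⟨G, mem_low.2 ⟨g1, g2, g3, ?_⟩⟩
  by_contra hne
  have hCne : C ≠ F := by rintro rfl; omega
  obtain ⟨j, hj, hj'⟩ := Finset.exists_of_ssubset (Finset.ssubset_iff_subset_ne.2 ⟨hCF, hCne⟩)
  obtain ⟨D, d1, d2, d3, d4, d5⟩ := M.cover G j g1 (fun h => hj' (c2 h))
  have hiD : i ∉ D := fun h => hj' (by
    rw [M.cover_unique g1 c1 d1 c2 d2 c4 d4 g3 c3 h]; exact d3)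
  have := hmax D ⟨d1, d5 F hF g2 hj, hiD⟩
  omega

lemma m_pos (F : Finset E) (hF : M.flat F) : 0 < M.m F := by
  induction hn : M.rk F generalizing F with
  | zero =>
    have : F = ∅ := (M.eq_of_rk M.flat_empty hF (Finset.empty_subset _) (by omega)).symm
    rw [this, m_empty]; norm_num
  | succ n ih =>
    have hne : F.Nonempty := by
      by_contra h
      rw [Finset.not_nonempty_iff_eq_empty] at h
      rw [h, M.rk_empty] at hn; omega
    obtain ⟨i, hi⟩ := hne
    rw [m_rec hF hi]
    refine Finset.sum_pos (fun G hG => ?_) (low_nonempty hF hi)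
    have := mem_low.1 hG
    exact ih G this.1 (by omega)

end FlatSys

namespace FlatSys

open scoped Classical

variable {E : Type*} [Fintype E] [DecidableEq E] {M : FlatSys E} {τ : Finset (Finset E)}

variable (E) in
/-- The class alpha. -/
noncomputable def al : Finset E → ℝ := fun F => if F = Finset.univ then -1 else 0

variable (E) in
/-- The class beta. -/
noncomputable def be : Finset E → ℝ := fun F => if F = ∅ then -1 else 0

lemma N_al (hτ : M.Face τ) {ts : List (Finset E → ℝ)} (hc : τ.card + ts.length + 1 = M.r + 1)
    {i : E} (hi : ∀ X ∈ τ, X ≠ Finset.univ → i ∉ X) :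
    M.fan.N (al E :: ts) τ =
      ∑ F ∈ (M.fan.link τ).filter (fun F => i ∈ F), M.fan.N ts (insert F τ) := by
  rw [M.fan.N_eq (s := al E + aff 0 (fun x => if x = i then (1 : ℝ) else 0)) hτ hc
    (by rw [sub_add_cancel_left]; exact Submodule.neg_mem _ (aff_mem _ _))]
  · rw [Finset.sum_filter]
    refine Finset.sum_congr rfl fun F hF => ?_
    have : F ≠ Finset.univ := by
      rintro rfl; exact ((mem_link hτ).1 hF).1 hτ.2.2.2
    rw [Pi.add_apply, aff_single, al, if_neg this]
    split_ifs <;> simp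
  · intro X hX
    rw [Pi.add_apply, aff_single, al]
    by_cases h : X = Finset.univ
    · simp [h]
    · simp [h, hi X hX h]

lemma N_be (hτ : M.Face τ) {ts : List (Finset E → ℝ)} (hc : τ.card + ts.length + 1 = M.r + 1)
    {i : E} (hi : ∀ X ∈ τ, X ≠ ∅ → i ∈ X) :
    M.fan.N (be E :: ts) τ =
      ∑ F ∈ (M.fan.link τ).filter (fun F => i ∉ F), M.fan.N ts (insert F τ) := by
  rw [M.fan.N_eq (s := be E + (aff 1 0 - aff 0 (fun x => if x = i then (1 : ℝ) else 0))) hτ hc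
    (by
      rw [sub_add_cancel_left]
      exact Submodule.neg_mem _ (Submodule.sub_mem _ (aff_mem _ _) (aff_mem _ _)))]
  · rw [Finset.sum_filter]
    refine Finset.sum_congr rfl fun F hF => ?_
    have : F ≠ ∅ := by
      rintro rfl; exact ((mem_link hτ).1 hF).1 hτ.2.2.1
    rw [Pi.add_apply, Pi.sub_apply, aff_single, be, if_neg this]
    by_cases h : i ∈ F <;> simp [h, aff]
  · intro X hX
    rw [Pi.add_apply, Pi.sub_apply, aff_single, be]
    by_cases h : X = ∅
    · simp [h, aff]
    · simp [h, hi X hX h, aff]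

lemma low_count (hτ : M.Face τ) {G : Finset E} (hG : G ∈ τ) (hmin : ∀ X ∈ τ, X ≠ ∅ → G ⊆ X) :
    τ.card + M.rk G ≤ M.r + 2 := by
  have h := card_missing hτ
  have h1 : Finset.Ioo 0 (M.rk G) ⊆ M.missing τ := by
    intro a ha
    rw [Finset.mem_Ioo] at ha
    have := M.rk_le_r (hτ.1 G hG)
    refine mem_missing.2 ⟨by omega, fun X hX hXa => ?_⟩
    by_cases he : X = ∅
    · rw [he, M.rk_empty] at hXa; omega
    · have := M.rk_le (hτ.1 G hG) (hτ.1 X hX) (hmin X hX he); omega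
  have h2 := Finset.card_le_card h1
  rw [Nat.card_Ioo] at h2
  omega

lemma both_count (hτ : M.Face τ) {G H : Finset E} (hG : G ∈ τ)
    (hmin : ∀ X ∈ τ, X ≠ ∅ → G ⊆ X) (hG0 : G ≠ ∅) (hH : H ∈ τ) (hH0 : H ≠ ∅)
    (hmax : ∀ X ∈ τ, X ≠ Finset.univ → X ⊆ H) (hH1 : H ≠ Finset.univ) :
    τ.card + M.rk G + M.r ≤ M.r + 3 + M.rk H := by
  have h := card_missing hτ
  have hGH := M.rk_le (hτ.1 G hG) (hτ.1 H hH) (hmin H hH hH0)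
  have h1 : Finset.Ioo 0 (M.rk G) ∪ Finset.Ioo (M.rk H) M.r ⊆ M.missing τ := by
    intro a ha
    rw [Finset.mem_union, Finset.mem_Ioo, Finset.mem_Ioo] at ha
    have hr := M.rk_le_r (hτ.1 G hG)
    refine mem_missing.2 ⟨by omega, fun X hX hXa => ?_⟩
    rcases ha with ha | ha
    · by_cases he : X = ∅
      · rw [he, M.rk_empty] at hXa; omega
      · have := M.rk_le (hτ.1 G hG) (hτ.1 X hX) (hmin X hX he); omega
    · by_cases he : X = Finset.univ
      · rw [he] at hXa; change M.r = a at hXa; omega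
      · have := M.rk_le (hτ.1 X hX) (hτ.1 H hH) (hmax X hX he); omega
  have hd : Disjoint (Finset.Ioo 0 (M.rk G)) (Finset.Ioo (M.rk H) M.r) := by
    rw [Finset.disjoint_left]
    intro a h1 h2
    rw [Finset.mem_Ioo] at h1 h2
    omega
  have h2 := Finset.card_le_card h1
  rw [Finset.card_union_of_disjoint hd, Nat.card_Ioo, Nat.card_Ioo] at h2
  omega

lemma N_beta (k : ℕ) (τ : Finset (Finset E)) (hτ : M.Face τ) (hc : τ.card + k = M.r + 1)
    (G : Finset E) (hG : G ∈ τ) (hG0 : G ≠ ∅) (hmin : ∀ X ∈ τ, X ≠ ∅ → G ⊆ X) :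
    M.fan.N (List.replicate k (be E)) τ = if M.rk G = k + 1 then M.m G else 0 := by
  have hGpos : 0 < M.rk G := by
    have := M.rk_lt ∅ G M.flat_empty (hτ.1 G hG) (Finset.ssubset_iff_subset_ne.2
      ⟨Finset.empty_subset _, Ne.symm hG0⟩)
    omega
  have hle := low_count hτ hG hmin
  obtain ⟨i, hi⟩ := Finset.nonempty_iff_ne_empty.2 hG0
  have hGf := hτ.1 G hG
  induction k generalizing τ G i with
  | zero =>
    have h1 : M.rk G = 1 := by omega
    rw [if_pos (by omega), m_rec hGf hi]
    have h2 : M.low G i = {∅} := by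
      ext F
      rw [mem_low, Finset.mem_singleton]
      constructor
      · rintro ⟨f1, f2, f3, f4⟩
        exact (M.eq_of_rk M.flat_empty f1 (Finset.empty_subset _) (by omega)).symm
      · rintro rfl
        exact ⟨M.flat_empty, Finset.empty_subset _, by simp, by rw [M.rk_empty, h1]⟩
    rw [h2]; simp [m_empty, BFan.N]
  | succ k ih =>
    rw [List.replicate_succ, N_be hτ (i := i) (by simp; omega) (fun X hX h => hmin X hX h hi)]
    have hlk : ∀ F ∈ (M.fan.link τ).filter (fun F => i ∉ F), M.flat F ∧ F ⊆ G ∧ F ≠ G ∧ i ∉ F ∧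
        F ≠ ∅ := by
      intro F hF
      rw [Finset.mem_filter] at hF
      obtain ⟨f1, f2, f3⟩ := (mem_link hτ).1 hF.1
      refine ⟨f2, ?_, by rintro rfl; exact hF.2 hi, hF.2, by rintro rfl; exact f1 hτ.2.2.1⟩
      rcases f3 G hG with h | h
      · exact absurd (h hi) hF.2
      · exact h
    have hstep : ∀ F ∈ (M.fan.link τ).filter (fun F => i ∉ F),
        M.fan.N (List.replicate k (be E)) (insert F τ) = if M.rk F = k + 1 then M.m F else 0 := by
      intro F hF
      obtain ⟨f1, f2, f3, f4, f5⟩ := hlk F hF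
      rw [Finset.mem_filter] at hF
      have hface : M.Face (insert F τ) := M.fan.face_of_mem_link hF.1
      have hcard := M.fan.card_of_mem_link hF.1
      have hm : ∀ X ∈ insert F τ, X ≠ ∅ → F ⊆ X := by
        intro X hX hX0
        rcases Finset.mem_insert.1 hX with rfl | hX
        · exact subset_rfl
        · exact f2.trans (hmin X hX hX0)
      obtain ⟨j, hj⟩ := Finset.nonempty_iff_ne_empty.2 f5
      refine ih (insert F τ) hface (by omega) F (by simp) f5 hm ?_
        (low_count hface (by simp) hm) j hj f1
      have := M.rk_lt ∅ F M.flat_empty f1 (Finset.ssubset_iff_subset_ne.2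
        ⟨Finset.empty_subset _, Ne.symm f5⟩)
      omega
    rw [Finset.sum_congr rfl hstep]
    split_ifs with hr
    · rw [m_rec hGf hi, ← Finset.sum_filter]
      refine Finset.sum_congr ?_ fun _ _ => rfl
      ext F
      rw [Finset.mem_filter, mem_low]
      constructor
      · rintro ⟨h1, h2⟩
        obtain ⟨f1, f2, f3, f4, f5⟩ := hlk F h1
        exact ⟨f1, f2, f4, by omega⟩
      · rintro ⟨f1, f2, f3, f4⟩
        have hF0 : F ≠ ∅ := by rintro rfl; rw [M.rk_empty] at f4; omega
        refine ⟨Finset.mem_filter.2 ⟨(mem_link hτ).2 ⟨?_, f1, ?_⟩, f3⟩, by omega⟩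
        · intro h; exact f3 (hmin F h hF0 hi)
        · intro X hX
          by_cases hX0 : X = ∅
          · left; rw [hX0]; exact Finset.empty_subset _
          · right; exact f2.trans (hmin X hX hX0)
    · refine Finset.sum_eq_zero fun F hF => ?_
      obtain ⟨f1, f2, f3, f4, f5⟩ := hlk F hF
      have := M.rk_lt F G f1 hGf (Finset.ssubset_iff_subset_ne.2 ⟨f2, f3⟩)
      rw [if_neg]; omega

lemma N_alpha_beta (j k : ℕ) (τ : Finset (Finset E)) (hτ : M.Face τ)
    (hc : τ.card + j + k = M.r + 1)
    (G : Finset E) (hG : G ∈ τ) (hG0 : G ≠ ∅) (hmin : ∀ X ∈ τ, X ≠ ∅ → G ⊆ X)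
    (H : Finset E) (hH : H ∈ τ) (hH0 : H ≠ ∅) (hH1 : H ≠ Finset.univ)
    (hmax : ∀ X ∈ τ, X ≠ Finset.univ → X ⊆ H) :
    M.fan.N (List.replicate j (al E) ++ List.replicate k (be E)) τ =
      if M.rk G = k + 1 ∧ M.rk H + j + 1 = M.r then M.m G else 0 := by
  induction j generalizing τ H with
  | zero =>
    have h1 := both_count hτ hG hmin hG0 hH hH0 hmax hH1
    have h2 : M.rk H < M.r := M.rk_lt H _ (hτ.1 H hH) M.flat_univ
      (Finset.ssubset_iff_subset_ne.2 ⟨Finset.subset_univ _, hH1⟩)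
    simp only [List.replicate_zero, List.nil_append]
    rw [N_beta k τ hτ (by omega) G hG hG0 hmin]
    refine if_congr ?_ rfl rfl
    constructor
    · intro h; exact ⟨h, by omega⟩
    · exact fun h => h.1
  | succ j ih =>
    have h1 := both_count hτ hG hmin hG0 hH hH0 hmax hH1
    have hHf := hτ.1 H hH
    have hGH : G ⊆ H := hmin H hH hH0
    obtain ⟨i, -, hi⟩ := Finset.exists_of_ssubset
      (Finset.ssubset_iff_subset_ne.2 ⟨Finset.subset_univ _, hH1⟩)
    rw [List.replicate_succ, List.cons_append,
      N_al hτ (i := i) (by simp; omega) (fun X hX h hh => hi (hmax X hX h hh))]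
    have hlk : ∀ F ∈ (M.fan.link τ).filter (fun F => i ∈ F), M.flat F ∧ H ⊆ F ∧ H ≠ F ∧ i ∈ F ∧
        F ≠ Finset.univ := by
      intro F hF
      rw [Finset.mem_filter] at hF
      obtain ⟨f1, f2, f3⟩ := (mem_link hτ).1 hF.1
      refine ⟨f2, ?_, by rintro rfl; exact hi hF.2, hF.2, by rintro rfl; exact f1 hτ.2.2.2⟩
      rcases f3 H hH with h | h
      · exact h
      · exact absurd (h hF.2) hi
    have hstep : ∀ F ∈ (M.fan.link τ).filter (fun F => i ∈ F),
        M.fan.N (List.replicate j (al E) ++ List.replicate k (be E)) (insert F τ) =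
          if M.rk G = k + 1 ∧ M.rk F + j + 1 = M.r then M.m G else 0 := by
      intro F hF
      obtain ⟨f1, f2, f3, f4, f5⟩ := hlk F hF
      rw [Finset.mem_filter] at hF
      have hface : M.Face (insert F τ) := M.fan.face_of_mem_link hF.1
      have hcard := M.fan.card_of_mem_link hF.1
      refine ih (insert F τ) hface (by omega) (by simp [hG]) ?_ F (by simp)
        (by rintro rfl; simp at f4) f5 ?_
      · intro X hX hX0
        rcases Finset.mem_insert.1 hX with rfl | hX
        · exact hGH.trans f2
        · exact hmin X hX hX0
      · intro X hX hX0
        rcases Finset.mem_insert.1 hX with rfl | hX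
        · exact subset_rfl
        · exact (hmax X hX hX0).trans f2
    rw [Finset.sum_congr rfl hstep]
    split_ifs with hr
    · obtain ⟨C, c1, c2, c3, c4, c5⟩ := M.cover H i hHf hi
      rw [Finset.sum_eq_single C]
      · rw [if_pos ⟨hr.1, by omega⟩]
      · intro F hF hne
        obtain ⟨f1, f2, f3, f4, f5⟩ := hlk F hF
        rw [if_neg]
        rintro ⟨h5, h6⟩
        exact hne (M.cover_unique hHf f1 c1 f2 c2 (by omega) c4 hi f4 c3)
      · intro h
        exfalso
        have hCu : C ≠ Finset.univ := by
          intro h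
          rw [h] at c4
          change M.r = _ at c4
          omega
        refine h (Finset.mem_filter.2 ⟨(mem_link hτ).2 ⟨?_, c1, ?_⟩, c3⟩)
        · intro h; exact hi (hmax C h hCu c3)
        · intro X hX
          by_cases hX0 : X = Finset.univ
          · right; rw [hX0]; exact Finset.subset_univ _
          · left; exact (hmax X hX hX0).trans c2
    · refine Finset.sum_eq_zero fun F hF => ?_
      obtain ⟨f1, f2, f3, f4, f5⟩ := hlk F hF
      have := M.rk_lt H F hHf f1 (Finset.ssubset_iff_subset_ne.2 ⟨f2, f3⟩)
      rw [if_neg]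
      rintro ⟨h5, h6⟩
      exact hr ⟨h5, by omega⟩

/-- Reduced coefficients. -/
noncomputable def A (M : FlatSys E) (i : E) (k : ℕ) : ℝ :=
  ∑ F ∈ Finset.univ.filter (fun F => M.flat F ∧ i ∈ F ∧ M.rk F = k + 1), M.m F

lemma face_top : M.Face {∅, Finset.univ} := by
  refine ⟨?_, ?_, by simp, by simp⟩
  · intro X hX
    simp only [Finset.mem_insert, Finset.mem_singleton] at hX
    rcases hX with rfl | rfl
    · exact M.flat_empty
    · exact M.flat_univ
  · intro X hX Y hY
    simp only [Finset.mem_insert, Finset.mem_singleton] at hX hY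
    rcases hX with rfl | rfl
    · simp
    · simp

lemma N_top (i : E) (j k : ℕ) (h : j + k + 1 = M.r) :
    M.fan.N (List.replicate j (al E) ++ List.replicate k (be E)) {∅, Finset.univ} = M.A i k := by
  have hne : (∅ : Finset E) ≠ Finset.univ := by
    intro h; have := Finset.mem_univ i; rw [← h] at this; simp at this
  have hcard : ({∅, Finset.univ} : Finset (Finset E)).card = 2 := Finset.card_pair hne
  rcases j with _ | j
  · simp only [List.replicate_zero, List.nil_append]
    rw [N_beta k _ face_top (by omega) Finset.univ (by simp) hne.symm
      (by intro X hX hX0; simp [hX0] at hX; rw [hX])]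
    rw [if_pos (by change M.r = _; omega), A]
    have : Finset.univ.filter (fun F => M.flat F ∧ i ∈ F ∧ M.rk F = k + 1) =
        {(Finset.univ : Finset E)} := by
      ext F
      simp only [Finset.mem_filter, Finset.mem_univ, true_and, Finset.mem_singleton]
      constructor
      · rintro ⟨f1, f2, f3⟩
        exact M.eq_of_rk f1 M.flat_univ (Finset.subset_univ _) (by change M.r ≤ _; omega)
      · rintro rfl
        exact ⟨M.flat_univ, Finset.mem_univ _, by change M.r = _; omega⟩
    rw [this, Finset.sum_singleton]
  · rw [List.replicate_succ, List.cons_append, N_al face_top (i := i) (by simp [hcard]; omega)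
      (by intro X hX hX0; simp [hX0] at hX; simp [hX])]
    have hstep : ∀ F ∈ (M.fan.link {∅, Finset.univ}).filter (fun F => i ∈ F),
        M.fan.N (List.replicate j (al E) ++ List.replicate k (be E)) (insert F {∅, Finset.univ}) =
          if M.rk F = k + 1 then M.m F else 0 := by
      intro F hF
      rw [Finset.mem_filter] at hF
      have hface : M.Face (insert F {∅, Finset.univ}) := M.fan.face_of_mem_link hF.1
      have hcard' := M.fan.card_of_mem_link hF.1
      have hF' := ((mem_link face_top).1 hF.1).1
      simp only [Finset.mem_insert, Finset.mem_singleton, not_or] at hF'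
      rw [N_alpha_beta j k _ hface (by omega) F (by simp) hF'.1 ?_ F (by simp) hF'.1 hF'.2 ?_]
      · refine if_congr ?_ rfl rfl
        constructor
        · exact fun h => h.1
        · intro h; exact ⟨h, by omega⟩
      · intro X hX hX0
        simp only [Finset.mem_insert, Finset.mem_singleton] at hX
        rcases hX with rfl | rfl | rfl
        · exact subset_rfl
        · exact absurd rfl hX0
        · exact Finset.subset_univ _
      · intro X hX hX0
        simp only [Finset.mem_insert, Finset.mem_singleton] at hX
        rcases hX with rfl | rfl | rfl
        · exact subset_rfl
        · exact Finset.empty_subset _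
        · exact absurd rfl hX0
    rw [Finset.sum_congr rfl hstep, ← Finset.sum_filter, A]
    refine Finset.sum_congr ?_ fun _ _ => rfl
    ext F
    simp only [Finset.mem_filter, Finset.mem_univ, true_and]
    constructor
    · rintro ⟨⟨h1, h2⟩, h3⟩
      exact ⟨((mem_link face_top).1 h1).2.1, h2, h3⟩
    · rintro ⟨f1, f2, f3⟩
      refine ⟨⟨(mem_link face_top).2 ⟨?_, f1, ?_⟩, f2⟩, f3⟩
      · simp only [Finset.mem_insert, Finset.mem_singleton, not_or]
        constructor
        · rintro rfl; simp at f2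
        · rintro rfl; change M.r = _ at f3; omega
      · intro X hX
        simp only [Finset.mem_insert, Finset.mem_singleton] at hX
        rcases hX with rfl | rfl
        · exact Or.inl (Finset.empty_subset _)
        · exact Or.inr (Finset.subset_univ _)

lemma A_eq (i : E) (k : ℕ) : M.A i k =
    ∑ G ∈ Finset.univ.filter (fun G => M.flat G ∧ i ∉ G ∧ M.rk G = k), M.m G := by
  rw [← Finset.sum_fiberwise_of_maps_to (g := M.jn i)
    (t := Finset.univ.filter (fun F => M.flat F ∧ i ∈ F ∧ M.rk F = k + 1)), A]
  · refine Finset.sum_congr rfl fun F hF => ?_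
    simp only [Finset.mem_filter, Finset.mem_univ, true_and] at hF
    obtain ⟨f1, f2, f3⟩ := hF
    rw [m_rec f1 f2]
    refine Finset.sum_congr ?_ fun _ _ => rfl
    ext G
    simp only [Finset.mem_filter, Finset.mem_univ, true_and, mem_low]
    constructor
    · rintro ⟨g1, g2, g3, g4⟩
      obtain ⟨j1, j2, j3, j4, j5, j6⟩ := jn_spec (i := i) g1
      exact ⟨⟨g1, g3, by omega⟩, M.eq_of_rk j1 f1 (j6 F f1 g2 f2) (by rw [j5 g3]; omega)⟩
    · rintro ⟨⟨g1, g2, g3⟩, g4⟩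
      obtain ⟨j1, j2, j3, j4, j5, j6⟩ := jn_spec (i := i) g1
      exact ⟨g1, g4 ▸ j2, g2, by omega⟩
  · intro G hG
    simp only [Finset.mem_filter, Finset.mem_univ, true_and] at hG ⊢
    obtain ⟨j1, j2, j3, j4, j5, j6⟩ := jn_spec (i := i) hG.1
    exact ⟨j1, j3, by rw [j5 hG.2.1]; omega⟩

end FlatSys

lemma BFan.N_perm {S : Type*} [Fintype S] [DecidableEq S] (B : BFan S) {ts us : List (S → ℝ)}
    (h : ts.Perm us) : ∀ τ, B.Face τ → τ.card + ts.length = B.D → B.N ts τ = B.N us τ := by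
  induction h with
  | nil => intros; rfl
  | cons x _ ih =>
    intro τ hτ hc
    rw [B.N_cons, B.N_cons]
    refine Finset.sum_congr rfl fun F hF => ?_
    simp only [List.length_cons] at hc
    rw [ih _ (B.face_of_mem_link hF) (by rw [B.card_of_mem_link hF]; omega)]
  | swap x y l =>
    intro τ hτ hc
    simp only [List.length_cons] at hc
    exact B.N_swap hτ (by omega) _ _
  | trans h1 _ ih1 ih2 =>
    intro τ hτ hc
    rw [ih1 τ hτ hc, ih2 τ hτ (by rw [← h1.length_eq]; exact hc)]

namespace FlatSys

open scoped Classical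

variable {E : Type*} [Fintype E] [DecidableEq E] {M : FlatSys E}

/-- A strictly concave function. -/
noncomputable def kap : Finset E → ℝ := fun F => -(F.card : ℝ) ^ 2

lemma al_mem {x : ℝ} (hx : 0 < x) : al E + x • kap ∈ Kset E := by
  refine ⟨fun c => (if c = Fintype.card E then -1 else 0) + x * -(c : ℝ) ^ 2, fun F => ?_, ?_⟩
  · simp only [Pi.add_apply, Pi.smul_apply, smul_eq_mul, al, kap]
    congr 1
    refine if_congr ?_ rfl rfl
    rw [Finset.card_eq_iff_eq_univ]
  · intro a b c hab hbc hc
    have ha' : a ≠ Fintype.card E := by omega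
    have hb' : b ≠ Fintype.card E := by omega
    simp only [ha', hb', if_false]
    have h1 : (a : ℝ) < b := by exact_mod_cast hab
    have h2 : (b : ℝ) < c := by exact_mod_cast hbc
    have h3 : 0 < x * (((c : ℝ) - b) * (b - a) * (c - a)) := by
      have : 0 < (c : ℝ) - b := by linarith
      have : 0 < (b : ℝ) - a := by linarith
      have : 0 < (c : ℝ) - a := by linarith
      positivity
    have h4 : ((b : ℝ) - a) * (if c = Fintype.card E then -1 else 0) ≤ 0 := by
      split_ifs <;> linarith
    nlinarith

lemma be_mem {x : ℝ} (hx : 0 < x) : be E + x • kap ∈ Kset E := by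
  refine ⟨fun c => (if c = 0 then -1 else 0) + x * -(c : ℝ) ^ 2, fun F => ?_, ?_⟩
  · simp only [Pi.add_apply, Pi.smul_apply, smul_eq_mul, be, kap]
    congr 1
    refine if_congr ?_ rfl rfl
    rw [Finset.card_eq_zero]
  · intro a b c hab hbc hc
    have hc' : c ≠ 0 := by omega
    have hb' : b ≠ 0 := by omega
    simp only [hc', hb', if_false]
    have h1 : (a : ℝ) < b := by exact_mod_cast hab
    have h2 : (b : ℝ) < c := by exact_mod_cast hbc
    have h3 : 0 < x * (((c : ℝ) - b) * (b - a) * (c - a)) := by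
      have : 0 < (c : ℝ) - b := by linarith
      have : 0 < (b : ℝ) - a := by linarith
      have : 0 < (c : ℝ) - a := by linarith
      positivity
    have h4 : ((c : ℝ) - b) * (if a = 0 then -1 else 0) ≤ 0 := by
      split_ifs <;> linarith
    nlinarith

/-- The Hodge–Riemann inequality for alpha and beta. -/
lemma N_al_be (i : E) (j k : ℕ) (h : j + k + 3 = M.r) :
    let ts := List.replicate j (al E) ++ List.replicate k (be E)
    M.fan.N (al E :: al E :: ts) {∅, Finset.univ} * M.fan.N (be E :: be E :: ts) {∅, Finset.univ} ≤
      M.fan.N (al E :: be E :: ts) {∅, Finset.univ} ^ 2 := by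
  intro ts
  have hne : (∅ : Finset E) ≠ Finset.univ := by
    intro h; have := Finset.mem_univ i; rw [← h] at this; simp at this
  have hcard : ({∅, Finset.univ} : Finset (Finset E)).card = 2 := Finset.card_pair hne
  let u : ℝ → Finset E → ℝ := fun x => al E + x • kap
  let v : ℝ → Finset E → ℝ := fun x => be E + x • kap
  have hu : Continuous u := by fun_prop
  have hv : Continuous v := by fun_prop
  let us := List.replicate j u ++ List.replicate k v
  have hus : ∀ f ∈ us, f = u ∨ f = v := by
    intro f hf
    simp only [us, List.mem_append] at hf
    rcases hf with hf | hf
    · exact Or.inl (List.eq_of_mem_replicate hf)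
    · exact Or.inr (List.eq_of_mem_replicate hf)
  let Q : (ℝ → Finset E → ℝ) → (ℝ → Finset E → ℝ) → ℝ → ℝ := fun f g x =>
    M.fan.N ((f :: g :: us).map (fun f => f x)) {∅, Finset.univ}
  have hQ : ∀ f g, Continuous f → Continuous g → Continuous (Q f g) := by
    intro f g hf hg
    refine M.fan.N_continuous _ ?_ _
    intro q hq
    simp only [List.mem_cons] at hq
    rcases hq with rfl | rfl | hq
    · exact hf
    · exact hg
    · rcases hus q hq with rfl | rfl
      · exact hu
      · exact hv
  have h0 : ∀ f g, Q f g 0 = M.fan.N (f 0 :: g 0 :: ts) {∅, Finset.univ} := by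
    intro f g
    simp [Q, us, ts, u, v]
  have hu0 : u 0 = al E := by simp [u]
  have hv0 : v 0 = be E := by simp [v]
  have hlt : ∀ x ∈ Set.Ioi (0 : ℝ), Q u u x * Q v v x ≤ Q u v x ^ 2 := by
    intro x hx
    simp only [Q, List.map_cons]
    refine hr _ ?_ _ face_top ?_ (by omega) _ _ (be_mem hx)
    · intro t ht
      obtain ⟨f, hf, rfl⟩ := List.mem_map.1 ht
      rcases hus f hf with rfl | rfl
      · exact al_mem hx
      · exact be_mem hx
    · simp [hcard, us]; omega
  have hcl : (0 : ℝ) ∈ closure (Set.Ioi 0) := by rw [closure_Ioi]; exact Set.self_mem_Ici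
  have := le_on_closure hlt ((hQ u u hu hu).mul (hQ v v hv hv)).continuousOn
    ((hQ u v hu hv).pow 2).continuousOn hcl
  rw [h0, h0, h0, hu0, hv0] at this
  exact this

lemma A_zero (i : E) {k : ℕ} (hk : M.r ≤ k) : M.A i k = 0 := by
  rw [A]
  refine Finset.sum_eq_zero fun F hF => ?_
  simp only [Finset.mem_filter, Finset.mem_univ, true_and] at hF
  have := M.rk_le_r hF.1
  omega

lemma A_pos (i : E) {k : ℕ} (hk : k < M.r) : 0 < M.A i k := by
  rw [A]
  refine Finset.sum_pos (fun F hF => m_pos F (by simp at hF; exact hF.1)) ?_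
  obtain ⟨C, c1, c2, c3, c4, c5⟩ := M.cover ∅ i M.flat_empty (by simp)
  rw [M.rk_empty] at c4
  obtain ⟨F, f1, f2, f3, f4⟩ := M.exists_between c1 M.flat_univ (Finset.subset_univ _) (k + 1)
    (by omega) (by change _ ≤ M.r; omega)
  exact ⟨F, by simp; exact ⟨f1, f2 c3, f4⟩⟩

lemma A_nonneg (i : E) (k : ℕ) : 0 ≤ M.A i k := by
  rcases lt_or_ge k M.r with h | h
  · exact (A_pos i h).le
  · exact (A_zero i h).ge

lemma A_lc (i : E) (k : ℕ) : M.A i k * M.A i (k + 2) ≤ M.A i (k + 1) ^ 2 := by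
  rcases le_or_gt M.r (k + 2) with h | h
  · rw [A_zero i h, mul_zero]; positivity
  obtain ⟨j, hj⟩ : ∃ j, j + k + 3 = M.r := ⟨M.r - k - 3, by omega⟩
  have hne : (∅ : Finset E) ≠ Finset.univ := by
    intro h; have := Finset.mem_univ i; rw [← h] at this; simp at this
  have hcard : ({∅, Finset.univ} : Finset (Finset E)).card = 2 := Finset.card_pair hne
  have key := N_al_be i j k hj
  have e1 := N_top (M := M) i (j + 2) k (by omega)
  have e2 := N_top (M := M) i (j + 1) (k + 1) (by omega)
  have e3 := N_top (M := M) i j (k + 2) (by omega)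
  have hD : M.fan.D = M.r + 1 := rfl
  have p1 : (be E :: List.replicate j (al E) ++ List.replicate k (be E)).Perm
      (List.replicate j (al E) ++ List.replicate (k + 1) (be E)) := by
    rw [List.replicate_succ]
    exact List.perm_middle.symm
  have p2 : (be E :: (List.replicate j (al E) ++ List.replicate (k + 1) (be E))).Perm
      (List.replicate j (al E) ++ List.replicate (k + 2) (be E)) := by
    rw [List.replicate_succ (n := k + 1)]
    exact List.perm_middle.symm
  rw [← e1, ← e2, ← e3, ← M.fan.N_perm (((p1.cons _).trans p2)) _ face_top
    (by simp [hcard]; omega)]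
  have e4 := M.fan.N_perm (p1.cons (al E)) {∅, Finset.univ} face_top (by simp [hcard]; omega)
  rw [List.replicate_succ (n := j), List.cons_append]
  refine le_of_le_of_eq key ?_
  exact congrArg (· ^ 2) e4

/-- Unsigned Whitney numbers of the first kind. -/
noncomputable def w (M : FlatSys E) (k : ℕ) : ℝ :=
  ∑ F ∈ Finset.univ.filter (fun F => M.flat F ∧ M.rk F = k), M.m F

lemma w_split (i : E) (k : ℕ) : M.w k =
    ∑ F ∈ Finset.univ.filter (fun F => M.flat F ∧ i ∈ F ∧ M.rk F = k), M.m F + M.A i k := by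
  rw [A_eq, w, ← Finset.sum_filter_add_sum_filter_not _ (fun F => i ∈ F),
    Finset.filter_filter, Finset.filter_filter]
  congr 1
  · refine Finset.sum_congr (Finset.filter_congr fun F _ => ?_) fun _ _ => rfl
    tauto
  · refine Finset.sum_congr (Finset.filter_congr fun F _ => ?_) fun _ _ => rfl
    tauto

lemma w_succ (i : E) (k : ℕ) : M.w (k + 1) = M.A i k + M.A i (k + 1) := by
  rw [w_split i]; rfl

lemma w_zero (i : E) : M.w 0 = M.A i 0 := by
  rw [w_split i, Finset.sum_eq_zero, zero_add]
  intro F hF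
  simp only [Finset.mem_filter, Finset.mem_univ, true_and] at hF
  have : ∅ = F := M.eq_of_rk M.flat_empty hF.1 (Finset.empty_subset _) (by omega)
  rw [← this] at hF; simp at hF

lemma w_nonneg (k : ℕ) : 0 ≤ M.w k :=
  Finset.sum_nonneg fun F hF => (m_pos F (by simp at hF; exact hF.1)).le

/-- Log-concavity of the unsigned Whitney numbers of the first kind. -/
theorem w_lc (k : ℕ) : M.w k * M.w (k + 2) ≤ M.w (k + 1) ^ 2 := by
  rcases isEmpty_or_nonempty E with hE | ⟨⟨i⟩⟩
  · have : M.w (k + 2) = 0 := by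
      refine Finset.sum_eq_zero fun F hF => ?_
      simp only [Finset.mem_filter, Finset.mem_univ, true_and] at hF
      have : F = ∅ := Subsingleton.elim _ _
      rw [this, M.rk_empty] at hF
      omega
    rw [this, mul_zero]; positivity
  · rcases k with _ | k
    · rw [w_zero i, w_succ i, w_succ i]
      have h1 := A_lc (M := M) i 0
      have h2 := A_nonneg (M := M) i 0
      have h3 := A_nonneg (M := M) i 1
      simp only [zero_add] at *
      nlinarith [mul_nonneg h2 h3]
    · rw [w_succ i, w_succ i, w_succ i]
      have h0 := A_nonneg (M := M) i k
      have h1 := A_nonneg (M := M) i (k + 1)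
      have h2 := A_nonneg (M := M) i (k + 2)
      have h3 := A_nonneg (M := M) i (k + 3)
      have l1 := A_lc (M := M) i k
      have l2 := A_lc (M := M) i (k + 1)
      have l3 : M.A i k * M.A i (k + 3) ≤ M.A i (k + 1) * M.A i (k + 2) := by
        rcases le_or_gt M.r (k + 3) with h | h
        · rw [A_zero i h, mul_zero]; positivity
        · have q1 := A_pos i (show k + 1 < M.r by omega)
          have q2 := A_pos i (show k + 2 < M.r by omega)
          have q3 := mul_pos q1 q2
          have h5 := mul_le_mul l1 l2 (by positivity) (by positivity)
          simp only [show k + 1 + 2 = k + 3 from rfl, show k + 1 + 1 = k + 2 from rfl] at h5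
          refine le_of_mul_le_mul_right ?_ q3
          nlinarith
      simp only [show k + 1 + 2 = k + 3 from rfl, show k + 1 + 1 = k + 2 from rfl] at *
      nlinarith

end FlatSys

namespace ChromLC

open scoped Classical

variable {V : Type*} [Fintype V] [DecidableEq V] (G : SimpleGraph V) [DecidableRel G.Adj]

/-- Oriented edges. -/
abbrev GE : Type _ := {p : V × V // G.Adj p.1 p.2}

variable {G}

/-- `f` is constant on the edges in `F`. -/
def Con {α : Type*} (F : Finset (GE G)) (f : V → α) : Prop := ∀ e ∈ F, f e.1.1 = f e.1.2

/-- Closure. -/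
noncomputable def cl (F : Finset (GE G)) : Finset (GE G) :=
  Finset.univ.filter (fun e => ∀ f : V → Bool, Con F f → f e.1.1 = f e.1.2)

lemma mem_cl {F : Finset (GE G)} {e : GE G} :
    e ∈ cl F ↔ ∀ f : V → Bool, Con F f → f e.1.1 = f e.1.2 := by simp [cl]

lemma subset_cl (F : Finset (GE G)) : F ⊆ cl F := fun e he => mem_cl.2 fun _ hf => hf e he

lemma con_cl {α : Type*} {F : Finset (GE G)} {f : V → α} : Con (cl F) f ↔ Con F f := by
  constructor
  · intro h e he; exact h e (subset_cl F he)
  · intro h e he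
    have := mem_cl.1 he (fun v => decide (f v = f e.1.1)) (fun e' he' => by simp [h e' he'])
    simpa [eq_comm] using this

lemma cl_cl (F : Finset (GE G)) : cl (cl F) = cl F := by
  ext e; rw [mem_cl, mem_cl]; simp only [con_cl]

lemma cl_mono {F H : Finset (GE G)} (h : F ⊆ H) : cl F ⊆ cl H := by
  intro e he
  rw [mem_cl] at he ⊢
  exact fun f hf => he f fun x hx => hf x (h hx)

/-- Number of functions constant on `F`. -/
noncomputable def num (F : Finset (GE G)) (k : ℕ) : ℕ := Fintype.card {f : V → Fin k // Con F f}

lemma num_cl (F : Finset (GE G)) (k : ℕ) : num (cl F) k = num F k :=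
  Fintype.card_congr (Equiv.subtypeEquivRight fun _ => con_cl)

lemma num_mono {F H : Finset (GE G)} (h : F ⊆ H) (k : ℕ) : num H k ≤ num F k :=
  Fintype.card_subtype_mono _ _ fun _ hf e he => hf e (h he)

lemma num_empty (k : ℕ) : num (∅ : Finset (GE G)) k = k ^ Fintype.card V := by
  have : num (∅ : Finset (GE G)) k = Fintype.card (V → Fin k) :=
    Fintype.card_congr (Equiv.subtypeUnivEquiv fun f e he => by simp at he)
  rw [this]; simp

lemma num_insert {F : Finset (GE G)} {e : GE G} (he : e ∉ cl F) (k : ℕ) :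
    num F (k + 1) = (k + 1) * num (insert e F) (k + 1) := by
  obtain ⟨χ, hχ, h1, h2⟩ : ∃ χ : V → Bool, Con F χ ∧ χ e.1.1 = true ∧ χ e.1.2 = false := by
    rw [mem_cl] at he
    push Not at he
    obtain ⟨χ, h1, h2⟩ := he
    cases h3 : χ e.1.1 <;> cases h4 : χ e.1.2
    · simp [h3, h4] at h2
    · exact ⟨fun v => !(χ v), fun e' he' => by simp [h1 e' he'], by simp [h3], by simp [h4]⟩
    · exact ⟨χ, h1, h3, h4⟩
    · simp [h3, h4] at h2
  let sh : Fin (k + 1) → V → Fin (k + 1) := fun d v => if χ v then d else 0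
  have hsh : ∀ d, Con F (sh d) := fun d e' he' => by simp [sh, hχ e' he']
  have hd1 : ∀ d, sh d e.1.1 = d := fun d => by simp [sh, h1]
  have hd2 : ∀ d, sh d e.1.2 = 0 := fun d => by simp [sh, h2]
  have : {f : V → Fin (k + 1) // Con F f} ≃
      Fin (k + 1) × {f : V → Fin (k + 1) // Con (insert e F) f} :=
    { toFun := fun f => (f.1 e.1.1 - f.1 e.1.2, ⟨fun v => f.1 v - sh (f.1 e.1.1 - f.1 e.1.2) v, by
        intro e' he'
        rcases Finset.mem_insert.1 he' with rfl | he'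
        · simp only [hd1, hd2]; abel
        · simp only [f.2 e' he', hsh _ e' he']⟩)
      invFun := fun p => ⟨fun v => p.2.1 v + sh p.1 v, by
        intro e' he'
        simp only [p.2.2 e' (Finset.mem_insert_of_mem he'), hsh _ e' he']⟩
      left_inv := fun f => by ext v; simp
      right_inv := fun p => by
        have h3 := p.2.2 e (Finset.mem_insert_self _ _)
        have h4 : p.2.1 e.1.1 + sh p.1 e.1.1 - (p.2.1 e.1.2 + sh p.1 e.1.2) = p.1 := by
          rw [h3, hd1, hd2]; abel
        refine Prod.ext ?_ (Subtype.ext ?_)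
        · exact h4
        · funext v
          simp only [h4]
          abel }
  rw [num, Fintype.card_congr this, Fintype.card_prod, Fintype.card_fin]
  rfl

lemma exists_cc (F : Finset (GE G)) : ∃ c ≤ Fintype.card V, ∀ k, num F (k + 1) = (k + 1) ^ c := by
  induction F using Finset.induction_on with
  | empty => exact ⟨_, le_rfl, fun k => num_empty _⟩
  | insert e F _ ih =>
    obtain ⟨c, hc, h⟩ := ih
    by_cases he : e ∈ cl F
    · refine ⟨c, hc, fun k => ?_⟩
      rw [← h k]
      refine le_antisymm (num_mono (Finset.subset_insert _ _) _) ?_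
      rw [← num_cl F]
      exact num_mono (Finset.insert_subset he (subset_cl F)) _
    · rcases c with _ | c
      · have h1 := h 1
        rw [num_insert he] at h1
        simp at h1
      · refine ⟨c, by omega, fun k => ?_⟩
        have h1 := h k
        rw [num_insert he, pow_succ'] at h1
        exact Nat.eq_of_mul_eq_mul_left (Nat.succ_pos k) h1

/-- Number of components. -/
noncomputable def cc (F : Finset (GE G)) : ℕ := (exists_cc F).choose

lemma cc_le (F : Finset (GE G)) : cc F ≤ Fintype.card V := (exists_cc F).choose_spec.1

lemma num_eq (F : Finset (GE G)) (k : ℕ) : num F (k + 1) = (k + 1) ^ cc F :=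
  (exists_cc F).choose_spec.2 k

lemma cc_cl (F : Finset (GE G)) : cc (cl F) = cc F := by
  have h := num_cl F 2
  rw [num_eq _ 1, num_eq _ 1] at h
  exact Nat.pow_right_injective (le_refl 2) h

lemma cc_mono {F H : Finset (GE G)} (h : F ⊆ H) : cc H ≤ cc F := by
  have h := num_mono h 2
  rw [num_eq _ 1, num_eq _ 1] at h
  exact (Nat.pow_le_pow_iff_right (by norm_num)).1 h

lemma cc_empty : cc (∅ : Finset (GE G)) = Fintype.card V := by
  have h := num_empty (G := G) 2
  rw [num_eq _ 1] at h
  exact Nat.pow_right_injective (le_refl 2) h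

lemma cc_insert {F : Finset (GE G)} {e : GE G} (he : e ∉ cl F) : cc F = cc (insert e F) + 1 := by
  have h := num_insert he 1
  rw [num_eq _ 1, num_eq _ 1, ← pow_succ'] at h
  exact Nat.pow_right_injective (le_refl 2) h

variable (G) in
/-- The graphic matroid. -/
noncomputable def gm : FlatSys (GE G) where
  flat := fun F => cl F = F
  rk := fun F => Fintype.card V - cc F
  flat_empty := by
    refine Finset.eq_empty_of_forall_notMem fun e he => ?_
    have := mem_cl.1 he (fun v => decide (v = e.1.1)) (fun e' he' => by simp at he')
    have hne := e.2.ne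
    simp only [decide_true] at this
    exact hne (of_decide_eq_true this.symm).symm
  flat_univ := Finset.eq_univ_of_forall fun e => subset_cl _ (Finset.mem_univ e)
  rk_empty := by rw [cc_empty]; simp
  rk_lt := by
    intro F H hF hH h
    obtain ⟨e, he, he'⟩ := Finset.exists_of_ssubset h
    have h1 := cc_insert (F := F) (e := e) (by rwa [hF])
    have h2 := cc_mono (Finset.insert_subset he h.1)
    have h3 := cc_le F
    omega
  cover := by
    intro F e hF he
    have h1 := cc_insert (F := F) (e := e) (by rwa [hF])
    refine ⟨cl (insert e F), cl_cl _, ?_, subset_cl _ (Finset.mem_insert_self _ _), ?_, ?_⟩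
    · exact (Finset.subset_insert _ _).trans (subset_cl _)
    · rw [cc_cl]
      have h3 := cc_le F
      omega
    · intro H hH hFH heH
      rw [← hH]
      exact cl_mono (Finset.insert_subset heH hFH)

/-- Monochromatic edges. -/
noncomputable def ker {α : Type*} (f : V → α) : Finset (GE G) :=
  Finset.univ.filter (fun e => f e.1.1 = f e.1.2)

lemma con_iff {α : Type*} {F : Finset (GE G)} {f : V → α} : Con F f ↔ F ⊆ ker f := by
  simp [Con, ker, Finset.subset_iff]

lemma ker_flat {α : Type*} (f : V → α) : (gm G).flat (ker f) := by
  change cl (ker f) = ker f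
  refine le_antisymm ?_ (subset_cl _)
  exact con_iff.1 (con_cl.2 (con_iff.2 subset_rfl))

lemma numColorings_eq (k : ℕ) : (G.numColorings (k + 1) : ℤ) =
    ∑ F ∈ Finset.univ.filter (gm G).flat, (gm G).mu F * ((k + 1 : ℕ) : ℤ) ^ cc F := by
  have h1 : ∀ F : Finset (GE G), ((k + 1 : ℕ) : ℤ) ^ cc F =
      ∑ f : V → Fin (k + 1), if F ⊆ ker f then (1 : ℤ) else 0 := by
    intro F
    rw [← Nat.cast_pow, ← num_eq, num, Fintype.card_subtype, Finset.sum_boole]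
    simp only [con_iff]
  have h2 : (G.numColorings (k + 1) : ℤ) =
      ∑ f : V → Fin (k + 1), if (ker f : Finset (GE G)) = ∅ then (1 : ℤ) else 0 := by
    rw [SimpleGraph.numColorings, Fintype.card_subtype, Finset.sum_boole]
    congr 2
    refine Finset.filter_congr fun f _ => ?_
    simp only [ker, Finset.filter_eq_empty_iff, Finset.mem_univ, true_imp_iff]
    constructor
    · intro h e; exact h _ _ e.2
    · intro h a b hab; exact h (x := ⟨(a, b), hab⟩)
  simp only [h1, Finset.mul_sum]
  rw [Finset.sum_comm, h2]
  refine Finset.sum_congr rfl fun f _ => ?_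
  rw [← (gm G).mu_sum (ker_flat f)]
  simp only [mul_ite, mul_one, mul_zero]
  rw [← Finset.sum_filter, Finset.filter_filter]
  refine Finset.sum_congr ?_ fun _ _ => rfl
  ext F
  simp only [Finset.mem_filter, Finset.mem_univ, true_and, Finset.mem_powerset]
  tauto

lemma poly_eq (P : Polynomial ℤ) (hP : ∀ k : ℕ, P.eval (k : ℤ) = G.numColorings k) :
    P = ∑ F ∈ Finset.univ.filter (gm G).flat,
      Polynomial.C ((gm G).mu F) * Polynomial.X ^ cc F := by
  refine Polynomial.eq_of_infinite_eval_eq _ _ ?_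
  refine Set.Infinite.mono (s := Set.range fun k : ℕ => ((k + 1 : ℕ) : ℤ)) ?_
    (Set.infinite_range_of_injective fun a b h => by simpa using h)
  rintro _ ⟨k, rfl⟩
  simp only [Set.mem_setOf_eq]
  rw [hP, numColorings_eq, Polynomial.eval_finset_sum]
  simp

lemma coeff_eq (P : Polynomial ℤ) (hP : ∀ k : ℕ, P.eval (k : ℤ) = G.numColorings k) (j : ℕ)
    (hj : j ≤ Fintype.card V) :
    (|P.coeff (Fintype.card V - j)| : ℝ) = (gm G).w j := by
  have h : (P.coeff (Fintype.card V - j) : ℝ) = (-1) ^ j * (gm G).w j := by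
    rw [poly_eq P hP, Polynomial.finset_sum_coeff, FlatSys.w, Finset.mul_sum]
    push_cast
    rw [← Finset.filter_filter, Finset.sum_filter (p := fun F => (gm G).rk F = j)]
    refine Finset.sum_congr rfl fun F _ => ?_
    rw [Polynomial.coeff_C_mul_X_pow]
    have hle := cc_le F
    have hrk : (gm G).rk F = Fintype.card V - cc F := rfl
    by_cases h : (gm G).rk F = j
    · rw [if_pos h, if_pos (by omega), FlatSys.m, h, ← mul_assoc, ← mul_pow]
      simp
    · rw [if_neg h, if_neg (by omega)]
      simp
  rw [h, abs_mul, abs_pow, abs_neg, abs_one, one_pow, one_mul, abs_of_nonneg (FlatSys.w_nonneg j)]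

end ChromLC

/-- The absolute values of the coefficients of the chromatic polynomial of a finite
simple graph form a log-concave sequence: with `h_i = |c_{n−i}|`,
`h_{i−1} · h_{i+1} ≤ h_i²` for all `0 < i < n`. -/
theorem chromaticPolynomial_coeff_log_concave {V : Type*} [Fintype V] [DecidableEq V]
    (G : SimpleGraph V) [DecidableRel G.Adj] (P : Polynomial ℤ)
    (hP : ∀ k : ℕ, P.eval (k : ℤ) = G.numColorings k) :
    ∀ i, 0 < i → i < Fintype.card V →
      |P.coeff (Fintype.card V - (i - 1))| * |P.coeff (Fintype.card V - (i + 1))| ≤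
        |P.coeff (Fintype.card V - i)| ^ 2 := by
  intro i hi hin
  obtain ⟨k, rfl⟩ : ∃ k, i = k + 1 := ⟨i - 1, by omega⟩
  have h0 := ChromLC.coeff_eq P hP k (by omega)
  have h1 := ChromLC.coeff_eq P hP (k + 1) (by omega)
  have h2 := ChromLC.coeff_eq P hP (k + 2) (by omega)
  have h := FlatSys.w_lc (M := ChromLC.gm G) k
  rw [← h0, ← h1, ← h2] at h
  rw [Nat.add_sub_cancel]
  exact_mod_cast h
end
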